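/- arXiv:1809.10594 — 2 statements merged into one kernel-verified Lean document; each statement's English description precedes it below -/
import Mathlib

section
/- There exist an uncountable index type I and a family of groups (H i) for i ∈ I such that: each H i is of type FP₂ over ℤ; no H i contains a subgroup isomorphic to the Baumslag–Solitar group BS(m,n) for any nonzero integers m and n; and for distinct i, j ∈ I the groups H i and H j are not isomorphic. In particular, there are uncountably many isomorphism classes of groups of type FP₂ over ℤ containing no Baumslag–Solitar subgroup. -/
/-- The augmentation ring homomorphism `ℤH → ℤ` sending each group element to `1`. -/
noncomputable def augmentationMap (H : Type) [Group H] : MonoidAlgebra ℤ H →+* ℤ :=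
  (MonoidAlgebra.lift ℤ ℤ H 1).toRingHom

/-- A group `H` is of type `FP₂` over `ℤ`: there is an exact sequence
`P₂ → P₁ → P₀ → ℤ → 0` of `ℤH`-modules with each `Pᵢ` finitely generated projective,
where `ℤ` carries the trivial `H`-action (via the augmentation map). -/
def IsTypeFP2 (H : Type) [Group H] : Prop :=
  letI : Module (MonoidAlgebra ℤ H) ℤ := Module.compHom ℤ (augmentationMap H)
  ∃ (P₂ P₁ P₀ : Type) (_ : AddCommGroup P₂) (_ : AddCommGroup P₁) (_ : AddCommGroup P₀)
    (_ : Module (MonoidAlgebra ℤ H) P₂) (_ : Module (MonoidAlgebra ℤ H) P₁)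
    (_ : Module (MonoidAlgebra ℤ H) P₀),
    Module.Finite (MonoidAlgebra ℤ H) P₂ ∧ Module.Projective (MonoidAlgebra ℤ H) P₂ ∧
    Module.Finite (MonoidAlgebra ℤ H) P₁ ∧ Module.Projective (MonoidAlgebra ℤ H) P₁ ∧
    Module.Finite (MonoidAlgebra ℤ H) P₀ ∧ Module.Projective (MonoidAlgebra ℤ H) P₀ ∧
    ∃ (d₂ : P₂ →ₗ[MonoidAlgebra ℤ H] P₁) (d₁ : P₁ →ₗ[MonoidAlgebra ℤ H] P₀)
      (ε : P₀ →ₗ[MonoidAlgebra ℤ H] ℤ),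
      Function.Surjective ε ∧
      LinearMap.range d₁ = LinearMap.ker ε ∧
      LinearMap.range d₂ = LinearMap.ker d₁

/-- A group `H` is finitely presented: it is isomorphic to a presented group
`⟨x₁,…,xₙ | R⟩` with `R` a finite set of relators. -/
def IsFinitelyPresented (H : Type) [Group H] : Prop :=
  ∃ (n : ℕ) (R : Set (FreeGroup (Fin n))), R.Finite ∧ Nonempty (H ≃* PresentedGroup R)

/-- The single relator `y⁻¹ xᵐ y x⁻ⁿ` of the Baumslag–Solitar group `BS(m,n)`. -/
def BSRels (m n : ℤ) : Set (FreeGroup (Fin 2)) :=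
  {(FreeGroup.of 1)⁻¹ * (FreeGroup.of 0) ^ m * FreeGroup.of 1 * (FreeGroup.of 0) ^ (-n)}

/-- The Baumslag–Solitar group `BS(m,n) = ⟨x, y | y⁻¹xᵐyx⁻ⁿ⟩`. -/
abbrev BS (m n : ℤ) : Type := PresentedGroup (BSRels m n)

/-- `G` has no subgroup isomorphic to a Baumslag–Solitar group `BS(m,n)`
with `m, n` nonzero. -/
def HasNoBSSubgroup (G : Type) [Group G] : Prop :=
  ∀ m n : ℤ, m ≠ 0 → n ≠ 0 → ∀ K : Subgroup G, ¬ Nonempty (K ≃* BS m n)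

/-!
Start from a torsion group `⟨A, V⟩` of self-similar automorphisms of the rooted tree of sequences in
`A`, and adjoin a letter `t` conjugating it into its copies in the subtrees; the result `⟨A, V, t⟩`
acts on infinite sequences. Adjoin further a copy of `SL₅(𝔽₂)` which commutes with the stabilizer of
a sequence and whose elementary matrices satisfy Steinberg relations with finitely many of their
translates. Self-similarity propagates these relations to all translates, so commutators of root
families translated to several points behave like matrices over a Boolean ring. Hence the translates
generate a locally finite group, and the finitely presented group `G` so obtained is torsion-by-`ℤ`.

For `T ⊆ ℕ`, the products of three translates whose base points branch off from each other at the
levels `0` and `n + 1` with `n ∈ T` generate a perfect normal subgroup `N_T`, and a wreath product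
recovers `T` from `N_T`. Killing a perfect normal subgroup of a finitely presented group preserves
type `FP₂`, a torsion-by-`ℤ` group contains no Baumslag–Solitar group, and a finitely generated
group has only countably many homomorphisms to a given countable group, so uncountably many of the
`G / N_T` are pairwise non-isomorphic.
-/

open scoped commutatorElement

/-! ## Quotients of finitely presented groups by perfect subgroups -/

section Fox

variable {H : Type} [Group H] {Y : Type} [DecidableEq Y] (π : FreeGroup Y →* H)

/-- The affine action of the free group on `(ℤH)^Y` in which the generator `y` acts by
`x ↦ π(y) x + e_y`. Its orbit map at `0` is the Fox derivation. -/
noncomputable def foxAction : FreeGroup Y →* Equiv.Perm (Y → MonoidAlgebra ℤ H) :=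
  FreeGroup.lift fun y ↦ Equiv.addRight (Pi.single y 1) *
    MulAction.toPerm ((MonoidAlgebra.of ℤ H).toHomUnits (π (FreeGroup.of y)))

/-- The Fox derivation `FreeGroup Y → (ℤH)^Y`: the crossed homomorphism over `π` taking each
generator `y` to the basis vector `e_y`. -/
noncomputable def foxDeriv (f : FreeGroup Y) : Y → MonoidAlgebra ℤ H :=
  foxAction π f 0

lemma foxAction_apply (f : FreeGroup Y) (x : Y → MonoidAlgebra ℤ H) :
    foxAction π f x = MonoidAlgebra.of ℤ H (π f) • x + foxDeriv π f := by
  induction f using FreeGroup.induction_on generalizing x with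
  | C1 => simp [foxDeriv, -MonoidAlgebra.of_apply]
  | of y => simp [foxDeriv, foxAction, Units.smul_def, -MonoidAlgebra.of_apply]
  | inv_of y hy =>
    have foxAction_foxDeriv_inv :
        foxAction π (FreeGroup.of y) (foxDeriv π (FreeGroup.of y)⁻¹) = 0 := by
      rw [foxDeriv, map_inv, ← Equiv.Perm.mul_apply, mul_inv_cancel, Equiv.Perm.one_apply]
    rw [map_inv, Equiv.Perm.inv_eq_iff_eq, hy, smul_add, add_assoc, ← hy, foxAction_foxDeriv_inv,
      add_zero, smul_smul, ← map_mul, ← map_mul, mul_inv_cancel, map_one, map_one, one_smul]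
  | mul a b ha hb =>
    have foxDeriv_mul : foxDeriv π (a * b) =
        MonoidAlgebra.of ℤ H (π a) • foxDeriv π b + foxDeriv π a := by
      rw [← ha, foxDeriv, map_mul, Equiv.Perm.mul_apply, foxDeriv]
    rw [map_mul, Equiv.Perm.mul_apply, ha, hb, foxDeriv_mul, map_mul, map_mul, smul_add, mul_smul,
      add_assoc]

lemma foxDeriv_mul (a b : FreeGroup Y) :
    foxDeriv π (a * b) = foxDeriv π a + MonoidAlgebra.of ℤ H (π a) • foxDeriv π b := by
  rw [add_comm, ← foxAction_apply, foxDeriv, map_mul, Equiv.Perm.mul_apply, foxDeriv]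

lemma foxDeriv_of (y : Y) : foxDeriv π (FreeGroup.of y) = Pi.single y 1 := by
  simp [foxDeriv, foxAction]

lemma foxDeriv_one : foxDeriv π 1 = 0 := by simp [foxDeriv]

lemma foxDeriv_inv (a : FreeGroup Y) :
    foxDeriv π a⁻¹ = -(MonoidAlgebra.of ℤ H (π a)⁻¹ • foxDeriv π a) := by
  have h := foxDeriv_mul π a⁻¹ a
  rw [inv_mul_cancel, foxDeriv_one, map_inv] at h
  exact eq_neg_of_add_eq_zero_left h.symm

variable {π} in
lemma foxDeriv_conj {a : FreeGroup Y} (ha : π a = 1) (g : FreeGroup Y) :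
    foxDeriv π (g * a * g⁻¹) = MonoidAlgebra.of ℤ H (π g) • foxDeriv π a := by
  have h := foxDeriv_mul π (g * a * g⁻¹) g
  have hπ : π (g * a * g⁻¹) = 1 := by simp [ha]
  rw [inv_mul_cancel_right, foxDeriv_mul, hπ, map_one, one_smul, add_comm] at h
  exact (add_right_cancel h).symm

/-- The elements of `ker π` whose Fox derivative lies in the submodule `I`. -/
noncomputable def foxKernel (I : Submodule (MonoidAlgebra ℤ H) (Y → MonoidAlgebra ℤ H)) :
    Subgroup (FreeGroup Y) where
  carrier := {f | π f = 1 ∧ foxDeriv π f ∈ I}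
  one_mem' := ⟨map_one π, by rw [foxDeriv_one]; exact I.zero_mem⟩
  mul_mem' := by
    rintro a b ⟨ha, hDa⟩ ⟨hb, hDb⟩
    refine ⟨by rw [map_mul, ha, hb, one_mul], ?_⟩
    rw [foxDeriv_mul]
    exact add_mem hDa (I.smul_mem _ hDb)
  inv_mem' := by
    rintro a ⟨ha, hDa⟩
    refine ⟨by rw [map_inv, ha, inv_one], ?_⟩
    rw [foxDeriv_inv]
    exact neg_mem (I.smul_mem _ hDa)

variable {π} {I : Submodule (MonoidAlgebra ℤ H) (Y → MonoidAlgebra ℤ H)}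

instance foxKernel_normal : (foxKernel π I).Normal where
  conj_mem := by
    rintro a ⟨ha, hDa⟩ g
    refine ⟨by simp [ha], ?_⟩
    rw [foxDeriv_conj ha]
    exact I.smul_mem _ hDa

lemma commutator_ker_le_foxKernel : ⁅π.ker, π.ker⁆ ≤ foxKernel π I := by
  rw [Subgroup.commutator_le]
  intro a (ha : π a = 1) b (hb : π b = 1)
  refine ⟨by rw [map_commutatorElement, ha, commutatorElement_one_left], ?_⟩
  rw [commutatorElement_def, foxDeriv_mul, foxDeriv_conj hb, foxDeriv_inv]
  simp [ha, hb, -MonoidAlgebra.of_apply]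

lemma foxDeriv_mem_of_mem_ker {rels : Set (FreeGroup Y)} (hrels : ∀ r ∈ rels, π r = 1)
    (hI : ∀ r ∈ rels, foxDeriv π r ∈ I)
    (hker : π.ker ≤ Subgroup.normalClosure rels ⊔ ⁅π.ker, π.ker⁆) {f : FreeGroup Y}
    (hf : f ∈ π.ker) : foxDeriv π f ∈ I := by
  have normalClosure_le : Subgroup.normalClosure rels ≤ foxKernel π I :=
    Subgroup.normalClosure_le_normal fun r hr ↦ ⟨hrels r hr, hI r hr⟩
  exact (sup_le normalClosure_le commutator_ker_le_foxKernel (hker hf)).2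

lemma single_of_eq_foxDeriv_sub (f : FreeGroup Y) (y : Y) :
    Pi.single y (MonoidAlgebra.of ℤ H (π f)) =
      foxDeriv π (f * FreeGroup.of y) - foxDeriv π f := by
  rw [foxDeriv_mul, foxDeriv_of, add_sub_cancel_left, ← Pi.single_smul, smul_eq_mul, mul_one]

lemma mkQ_foxDeriv_eq_of_map_eq (hI : ∀ f ∈ π.ker, foxDeriv π f ∈ I) {f g : FreeGroup Y}
    (hfg : π f = π g) : I.mkQ (foxDeriv π f) = I.mkQ (foxDeriv π g) := by
  have hmem : f * g⁻¹ ∈ π.ker := by rw [MonoidHom.mem_ker, map_mul, map_inv, hfg, mul_inv_cancel]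
  have hmul := foxDeriv_mul π (f * g⁻¹) g
  rw [inv_mul_cancel_right, hmem, map_one, one_smul] at hmul
  have hzero : I.mkQ (foxDeriv π (f * g⁻¹)) = 0 := (Submodule.Quotient.mk_eq_zero I).2 (hI _ hmem)
  rw [hmul, map_add, hzero, zero_add]

end Fox

section FoxBoundary

variable {H : Type} [Group H] {Y : Type}

section

variable [Fintype Y] (π : FreeGroup Y →* H)

/-- The first boundary map `(ℤH)^Y → ℤH`, `e_y ↦ π(y) - 1`, of the partial free resolution attached
to a presentation. -/
noncomputable def foxBoundary :
    (Y → MonoidAlgebra ℤ H) →ₗ[MonoidAlgebra ℤ H] MonoidAlgebra ℤ H :=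
  Fintype.linearCombination (MonoidAlgebra ℤ H) fun y ↦
    MonoidAlgebra.of ℤ H (π (FreeGroup.of y)) - 1

lemma augmentationMap_foxBoundary (x : Y → MonoidAlgebra ℤ H) :
    augmentationMap H (foxBoundary π x) = 0 := by
  simp [foxBoundary, Fintype.linearCombination_apply, augmentationMap]

lemma foxBoundary_foxDeriv [DecidableEq Y] (f : FreeGroup Y) :
    foxBoundary π (foxDeriv π f) = MonoidAlgebra.of ℤ H (π f) - 1 := by
  induction f using FreeGroup.induction_on with
  | C1 => simp [foxDeriv_one, -MonoidAlgebra.of_apply]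
  | of y => simp [foxDeriv_of, foxBoundary]
  | inv_of y h =>
    rw [foxDeriv_inv, map_neg, map_smul, h, map_inv π, smul_eq_mul, mul_sub, ← map_mul,
      inv_mul_cancel, map_one, mul_one, neg_sub]
  | mul a b ha hb =>
    rw [foxDeriv_mul, map_add, map_smul, ha, hb, map_mul, map_mul, smul_eq_mul]
    noncomm_ring

variable {π}

-- The crossed homomorphism induced by the Fox derivation on `H`, extended additively to `ℤH`,
-- is a left inverse of the boundary map modulo `I`.
lemma ker_foxBoundary_le [DecidableEq Y] (hπ : Function.Surjective π)
    {I : Submodule (MonoidAlgebra ℤ H) (Y → MonoidAlgebra ℤ H)}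
    (hI : ∀ f ∈ π.ker, foxDeriv π f ∈ I) : LinearMap.ker (foxBoundary π) ≤ I := by
  choose σ hσ using hπ
  let s : MonoidAlgebra ℤ H →+ (Y → MonoidAlgebra ℤ H) ⧸ I :=
    (Finsupp.linearCombination ℤ fun h ↦ I.mkQ (foxDeriv π (σ h))).toAddMonoidHom.comp
      MonoidAlgebra.coeffAddEquiv.toAddMonoidHom
  have s_of (f : FreeGroup Y) : s (MonoidAlgebra.of ℤ H (π f)) = I.mkQ (foxDeriv π f) := by
    have hs : s (MonoidAlgebra.of ℤ H (π f)) = (1 : ℤ) • I.mkQ (foxDeriv π (σ (π f))) :=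
      Finsupp.linearCombination_single ℤ 1 (π f)
    rw [hs, one_smul]
    exact mkQ_foxDeriv_eq_of_map_eq hI (hσ _)
  have s_foxBoundary : s.comp (foxBoundary π).toAddMonoidHom = I.mkQ.toAddMonoidHom := by
    ext y h
    obtain ⟨f, rfl⟩ : ∃ f, π f = h := ⟨σ h, hσ h⟩
    change s (foxBoundary π (Pi.single y (MonoidAlgebra.of ℤ H (π f)))) =
      I.mkQ (Pi.single y (MonoidAlgebra.of ℤ H (π f)))
    rw [single_of_eq_foxDeriv_sub, map_sub, foxBoundary_foxDeriv, foxBoundary_foxDeriv,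
      sub_sub_sub_cancel_right, map_sub, s_of, s_of, map_sub]
  intro x hx
  have h : s (foxBoundary π x) = I.mkQ x := DFunLike.congr_fun s_foxBoundary x
  rw [LinearMap.mem_ker.1 hx, map_zero] at h
  exact (Submodule.Quotient.mk_eq_zero I).1 h.symm

lemma sub_augmentationMap_mem_range (hπ : Function.Surjective π) (x : MonoidAlgebra ℤ H) :
    x - (augmentationMap H x : MonoidAlgebra ℤ H) ∈ LinearMap.range (foxBoundary π) := by
  classical
  induction x using MonoidAlgebra.induction_on with
  | of h =>
    obtain ⟨f, rfl⟩ := hπ h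
    refine ⟨foxDeriv π f, ?_⟩
    rw [foxBoundary_foxDeriv]
    simp [augmentationMap]
  | add a b ha hb =>
    rw [map_add, Int.cast_add, add_sub_add_comm]
    exact add_mem ha hb
  | smul r a ha =>
    rw [map_zsmul, smul_eq_mul, Int.cast_mul, ← zsmul_eq_mul, ← zsmul_sub]
    exact zsmul_mem ha r

end

theorem isTypeFP2_of_ker_le [Finite Y] {π : FreeGroup Y →* H} (hπ : Function.Surjective π)
    {rels : Set (FreeGroup Y)} (hfin : rels.Finite) (hrels : ∀ r ∈ rels, π r = 1)
    (hker : π.ker ≤ Subgroup.normalClosure rels ⊔ ⁅π.ker, π.ker⁆) : IsTypeFP2 H := by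
  classical
  have := Fintype.ofFinite Y
  have := hfin.fintype
  let R := MonoidAlgebra ℤ H
  let _ : Module R ℤ := Module.compHom ℤ (augmentationMap H)
  let d₂ : (rels → R) →ₗ[R] (Y → R) := Fintype.linearCombination R fun r ↦ foxDeriv π r.1
  let ε : R →ₗ[R] ℤ :=
    { toFun := augmentationMap H
      map_add' := map_add _
      map_smul' := map_mul _ }
  have range_d₂ :
      LinearMap.range d₂ = Submodule.span R (Set.range fun r : rels ↦ foxDeriv π r.1) :=
    Fintype.range_linearCombination R _
  refine ⟨rels → R, Y → R, R, inferInstance, inferInstance, inferInstance, inferInstance,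
    inferInstance, inferInstance, inferInstance, inferInstance, inferInstance, inferInstance,
    inferInstance, inferInstance, d₂, foxBoundary π, ε,
    fun z ↦ ⟨z, map_intCast (augmentationMap H) z⟩, le_antisymm ?_ fun x hx ↦ ?_,
    le_antisymm ?_ ?_⟩
  · rintro _ ⟨x, rfl⟩
    exact augmentationMap_foxBoundary π x
  · have hx : augmentationMap H x = 0 := hx
    simpa [hx] using sub_augmentationMap_mem_range hπ x
  · rw [range_d₂, Submodule.span_le]
    rintro _ ⟨r, rfl⟩
    change foxBoundary π (foxDeriv π r.1) = 0
    rw [foxBoundary_foxDeriv, hrels r.1 r.2, map_one, sub_self]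
  · refine ker_foxBoundary_le hπ fun f ↦ foxDeriv_mem_of_mem_ker hrels (fun r hr ↦ ?_) hker
    exact range_d₂ ▸ Submodule.subset_span ⟨⟨r, hr⟩, rfl⟩

end FoxBoundary

-- A perfect normal subgroup does not affect finite generation of the relation module.
theorem isTypeFP2_quotient_of_isPerfect {Y : Type} [Finite Y] {rels : Set (FreeGroup Y)}
    (hfin : rels.Finite) (N : Subgroup (PresentedGroup rels)) [N.Normal] [Group.IsPerfect N] :
    IsTypeFP2 (PresentedGroup rels ⧸ N) := by
  let p := PresentedGroup.mk rels
  have hp : Function.Surjective p := PresentedGroup.mk_surjective rels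
  have ker_eq : ((QuotientGroup.mk' N).comp p).ker = N.comap p := by
    rw [← MonoidHom.comap_ker, QuotientGroup.ker_mk']
  have ker_p : p.ker = Subgroup.normalClosure rels := QuotientGroup.ker_mk' _
  refine isTypeFP2_of_ker_le (π := (QuotientGroup.mk' N).comp p)
    ((QuotientGroup.mk'_surjective N).comp hp) hfin (fun r hr ↦ ?_) ?_
  · rw [MonoidHom.comp_apply, PresentedGroup.one_of_mem hr, map_one]
  · have comap_le : N ≤ ⁅N.comap p, N.comap p⁆.map p := by
      rw [Subgroup.map_commutator, Subgroup.map_comap_eq_self_of_surjective hp,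
        Subgroup.commutator_eq_self]
    rw [ker_eq, sup_comm, ← ker_p, ← Subgroup.comap_map_eq]
    exact Subgroup.comap_mono comap_le

/-! ## Torsion-by-ℤ groups -/

/-- `G` is torsion-by-`ℤ`: some homomorphism `G → ℤ` has torsion kernel. The homomorphism need not
be surjective. -/
def IsTorsionByInt (G : Type*) [Group G] : Prop :=
  ∃ χ : G →* Multiplicative ℤ, ∀ g, χ g = 1 → IsOfFinOrder g

namespace IsTorsionByInt

lemma of_injective {G K : Type*} [Group G] [Group K] (hG : IsTorsionByInt G) {f : K →* G}
    (hf : Function.Injective f) : IsTorsionByInt K := by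
  obtain ⟨χ, hχ⟩ := hG
  exact ⟨χ.comp f, fun g hg ↦ hf.isOfFinOrder_iff.1 (hχ (f g) hg)⟩

lemma not_surjective {G : Type*} [Group G] (hG : IsTorsionByInt G)
    (φ : G →* Multiplicative (ℤ × ℤ)) : ¬ Function.Surjective φ := by
  intro hφ
  obtain ⟨χ, hχ⟩ := hG
  have eq_one_of_map_eq_one (g : G) (hg : χ g = 1) : φ g = 1 :=
    (φ.isOfFinOrder (hχ g hg)).eq_one'
  obtain ⟨x, hx⟩ := hφ (Multiplicative.ofAdd (1, 0))
  obtain ⟨y, hy⟩ := hφ (Multiplicative.ofAdd (0, 1))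
  have hχx : χ x = 1 := by
    have h : φ (x ^ (χ y).toAdd * y ^ (-(χ x).toAdd)) = 1 := by
      refine eq_one_of_map_eq_one _ (Multiplicative.toAdd.injective ?_)
      simp [mul_comm]
    have h' := congrArg (fun v ↦ (Multiplicative.toAdd v).2) h
    simpa [hx, hy] using h'
  have hφx := hx.symm.trans (eq_one_of_map_eq_one x hχx)
  simpa using congrArg (fun v ↦ (Multiplicative.toAdd v).1) hφx

end IsTorsionByInt

lemma BS.relation (m n : ℤ) :
    (PresentedGroup.of 1 : BS m n)⁻¹ * PresentedGroup.of 0 ^ m * PresentedGroup.of 1 *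
      PresentedGroup.of 0 ^ (-n) = 1 := by
  have h := PresentedGroup.one_of_mem (rels := BSRels m n) (Set.mem_singleton _)
  simp only [map_mul, map_inv, map_zpow] at h
  exact h

lemma addRight_zpow {M : Type*} [AddCommGroup M] (a : M) (k : ℤ) :
    Equiv.addRight a ^ k = Equiv.addRight (k • a) := by
  induction k with
  | zero => ext; simp
  | succ k ih =>
    ext x
    rw [zpow_add_one, ih]
    simp [add_smul, add_comm]
  | pred k ih =>
    ext x
    rw [zpow_sub_one, ih, sub_smul]
    simp [Equiv.Perm.inv_def, add_assoc, add_comm, sub_eq_add_neg]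

-- `BS(m,n)` acts on `ℚ` with `x` translating by `1` and `y` scaling by `m / n`.
lemma BS.not_isOfFinOrder_of_zero {m n : ℤ} (hm : m ≠ 0) (hn : n ≠ 0) :
    ¬ IsOfFinOrder (PresentedGroup.of 0 : BS m n) := by
  have hmQ : (m : ℚ) ≠ 0 := Int.cast_ne_zero.2 hm
  have hnQ : (n : ℚ) ≠ 0 := Int.cast_ne_zero.2 hn
  let f : Fin 2 → Equiv.Perm ℚ :=
    ![Equiv.addRight 1, Equiv.mulRight₀ ((m : ℚ) / n) (div_ne_zero hmQ hnQ)]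
  have hf : ∀ r ∈ BSRels m n, FreeGroup.lift f r = 1 := by
    rintro _ rfl
    ext z
    simp only [map_mul, map_inv, map_zpow, FreeGroup.lift_apply_of, f, Matrix.cons_val_zero,
      Matrix.cons_val_one, addRight_zpow, Equiv.Perm.mul_apply, Equiv.Perm.inv_def]
    simp only [zsmul_eq_mul, mul_one, neg_smul, Equiv.coe_addRight, Equiv.mulRight₀_apply,
      Equiv.mulRight₀_symm_apply, inv_div, Equiv.Perm.coe_one, id_eq]
    field_simp
    ring
  intro h
  have hfin := (PresentedGroup.toGroup hf).isOfFinOrder h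
  rw [PresentedGroup.toGroup.of] at hfin
  obtain ⟨k, hk, hpow⟩ := isOfFinOrder_iff_pow_eq_one.1 hfin
  rw [← zpow_natCast, show f 0 = Equiv.addRight 1 from rfl, addRight_zpow] at hpow
  have hzero := DFunLike.congr_fun hpow 0
  simp at hzero
  omega

lemma BS.exists_surjective_int_prod (m : ℤ) :
    ∃ φ : BS m m →* Multiplicative (ℤ × ℤ), Function.Surjective φ := by
  let f : Fin 2 → Multiplicative (ℤ × ℤ) :=
    ![Multiplicative.ofAdd (1, 0), Multiplicative.ofAdd (0, 1)]
  have hf : ∀ r ∈ BSRels m m, FreeGroup.lift f r = 1 := by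
    rintro _ rfl
    simp only [map_mul, map_inv, map_zpow, FreeGroup.lift_apply_of]
    rw [inv_mul_cancel_comm, zpow_neg, mul_inv_cancel]
  refine ⟨PresentedGroup.toGroup hf, fun v ↦ ?_⟩
  refine ⟨PresentedGroup.of 0 ^ v.toAdd.1 * PresentedGroup.of 1 ^ v.toAdd.2, ?_⟩
  apply Multiplicative.toAdd.injective
  simp [f]

theorem not_isTorsionByInt_BS {m n : ℤ} (hm : m ≠ 0) (hn : n ≠ 0) : ¬ IsTorsionByInt (BS m n) := by
  intro hBS
  obtain rfl | hmn := eq_or_ne m n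
  · obtain ⟨φ, hφ⟩ := BS.exists_surjective_int_prod m
    exact hBS.not_surjective φ hφ
  · obtain ⟨χ, hχ⟩ := hBS
    refine BS.not_isOfFinOrder_of_zero hm hn (hχ _ (Multiplicative.toAdd.injective ?_))
    have h := congrArg (fun g ↦ (χ g).toAdd) (BS.relation m n)
    simp only [map_mul, map_inv, map_zpow, map_one, toAdd_mul, toAdd_inv, toAdd_zpow, toAdd_one,
      smul_eq_mul] at h
    refine (mul_eq_zero.1 ?_).resolve_left (sub_ne_zero.2 hmn)
    linear_combination h

theorem IsTorsionByInt.hasNoBSSubgroup {G : Type} [Group G] (hG : IsTorsionByInt G) :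
    HasNoBSSubgroup G := by
  rintro m n hm hn K ⟨e⟩
  exact not_isTorsionByInt_BS hm hn
    (hG.of_injective (f := K.subtype.comp e.symm.toMonoidHom)
      (K.subtype_injective.comp e.symm.injective))

theorem IsTorsionByInt.not_nonempty_mulEquiv_int_prod {G : Type*} [Group G] (hG : IsTorsionByInt G)
    (K : Subgroup G) : ¬ Nonempty (K ≃* Multiplicative (ℤ × ℤ)) := by
  rintro ⟨e⟩
  exact (hG.of_injective K.subtype_injective).not_surjective e.toMonoidHom e.surjective

/-! ## Steinberg root families -/

section RootFamilies

variable {G : Type*} [Group G]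

/-- A family of group elements indexed by pairs of indices `i, j`, thought of as the elementary
matrices `e i j` of type `A₄`. The diagonal entries carry no information. -/
abbrev RootFamily (G : Type*) : Type _ := Fin 5 → Fin 5 → G

/-- A choice of an index different from `i` and `k`. -/
def thirdIndex (i k : Fin 5) : Fin 5 :=
  if i ≠ 0 ∧ k ≠ 0 then 0 else if i ≠ 1 ∧ k ≠ 1 then 1 else 2

lemma thirdIndex_ne : ∀ i k : Fin 5, thirdIndex i k ≠ i ∧ thirdIndex i k ≠ k := by decide

lemma exists_ne_of_four (i j k l : Fin 5) : ∃ m, m ≠ i ∧ m ≠ j ∧ m ≠ k ∧ m ≠ l := by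
  obtain ⟨m, hm⟩ := Finset.exists_mem_notMem_of_card_lt_card
    (s := {i, j, k, l}) (t := Finset.univ) (Finset.card_le_four.trans_lt (by simp))
  exact ⟨m, by simpa using hm⟩

/-- The Steinberg relations `⁅f i j, g k l⁆ = 1` for roots whose sum is neither a root nor zero. -/
def RootCommute (f g : RootFamily G) : Prop :=
  ∀ i j k l, i ≠ j → k ≠ l → j ≠ k → i ≠ l → Commute (f i j) (g k l)

/-- Mixed Steinberg relations: `⁅f i j, g j k⁆` depends only on `i` and `k`, and is symmetric in
`f` and `g`, as for elementary matrices with off-diagonal entries in a commutative ring. -/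
structure RootCompatible (f g : RootFamily G) : Prop where
  commute : RootCommute f g
  commutator_eq : ∀ i j k j', i ≠ j → j ≠ k → i ≠ k → j' ≠ i → j' ≠ k →
    ⁅f i j, g j k⁆ = ⁅f i j', g j' k⁆
  commutator_swap : ∀ i j k, i ≠ j → j ≠ k → i ≠ k → ⁅f i j, g j k⁆ = ⁅g i j, f j k⁆

/-- The family of commutators `⁅f i m, g m k⁆`; for elementary matrices this multiplies the
off-diagonal entries. -/
def rootMul (f g : RootFamily G) : RootFamily G := fun i k ↦
  if i = k then 1 else ⁅f i (thirdIndex i k), g (thirdIndex i k) k⁆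

variable {f g h : RootFamily G}

lemma RootCommute.symm (hfg : RootCommute f g) : RootCommute g f :=
  fun i j k l hij hkl hjk hil ↦ (hfg k l i j hkl hij hil.symm hjk.symm).symm

lemma RootCompatible.symm (hfg : RootCompatible f g) : RootCompatible g f where
  commute := hfg.commute.symm
  commutator_eq i j k j' hij hjk hik hji hjk' := by
    rw [← hfg.commutator_swap i j k hij hjk hik, ← hfg.commutator_swap i j' k hji.symm hjk' hik]
    exact hfg.commutator_eq i j k j' hij hjk hik hji hjk'
  commutator_swap i j k hij hjk hik := (hfg.commutator_swap i j k hij hjk hik).symm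

lemma rootMul_self_index (f g : RootFamily G) (i : Fin 5) : rootMul f g i i = 1 := if_pos rfl

lemma rootMul_of_ne (f g : RootFamily G) {i k : Fin 5} (hik : i ≠ k) :
    rootMul f g i k = ⁅f i (thirdIndex i k), g (thirdIndex i k) k⁆ := if_neg hik

lemma RootCompatible.rootMul_apply (hfg : RootCompatible f g) {i k m : Fin 5} (hik : i ≠ k)
    (hmi : m ≠ i) (hmk : m ≠ k) : rootMul f g i k = ⁅f i m, g m k⁆ := by
  obtain ⟨hi, hk⟩ := thirdIndex_ne i k
  rw [rootMul_of_ne _ _ hik]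
  exact hfg.commutator_eq _ _ _ _ hi.symm hk hik hmi hmk

lemma RootCompatible.rootMul_comm (hfg : RootCompatible f g) : rootMul f g = rootMul g f := by
  funext i k
  obtain ⟨hi, hk⟩ := thirdIndex_ne i k
  obtain rfl | hik := eq_or_ne i k
  · simp only [rootMul_self_index]
  · simpa only [rootMul_of_ne _ _ hik] using hfg.commutator_swap _ _ _ hi.symm hk hik

lemma commute_commutatorElement_left {a b c : G} (hac : Commute a c) (hbc : Commute b c) :
    Commute ⁅a, b⁆ c :=
  ((hac.mul_left hbc).mul_left hac.inv_left).mul_left hbc.inv_left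

lemma RootCompatible.rootCommute_rootMul (hfg : RootCompatible f g) (hfh : RootCommute f h)
    (hgh : RootCommute g h) : RootCommute (rootMul f g) h := by
  intro i j k l hij hkl hjk hil
  obtain ⟨m, hmi, hmj, hmk, hml⟩ := exists_ne_of_four i j k l
  rw [hfg.rootMul_apply hij hmi hmj]
  exact commute_commutatorElement_left (hfh i m k l hmi.symm hkl hmk hil)
    (hgh m j k l hmj hkl hjk hml)

lemma commutatorElement_assoc {a b c : G} (hac : Commute a c) (h₁ : Commute ⁅a, b⁆ ⁅b, c⁆)
    (h₂ : Commute c ⁅b, c⁆) : ⁅⁅a, b⁆, c⁆ = ⁅a, ⁅b, c⁆⁆ := by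
  set x := ⁅a, b⁆ with hx
  set z := ⁅b, c⁆ with hz
  have conj_b : c * b * c⁻¹ = z⁻¹ * b := by rw [hz, commutatorElement_def]; group
  have conj_a : c * a * c⁻¹ = a := by rw [← hac.eq, mul_inv_cancel_right]
  have conj_x : c * x * c⁻¹ = ⁅a, z⁻¹⁆ * (z⁻¹ * x * z) := by
    rw [hx, ← MulAut.conj_apply, map_commutatorElement, MulAut.conj_apply, MulAut.conj_apply,
      conj_b, conj_a]
    simp only [commutatorElement_def]
    group
  have conj_x_by_z : z⁻¹ * x * z = x := by rw [mul_assoc, h₁.eq, inv_mul_cancel_left]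
  have key : z * ⁅x, c⁆ * z⁻¹ = ⁅a, z⁆ := by
    have : ⁅x, c⁆ = x * (c * x * c⁻¹)⁻¹ := by rw [commutatorElement_def]; group
    rw [this, conj_x, conj_x_by_z, commutatorElement_def, commutatorElement_def]
    group
  rw [← key, ← (commute_commutatorElement_left h₁ h₂).eq, mul_inv_cancel_right]

/-- The relations between three root families that make `rootMul` associative on them. -/
structure CompatibleTriple (f g h : RootFamily G) : Prop where
  fg : RootCompatible f g
  gh : RootCompatible g h
  fh : RootCompatible f h
  ff : RootCommute f f
  gg : RootCommute g g
  hh : RootCommute h h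

namespace CompatibleTriple

lemma commutator_rootMul_eq (T : CompatibleTriple f g h) {i m j k : Fin 5} (him : i ≠ m)
    (hij : i ≠ j) (hik : i ≠ k) (hmj : m ≠ j) (hmk : m ≠ k) (hjk : j ≠ k) :
    ⁅rootMul f g i j, h j k⁆ = ⁅f i m, rootMul g h m k⁆ := by
  obtain ⟨p, hpi, hpm, hpj, hpk⟩ := exists_ne_of_four i m j k
  have fg_apply := T.fg.rootMul_apply hij him.symm hmj
  have gh_apply := T.gh.rootMul_apply hmk hmj.symm hjk
  have gh_commute_h := T.gh.rootCommute_rootMul T.gh.commute T.hh m k j k hmk hjk hjk.symm hmk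
  have fg_commute_g :=
    T.fg.rootCommute_rootMul T.fg.commute T.gg i j m p hij hpm.symm hmj.symm hpi.symm
  have fg_commute_h :=
    T.fg.rootCommute_rootMul T.fh.commute T.gh.commute i j p k hij hpk hpj.symm hik
  have fg_commute_gh : Commute (rootMul f g i j) (rootMul g h m k) := by
    rw [T.gh.rootMul_apply hmk hpm hpk]
    exact (commute_commutatorElement_left fg_commute_g.symm fg_commute_h.symm).symm
  rw [fg_apply, gh_apply] at *
  exact commutatorElement_assoc (T.fh.commute i m j k him hjk hmj hik) fg_commute_gh
    gh_commute_h.symm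

lemma commutator_rootMul_left (T : CompatibleTriple f g h) {i j k j' : Fin 5} (hij : i ≠ j)
    (hjk : j ≠ k) (hik : i ≠ k) (hji : j' ≠ i) (hjk' : j' ≠ k) :
    ⁅rootMul f g i j, h j k⁆ = ⁅rootMul f g i j', h j' k⁆ := by
  obtain ⟨m, hmi, hmj, hmk, hmj'⟩ := exists_ne_of_four i j k j'
  rw [T.commutator_rootMul_eq hmi.symm hij hik hmj hmk hjk,
    T.commutator_rootMul_eq hmi.symm hji.symm hik hmj' hmk hjk']

lemma commutator_rootMul_right (T : CompatibleTriple f g h) {i j k j' : Fin 5} (hij : i ≠ j)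
    (hjk : j ≠ k) (hik : i ≠ k) (hji : j' ≠ i) (hjk' : j' ≠ k) :
    ⁅f i j, rootMul g h j k⁆ = ⁅f i j', rootMul g h j' k⁆ := by
  obtain ⟨m, hmi, hmj, hmk, hmj'⟩ := exists_ne_of_four i j k j'
  rw [← T.commutator_rootMul_eq hij hmi.symm hik hmj.symm hjk hmk,
    ← T.commutator_rootMul_eq hji.symm hmi.symm hik hmj'.symm hjk' hmk]

lemma rootMul_assoc (T : CompatibleTriple f g h) :
    rootMul (rootMul f g) h = rootMul f (rootMul g h) := by
  funext i k
  obtain ⟨hi, hk⟩ := thirdIndex_ne i k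
  obtain rfl | hik := eq_or_ne i k
  · simp only [rootMul_self_index]
  obtain ⟨m, hmi, hmt, hmk, -⟩ := exists_ne_of_four i (thirdIndex i k) k k
  rw [rootMul_of_ne _ h hik, rootMul_of_ne f _ hik,
    T.commutator_rootMul_eq hmi.symm hi.symm hik hmt hmk hk]
  exact T.commutator_rootMul_right hmi.symm hmk hik hi hk

lemma rootCompatible_rootMul (T : CompatibleTriple f g h) : RootCompatible (rootMul f g) h where
  commute := T.fg.rootCommute_rootMul T.fh.commute T.gh.commute
  commutator_eq _ _ _ _ := T.commutator_rootMul_left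
  commutator_swap i j k hij hjk hik := by
    have T_fhg : CompatibleTriple f h g := ⟨T.fh, T.gh.symm, T.fg, T.ff, T.hh, T.gg⟩
    have T_hfg : CompatibleTriple h f g := ⟨T.fh.symm, T.fg, T.gh.symm, T.hh, T.ff, T.gg⟩
    obtain ⟨hi, hk⟩ := thirdIndex_ne i k
    have fg_h : ⁅rootMul f g i j, h j k⁆ = rootMul (rootMul f g) h i k := by
      rw [rootMul_of_ne _ h hik]
      exact T.commutator_rootMul_left hij hjk hik hi hk
    have h_fg : ⁅h i j, rootMul f g j k⁆ = rootMul h (rootMul f g) i k := by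
      rw [rootMul_of_ne h _ hik]
      exact T_hfg.commutator_rootMul_right hij hjk hik hi hk
    rw [fg_h, h_fg, T.rootMul_assoc, T.gh.rootMul_comm, ← T_fhg.rootMul_assoc,
      T.fh.rootMul_comm, T_hfg.rootMul_assoc]

end CompatibleTriple

/-- The subgroup generated by the entries of a root family. -/
def rootSubgroup (f : RootFamily G) : Subgroup G :=
  Subgroup.closure (Set.range fun p : Fin 5 × Fin 5 ↦ f p.1 p.2)

lemma apply_mem_rootSubgroup (f : RootFamily G) (i j : Fin 5) : f i j ∈ rootSubgroup f :=
  Subgroup.subset_closure ⟨(i, j), rfl⟩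

lemma rootSubgroup_le_iff {H : Subgroup G} : rootSubgroup f ≤ H ↔ ∀ i j, f i j ∈ H := by
  simp only [rootSubgroup, Subgroup.closure_le, Set.range_subset_iff, Prod.forall,
    SetLike.mem_coe]

lemma apply_self_of_rootMul_self (hidem : rootMul f f = f) (i : Fin 5) : f i i = 1 := by
  rw [← hidem, rootMul_self_index]

lemma isPerfect_rootSubgroup (hidem : rootMul f f = f) : Group.IsPerfect (rootSubgroup f) := by
  refine Subgroup.isPerfect_iff.2 ((Subgroup.commutator_le_self _).antisymm ?_)
  refine rootSubgroup_le_iff.2 fun i j ↦ ?_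
  obtain rfl | hij := eq_or_ne i j
  · exact apply_self_of_rootMul_self hidem i ▸ one_mem _
  · rw [← hidem, rootMul_of_ne _ _ hij, hidem]
    exact Subgroup.commutator_mem_commutator (apply_mem_rootSubgroup f _ _)
      (apply_mem_rootSubgroup f _ _)

-- The entry `f j i` opposite to the root `(i, j)` is a commutator of other entries.
lemma rootSubgroup_le_of_forall_ne_opposite (hff : RootCompatible f f) (hidem : rootMul f f = f)
    {H : Subgroup G} {i j : Fin 5} (horth : ∀ k l, k ≠ l → j ≠ k → i ≠ l → f k l ∈ H)
    (hright : ∀ l, l ≠ i → l ≠ j → f j l ∈ H) (hleft : ∀ k, k ≠ i → k ≠ j → f k i ∈ H) :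
    rootSubgroup f ≤ H := by
  refine rootSubgroup_le_iff.2 fun k l ↦ ?_
  obtain rfl | hkl := eq_or_ne k l
  · exact apply_self_of_rootMul_self hidem k ▸ one_mem _
  obtain rfl | hjk := eq_or_ne j k <;> obtain rfl | hil := eq_or_ne i l
  · obtain ⟨m, hmi, hmj, -, -⟩ := exists_ne_of_four i j j j
    rw [← hidem, hff.rootMul_apply hkl hmj hmi]
    exact H.commutator_le_self
      (Subgroup.commutator_mem_commutator (hright m hmi hmj) (hleft m hmi hmj))
  · exact hright l hil.symm hkl.symm
  · exact hleft k hkl hjk.symm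
  · exact horth k l hkl hjk hil

end RootFamilies

section FiniteSubgroups

variable {G : Type*} [Group G]

lemma relIndex_sup_right_of_le_normalizer {H N : Subgroup G} (h : H ≤ Subgroup.normalizer N) :
    N.relIndex (H ⊔ N) = N.relIndex H :=
  have := Subgroup.normal_subgroupOf_of_le_normalizer h
  have := Subgroup.normal_subgroupOf_sup_of_le_normalizer h
  (Nat.card_congr (QuotientGroup.quotientInfEquivProdNormalizerQuotient H N h).toEquiv).symm

lemma relIndex_ne_zero_of_finite (H K : Subgroup G) [Finite K] : H.relIndex K ≠ 0 :=
  Nat.card_ne_zero.2 ⟨inferInstance, inferInstance⟩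

lemma finite_sup_of_le_normalizer {H N : Subgroup G} [Finite H] [Finite N]
    (h : H ≤ Subgroup.normalizer N) : Finite ↥(H ⊔ N) := by
  refine Nat.finite_of_card_ne_zero ?_
  rw [← Subgroup.relIndex_bot_left,
    ← Subgroup.relIndex_mul_relIndex ⊥ N (H ⊔ N) bot_le le_sup_right,
    relIndex_sup_right_of_le_normalizer h]
  exact mul_ne_zero (relIndex_ne_zero_of_finite _ _) (relIndex_ne_zero_of_finite _ _)

lemma le_normalizer_centralizer_of_le_normalizer {H K : Subgroup G}
    (h : K ≤ Subgroup.normalizer H) :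
    K ≤ Subgroup.normalizer (Subgroup.centralizer (H : Set G)) := by
  have := Subgroup.le_normalizer_of_normal_subgroupOf
    (Subgroup.centralizer_le_normalizer (H : Set G))
  exact h.trans this

lemma finiteIndex_center_of_le_sup_centralizer {H K : Subgroup G} [Finite K]
    (hK : K ≤ Subgroup.normalizer H) (hH : H ≤ K ⊔ Subgroup.centralizer (H : Set G)) :
    (Subgroup.center H).FiniteIndex := by
  have hrel : (Subgroup.centralizer (H : Set G)).relIndex H ≠ 0 := by
    refine mt (Subgroup.relIndex_eq_zero_of_le_right hH) ?_
    rw [relIndex_sup_right_of_le_normalizer (le_normalizer_centralizer_of_le_normalizer hK)]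
    exact relIndex_ne_zero_of_finite _ _
  have hcenter : (Subgroup.centralizer (H : Set G)).subgroupOf H = Subgroup.center H := by
    ext x
    simp [Subgroup.mem_subgroupOf, Subgroup.mem_centralizer_iff, Subgroup.mem_center_iff,
      Subtype.ext_iff]
  exact ⟨hcenter ▸ hrel⟩

lemma commutatorElement_mul_left_of_mem_center (a b : G) {z : G} (hz : z ∈ Subgroup.center G) :
    ⁅a * z, b⁆ = ⁅a, b⁆ := by
  have hzb : Commute b z := Subgroup.mem_center_iff.1 hz b
  calc ⁅a * z, b⁆ = a * (z * b) * z⁻¹ * a⁻¹ * b⁻¹ := by rw [commutatorElement_def]; group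
    _ = ⁅a, b⁆ := by rw [← hzb.eq, commutatorElement_def]; group

lemma finite_commutatorSet_of_finiteIndex_center [(Subgroup.center G).FiniteIndex] :
    Finite (commutatorSet G) := by
  let Q := G ⧸ Subgroup.center G
  refine (Set.finite_range fun p : Q × Q ↦ ⁅p.1.out, p.2.out⁆).subset ?_
  rintro _ ⟨a, b, rfl⟩
  refine ⟨(a, b), ?_⟩
  obtain ⟨x, hx⟩ := QuotientGroup.mk_out_eq_mul (Subgroup.center G) a
  obtain ⟨y, hy⟩ := QuotientGroup.mk_out_eq_mul (Subgroup.center G) b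
  simp only [hx, hy]
  rw [commutatorElement_mul_left_of_mem_center _ _ x.2, ← commutatorElement_inv,
    commutatorElement_mul_left_of_mem_center _ _ y.2, commutatorElement_inv]

lemma finite_of_isPerfect_of_finiteIndex_center [Group.IsPerfect G]
    [(Subgroup.center G).FiniteIndex] : Finite G := by
  have := finite_commutatorSet_of_finiteIndex_center (G := G)
  have : Finite (⊤ : Subgroup G) := Group.IsPerfect.commutator_eq_top (G := G) ▸ inferInstance
  exact Finite.of_equiv _ Subgroup.topEquiv.toEquiv

end FiniteSubgroups

section SteinbergSets

variable {G : Type*} [Group G] {f g s : RootFamily G} {S : Set (RootFamily G)}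

lemma commute_inv_mul_of_commutatorElement_eq {a b x : G} (h : ⁅a, x⁆ = ⁅b, x⁆) :
    Commute (b⁻¹ * a) x := by
  have hconj : a * x * a⁻¹ = b * x * b⁻¹ := mul_right_cancel h
  calc b⁻¹ * a * x = b⁻¹ * (a * x * a⁻¹) * a := by group
    _ = x * (b⁻¹ * a) := by rw [hconj]; group

lemma inv_mul_mem_centralizer_rootSubgroup (hff : RootCompatible f f) (hsf : RootCompatible s f)
    (hidem : rootMul f f = f) (hs : rootMul s f = f) {i j : Fin 5} (hij : i ≠ j) :
    (s i j)⁻¹ * f i j ∈ Subgroup.centralizer (rootSubgroup f : Set G) := by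
  suffices h : rootSubgroup f ≤ Subgroup.centralizer {(s i j)⁻¹ * f i j} by
    refine Subgroup.mem_centralizer_iff.2 fun x hx ↦ ?_
    exact (Subgroup.mem_centralizer_singleton_iff.1 (h hx))
  have hs' : rootMul f s = f := hsf.rootMul_comm ▸ hs
  refine rootSubgroup_le_of_forall_ne_opposite (i := i) (j := j) hff hidem ?_ ?_ ?_ <;>
    simp only [Subgroup.mem_centralizer_singleton_iff]
  · intro k l hkl hjk hil
    exact ((hsf.commute _ _ _ _ hij hkl hjk hil).inv_left.mul_left
      (hff.commute _ _ _ _ hij hkl hjk hil)).symm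
  · intro l hli hlj
    refine (commute_inv_mul_of_commutatorElement_eq ?_).symm
    rw [← hff.rootMul_apply hli.symm hij.symm hlj.symm,
      ← hsf.rootMul_apply hli.symm hij.symm hlj.symm, hidem, hs]
  · intro k hki hkj
    refine (commute_inv_mul_of_commutatorElement_eq (inv_injective ?_)).symm
    rw [commutatorElement_inv, commutatorElement_inv, ← hff.rootMul_apply hkj hki.symm hij,
      ← hsf.symm.rootMul_apply hkj hki.symm hij, hidem, hs']

lemma finite_rootSubgroup_of_rootMul_eq (hff : RootCompatible f f) (hsf : RootCompatible s f)
    (hidem : rootMul f f = f) (hs : rootMul s f = f) (hss : rootMul s s = s)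
    [Finite (rootSubgroup s)] : Finite (rootSubgroup f) := by
  let C := Subgroup.centralizer (rootSubgroup f : Set G)
  have hC : ∀ i j, (s i j)⁻¹ * f i j ∈ C := by
    intro i j
    obtain rfl | hij := eq_or_ne i j
    · simp [apply_self_of_rootMul_self hidem, apply_self_of_rootMul_self hss, one_mem]
    · exact inv_mul_mem_centralizer_rootSubgroup hff hsf hidem hs hij
  have hs_normalizes : rootSubgroup s ≤ Subgroup.normalizer (rootSubgroup f) := by
    refine rootSubgroup_le_iff.2 fun i j ↦ ?_
    have : s i j = f i j * ((s i j)⁻¹ * f i j)⁻¹ := by group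
    rw [this]
    exact mul_mem (Subgroup.le_normalizer (apply_mem_rootSubgroup f i j))
      (inv_mem (Subgroup.centralizer_le_normalizer _ (hC i j)))
  have hf_le : rootSubgroup f ≤ rootSubgroup s ⊔ C := by
    refine rootSubgroup_le_iff.2 fun i j ↦ ?_
    rw [← mul_inv_cancel_left (s i j) (f i j)]
    exact mul_mem (Subgroup.mem_sup_left (apply_mem_rootSubgroup s i j))
      (Subgroup.mem_sup_right (hC i j))
  have := finiteIndex_center_of_le_sup_centralizer hs_normalizes hf_le
  have := isPerfect_rootSubgroup hidem
  exact finite_of_isPerfect_of_finiteIndex_center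

lemma conj_mem_rootSubgroup_sup (hgf : RootCompatible g f) (hff : RootCompatible f f)
    (hidem : rootMul f f = f) {i j : Fin 5} (hij : i ≠ j) {x : G} (hx : x ∈ rootSubgroup f) :
    g i j * x * (g i j)⁻¹ ∈ rootSubgroup f ⊔ rootSubgroup (rootMul g f) := by
  let H := rootSubgroup f ⊔ rootSubgroup (rootMul g f)
  have hf : ∀ k l, f k l ∈ H := fun k l ↦ Subgroup.mem_sup_left (apply_mem_rootSubgroup f k l)
  have hgf_mem : ∀ k l, rootMul g f k l ∈ H := fun k l ↦
    Subgroup.mem_sup_right (apply_mem_rootSubgroup _ k l)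
  suffices h : rootSubgroup f ≤ H.comap (MulAut.conj (g i j)).toMonoidHom from h hx
  refine rootSubgroup_le_of_forall_ne_opposite (i := i) (j := j) hff hidem ?_ ?_ ?_ <;>
    simp only [Subgroup.mem_comap, MulEquiv.coe_toMonoidHom, MulAut.conj_apply]
  · intro k l hkl hjk hil
    rw [(hgf.commute i j k l hij hkl hjk hil).eq, mul_inv_cancel_right]
    exact hf k l
  · intro l hli hlj
    have : g i j * f j l * (g i j)⁻¹ = rootMul g f i l * f j l := by
      rw [hgf.rootMul_apply hli.symm hij.symm hlj.symm, commutatorElement_def]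
      group
    exact this ▸ mul_mem (hgf_mem _ _) (hf _ _)
  · intro k hki hkj
    have : g i j * f k i * (g i j)⁻¹ = (rootMul g f k j)⁻¹ * f k i := by
      rw [hgf.rootMul_comm, hgf.symm.rootMul_apply hkj hki.symm hij, commutatorElement_def]
      group
    exact this ▸ mul_mem (inv_mem (hgf_mem _ _)) (hf _ _)

/-- A set of pairwise compatible root families each of which is idempotent for `rootMul`. -/
structure IsSteinbergSet (S : Set (RootFamily G)) : Prop where
  compatible : ∀ f ∈ S, ∀ g ∈ S, RootCompatible f g
  idempotent : ∀ f ∈ S, rootMul f f = f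

/-- The iterated products `s₁ (s₂ (⋯ sₙ))` of elements of `S`. -/
inductive IsRootProduct (S : Set (RootFamily G)) : RootFamily G → Prop
  | of_mem {s : RootFamily G} : s ∈ S → IsRootProduct S s
  | mul_left {s f : RootFamily G} : s ∈ S → IsRootProduct S f → IsRootProduct S (rootMul s f)

namespace IsRootProduct

variable {h : RootFamily G}

lemma compatible_of_mem (hS : IsSteinbergSet S) (hf : IsRootProduct S f) :
    (∀ s ∈ S, RootCompatible s f) ∧ RootCommute f f := by
  induction hf with
  | of_mem hs => exact ⟨fun s' hs' ↦ hS.compatible _ hs' _ hs, (hS.compatible _ hs _ hs).commute⟩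
  | @mul_left s f hs _ ih =>
    obtain ⟨hSf, hff⟩ := ih
    have hss := (hS.compatible s hs s hs).commute
    have hsf := hSf s hs
    refine ⟨fun s' hs' ↦ (CompatibleTriple.rootCompatible_rootMul ⟨hsf, (hSf s' hs').symm,
      hS.compatible s hs s' hs', hss, hff, (hS.compatible s' hs' s' hs').commute⟩).symm, ?_⟩
    exact hsf.rootCommute_rootMul (hsf.rootCommute_rootMul hss hsf.symm.commute).symm
      (hsf.rootCommute_rootMul hsf.commute hff).symm

lemma compatible (hS : IsSteinbergSet S) (hf : IsRootProduct S f) (hg : IsRootProduct S g) :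
    RootCompatible f g := by
  induction hf with
  | of_mem hs => exact (hg.compatible_of_mem hS).1 _ hs
  | @mul_left s f hs hf ih =>
    exact CompatibleTriple.rootCompatible_rootMul ⟨(hf.compatible_of_mem hS).1 s hs, ih,
      (hg.compatible_of_mem hS).1 s hs, (hS.compatible s hs s hs).commute,
      (hf.compatible_of_mem hS).2, (hg.compatible_of_mem hS).2⟩

lemma rootMul_assoc (hS : IsSteinbergSet S) (hf : IsRootProduct S f) (hg : IsRootProduct S g)
    (hh : IsRootProduct S h) : rootMul (rootMul f g) h = rootMul f (rootMul g h) :=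
  CompatibleTriple.rootMul_assoc ⟨hf.compatible hS hg, hg.compatible hS hh, hf.compatible hS hh,
    (hf.compatible hS hf).commute, (hg.compatible hS hg).commute, (hh.compatible hS hh).commute⟩

lemma mul (hS : IsSteinbergSet S) (hf : IsRootProduct S f) (hg : IsRootProduct S g) :
    IsRootProduct S (rootMul f g) := by
  induction hf with
  | of_mem hs => exact mul_left hs hg
  | mul_left hs hf ih =>
    rw [(of_mem hs).rootMul_assoc hS hf hg]
    exact mul_left hs ih

lemma rootMul_self (hS : IsSteinbergSet S) (hf : IsRootProduct S f) : rootMul f f = f := by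
  induction hf with
  | of_mem hs => exact hS.idempotent _ hs
  | @mul_left s f hs hf ih =>
    have hs' := of_mem hs
    have hsf := mul_left hs hf
    rw [hs'.rootMul_assoc hS hf hsf, (hf.compatible hS hsf).rootMul_comm,
      hs'.rootMul_assoc hS hf hf, ih, ← hs'.rootMul_assoc hS hs' hf, hS.idempotent s hs]

end IsRootProduct

namespace IsSteinbergSet

/-- The semilattice of iterated products of a Steinberg set, with `rootMul` as infimum. -/
@[ext]
structure Products (hS : IsSteinbergSet S) where
  /-- The underlying root family. -/
  val : RootFamily G
  property : IsRootProduct S val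

variable (hS : IsSteinbergSet S)

instance : Min hS.Products := ⟨fun f g ↦ ⟨rootMul f.val g.val, f.property.mul hS g.property⟩⟩

instance : SemilatticeInf hS.Products :=
  SemilatticeInf.mk' (fun f g ↦ Products.ext (f.property.compatible hS g.property).rootMul_comm)
    (fun f g h ↦ Products.ext (f.property.rootMul_assoc hS g.property h.property))
    (fun f ↦ Products.ext (f.property.rootMul_self hS))

variable {hS}

lemma exists_le_of_mem (f : hS.Products) : ∃ s : hS.Products, s.val ∈ S ∧ f ≤ s := by
  obtain ⟨f, hf⟩ := f
  cases hf with
  | of_mem hs => exact ⟨_, hs, le_rfl⟩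
  | @mul_left s f hs hf =>
    let s' : hS.Products := ⟨s, .of_mem hs⟩
    exact ⟨s', hs, inf_le_left (a := s') (b := ⟨f, hf⟩)⟩

lemma finite_rootSubgroup (hfin : ∀ s ∈ S, Finite (rootSubgroup s)) (f : hS.Products) :
    Finite (rootSubgroup f.val) := by
  obtain ⟨s, hs, hfs⟩ := exists_le_of_mem f
  have := hfin s.val hs
  have hsf : rootMul s.val f.val = f.val := congrArg Products.val (inf_eq_right.2 hfs)
  exact finite_rootSubgroup_of_rootMul_eq (f.property.compatible hS f.property)
    (s.property.compatible hS f.property) (f.property.rootMul_self hS) hsf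
    (s.property.rootMul_self hS)

lemma rootSubgroup_le_normalizer_iSup {W : Finset hS.Products} {v : hS.Products}
    (hW : ∀ u ∈ W, v ⊓ u ∈ W) [Finite ↥(⨆ u ∈ W, rootSubgroup u.val)] :
    rootSubgroup v.val ≤ Subgroup.normalizer (⨆ u ∈ W, rootSubgroup u.val : Subgroup G) := by
  refine rootSubgroup_le_iff.2 fun i j ↦ Subgroup.mem_normalizer_fintype fun x hx ↦ ?_
  obtain rfl | hij := eq_or_ne i j
  · simpa [apply_self_of_rootMul_self (v.property.rootMul_self hS)] using hx
  let H := ⨆ u ∈ W, rootSubgroup u.val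
  have hle : H ≤ H.comap (MulAut.conj (v.val i j)).toMonoidHom := by
    refine iSup₂_le fun u hu y hy ↦ ?_
    have hsup : rootSubgroup u.val ⊔ rootSubgroup (rootMul v.val u.val) ≤ H :=
      sup_le (le_iSup₂_of_le u hu le_rfl) (le_iSup₂_of_le (v ⊓ u) (hW u hu) le_rfl)
    exact hsup <| conj_mem_rootSubgroup_sup (v.property.compatible hS u.property)
      (u.property.compatible hS u.property) (u.property.rootMul_self hS) hij hy
  exact hle hx

-- Adding the elements of `U` in increasing order, each new root subgroup normalizes the others.
lemma finite_iSup_rootSubgroup (hfin : ∀ s ∈ S, Finite (rootSubgroup s))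
    (U : Finset hS.Products) (hU : InfClosed (U : Set hS.Products)) :
    Finite ↥(⨆ u ∈ U, rootSubgroup u.val) := by
  classical
  induction U using Finset.strongInduction with
  | H U ih =>
    obtain rfl | hne := U.eq_empty_or_nonempty
    · simpa using inferInstanceAs (Finite (⊥ : Subgroup G))
    obtain ⟨v, hv, hmax⟩ := U.exists_maximal hne
    have inf_mem_erase : ∀ f ∈ U, ∀ g ∈ U.erase v, f ⊓ g ∈ U.erase v := by
      intro f hf g hg
      obtain ⟨hgv, hgU⟩ := Finset.mem_erase.1 hg
      refine Finset.mem_erase.2 ⟨fun h ↦ hgv ?_, hU hf hgU⟩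
      have hvg : v ≤ g := h ▸ inf_le_right
      exact (hmax hgU hvg).antisymm hvg
    have := ih (U.erase v) (Finset.erase_ssubset hv) fun f hf g hg ↦
      inf_mem_erase f (Finset.mem_of_mem_erase hf) g hg
    have := finite_rootSubgroup hfin v
    rw [← Finset.insert_erase hv, Finset.iSup_insert]
    exact finite_sup_of_le_normalizer (rootSubgroup_le_normalizer_iSup (inf_mem_erase v hv))

theorem isOfFinOrder_of_mem_iSup_rootSubgroup (hS : IsSteinbergSet S)
    (hfin : ∀ s ∈ S, Finite (rootSubgroup s)) {x : G} (hx : x ∈ ⨆ s ∈ S, rootSubgroup s) :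
    IsOfFinOrder x := by
  let iSupOn (F : Finset hS.Products) : Subgroup G := ⨆ u ∈ F, rootSubgroup u.val
  have hle : ⨆ s ∈ S, rootSubgroup s ≤ ⨆ F, iSupOn F := by
    refine iSup₂_le fun s hs ↦ le_iSup_of_le {⟨s, .of_mem hs⟩} ?_
    simp only [iSupOn, Finset.mem_singleton, iSup_iSup_eq_left, le_refl]
  have hmono : Monotone iSupOn := fun _ _ h ↦ biSup_mono h
  obtain ⟨F, hxF⟩ := (Subgroup.mem_iSup_of_directed hmono.directed_le).1 (hle hx)
  obtain ⟨U, hU⟩ := F.finite_toSet.infClosure.exists_finset_coe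
  have hFU : F ⊆ U := Finset.coe_subset.1 (hU ▸ subset_infClosure)
  have : Finite (iSupOn U) := finite_iSup_rootSubgroup hfin U (hU ▸ infClosed_infClosure)
  exact (iSupOn U).subtype.isOfFinOrder (isOfFinOrder_of_finite (⟨x, hmono hFU hxF⟩ : iSupOn U))

end IsSteinbergSet

end SteinbergSets

/-! ## Spinal groups -/

section Spinal

/-- The data defining a spinal group: `v : V` acts on the level-one subtrees, which are indexed by
`A`, by `ρ v` at `1`, by `ω₁ v` at `a₁`, by `ω₂ v` at `a₂`, and trivially elsewhere, while `A`
permutes these subtrees. -/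
structure SpinalDatum (A V : Type*) [Group A] [Group V] where
  /-- The action of a spinal element on the subtree that contains the spine. -/
  ρ : V ≃* V
  /-- The label of a spinal element at `a₁`. -/
  ω₁ : V →* A
  /-- The label of a spinal element at `a₂`. -/
  ω₂ : V →* A
  /-- The subtree carrying the first label. -/
  a₁ : A
  /-- The subtree carrying the second label. -/
  a₂ : A
  not_commute : ¬ Commute a₁ a₂
  mul_inv_mul_ne : a₁ * (a₂⁻¹ * a₁) ≠ a₂
  exists_iterate_eq_one : ∀ v, ∃ n : ℕ, ω₁ (ρ^[n] v) = 1 ∧ ω₂ (ρ^[n] v) = 1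
  eq_top_of_commutator_mem : ∀ Q : Subgroup A, (∀ v u, ⁅ω₁ v, ω₂ u⁆ ∈ Q) →
    (∀ v, ∀ x ∈ Q, ω₁ v * x * (ω₁ v)⁻¹ ∈ Q) → (∀ v, ∀ x ∈ Q, ω₂ v * x * (ω₂ v)⁻¹ ∈ Q) → Q = ⊤

variable {A V : Type*} [Group A] [Group V] {G : Type*} [Group G]

namespace SpinalDatum

variable (d : SpinalDatum A V)

lemma a₁_ne_one : d.a₁ ≠ 1 := fun h ↦ d.not_commute (h ▸ .one_left _)

lemma a₂_ne_one : d.a₂ ≠ 1 := fun h ↦ d.not_commute (h ▸ .one_right _)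

lemma a₁_ne_a₂ : d.a₁ ≠ d.a₂ := fun h ↦ d.not_commute (h ▸ .refl _)

end SpinalDatum

/-- Conjugation by `(t * ofA a)⁻¹`, which moves the group to its copy acting on the subtree `a`. -/
def copyHom {ι : Type*} (ofA : ι → G) (t : G) (a : ι) : G →* G :=
  (MulAut.conj (t * ofA a)⁻¹).toMonoidHom

lemma copyHom_apply {ι : Type*} (ofA : ι → G) (t : G) (a : ι) (x : G) :
    copyHom ofA t a x = (t * ofA a)⁻¹ * x * (t * ofA a) := by
  simp [copyHom, mul_assoc]

lemma mul_conj_of_commute {x p y : G} (h : Commute p y) :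
    x * p * y * (x * p)⁻¹ = x * y * x⁻¹ := by
  rw [mul_assoc x, h.eq]
  group

lemma commutatorElement_mul_mul_of_commute {x p y q : G} (hpy : Commute p y) (hpq : Commute p q)
    (hqx : Commute q x) : ⁅x * p, y * q⁆ = ⁅x, y⁆ :=
  calc ⁅x * p, y * q⁆ = x * p * y * (x * p)⁻¹ * (x * p * q * (x * p)⁻¹) * (y * q)⁻¹ := by
        rw [commutatorElement_def]
        group
    _ = ⁅x, y⁆ := by
        rw [mul_conj_of_commute hpy, mul_conj_of_commute hpq, hqx.symm.mul_inv_cancel]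
        rw [commutatorElement_def]
        group

/-- Homomorphisms `A → G`, `V → G` and an element `t : G` such that the `A`-indexed copies of the
images commute and the elements of `V` decompose as prescribed by `d`. -/
structure SpinalRep (d : SpinalDatum A V) (G : Type*) [Group G] where
  /-- The rooted elements. -/
  ofA : A →* G
  /-- The spinal elements. -/
  ofV : V →* G
  /-- The element conjugating the group into its copies. -/
  t : G
  commute_copyHom : ∀ x ∈ Set.range ofA ∪ Set.range ofV, ∀ y ∈ Set.range ofA ∪ Set.range ofV,
    ∀ a ≠ 1, Commute (copyHom ofA t 1 x) (copyHom ofA t a y)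
  ofV_eq : ∀ v, ofV v = copyHom ofA t 1 (ofV (d.ρ v)) * copyHom ofA t d.a₁ (ofA (d.ω₁ v)) *
    copyHom ofA t d.a₂ (ofA (d.ω₂ v))

namespace SpinalRep

variable {d : SpinalDatum A V} (φ : SpinalRep d G)

/-- The spinal group, generated by the images of `A` and `V`. -/
def base : Subgroup G := Subgroup.closure (Set.range φ.ofA ∪ Set.range φ.ofV)

/-- The copy of the ambient group at the subtree `a`. -/
abbrev copy (a : A) : G →* G := copyHom φ.ofA φ.t a

/-- The product of the copies of the spinal group at the subtrees in `S`. -/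
def copies (S : Set A) : Subgroup G := ⨆ a ∈ S, φ.base.map (φ.copy a)

lemma ofA_mem_base (a : A) : φ.ofA a ∈ φ.base := Subgroup.subset_closure (.inl ⟨a, rfl⟩)

lemma ofV_mem_base (v : V) : φ.ofV v ∈ φ.base := Subgroup.subset_closure (.inr ⟨v, rfl⟩)

variable {φ} in
lemma base_le_iff {H : Subgroup G} :
    φ.base ≤ H ↔ (∀ a, φ.ofA a ∈ H) ∧ ∀ v, φ.ofV v ∈ H := by
  simp only [base, Subgroup.closure_le, Set.union_subset_iff, Set.range_subset_iff, SetLike.mem_coe]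

lemma ofA_mul_copy_mul_inv (a c : A) (x : G) :
    φ.ofA c * φ.copy a x * (φ.ofA c)⁻¹ = φ.copy (a * c⁻¹) x := by
  simp only [copyHom_apply, map_mul, map_inv]
  group

lemma commute_copy {x y : G} (hx : x ∈ φ.base) (hy : y ∈ φ.base) {a b : A} (hab : a ≠ b) :
    Commute (φ.copy a x) (φ.copy b y) := by
  have hgen : ∀ x ∈ Set.range φ.ofA ∪ Set.range φ.ofV, ∀ y ∈ Set.range φ.ofA ∪ Set.range φ.ofV,
      Commute (φ.copy a x) (φ.copy b y) := by
    intro x hx y hy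
    have h := φ.commute_copyHom x hx y hy (b * a⁻¹) (mul_inv_eq_one.not.2 hab.symm)
    have hconj := h.map (MulAut.conj (φ.ofA a⁻¹))
    rw [MulAut.conj_apply, MulAut.conj_apply, ofA_mul_copy_mul_inv, ofA_mul_copy_mul_inv] at hconj
    simpa using hconj
  have hle : φ.base.map (φ.copy a) ≤ Subgroup.centralizer (φ.base.map (φ.copy b)) := by
    rw [base, MonoidHom.map_closure, MonoidHom.map_closure, Subgroup.closure_le,
      Subgroup.centralizer_closure]
    rintro _ ⟨x, hx, rfl⟩
    exact Subgroup.mem_centralizer_iff.2 (by rintro _ ⟨y, hy, rfl⟩; exact (hgen x hx y hy).symm)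
  exact (Subgroup.mem_centralizer_iff.1 (hle ⟨x, hx, rfl⟩) _ ⟨y, hy, rfl⟩).symm

variable {φ} in
lemma copy_mem_copies {x : G} (hx : x ∈ φ.base) {S : Set A} {a : A} (ha : a ∈ S) :
    φ.copy a x ∈ φ.copies S :=
  Subgroup.mem_iSup_of_mem a (Subgroup.mem_iSup_of_mem ha ⟨x, hx, rfl⟩)

variable {φ} in
lemma commute_of_mem_copies {S T : Set A} (hST : Disjoint S T) {x y : G} (hx : x ∈ φ.copies S)
    (hy : y ∈ φ.copies T) : Commute x y := by
  have hle : φ.copies S ≤ Subgroup.centralizer (φ.copies T) := by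
    refine iSup₂_le fun a ha ↦ Subgroup.le_centralizer_iff.1 (iSup₂_le fun b hb ↦ ?_)
    rintro _ ⟨y, hy, rfl⟩
    refine Subgroup.mem_centralizer_iff.2 ?_
    rintro _ ⟨x, hx, rfl⟩
    exact φ.commute_copy hx hy (hST.ne_of_mem ha hb)
  exact (Subgroup.mem_centralizer_iff.1 (hle hx) y hy).symm

lemma exists_ofV_eq_copy_mul (v : V) : ∃ p ∈ φ.copies {1, d.a₂},
    φ.ofV v = φ.copy d.a₁ (φ.ofA (d.ω₁ v)) * p := by
  refine ⟨φ.copy 1 (φ.ofV (d.ρ v)) * φ.copy d.a₂ (φ.ofA (d.ω₂ v)),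
    mul_mem (copy_mem_copies (φ.ofV_mem_base _) (by simp))
      (copy_mem_copies (φ.ofA_mem_base _) (by simp)), ?_⟩
  rw [φ.ofV_eq v, (φ.commute_copy (φ.ofV_mem_base _) (φ.ofA_mem_base _) d.a₁_ne_one.symm).eq,
    mul_assoc]

lemma exists_conj_ofV_eq_copy_mul (u : V) :
    ∃ q ∈ φ.copies {d.a₂⁻¹ * d.a₁, d.a₁ * (d.a₂⁻¹ * d.a₁)},
      φ.ofA (d.a₂⁻¹ * d.a₁)⁻¹ * φ.ofV u * (φ.ofA (d.a₂⁻¹ * d.a₁)⁻¹)⁻¹ =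
        φ.copy d.a₁ (φ.ofA (d.ω₂ u)) * q := by
  set z := d.a₂⁻¹ * d.a₁ with hz
  have hza₁ : z ≠ d.a₁ := fun h ↦ d.a₂_ne_one (by simpa [hz] using h)
  have ha₁z : d.a₁ * z ≠ d.a₁ := fun h ↦ d.a₁_ne_a₂ (by simpa [hz, inv_mul_eq_one, eq_comm] using h)
  have hdecomp : φ.ofA z⁻¹ * φ.ofV u * (φ.ofA z⁻¹)⁻¹ = φ.copy z (φ.ofV (d.ρ u)) *
      φ.copy (d.a₁ * z) (φ.ofA (d.ω₁ u)) * φ.copy d.a₁ (φ.ofA (d.ω₂ u)) := by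
    rw [φ.ofV_eq u, ← MulAut.conj_apply]
    simp only [map_mul, MulAut.conj_apply, ofA_mul_copy_mul_inv]
    simp [hz]
  refine ⟨φ.copy z (φ.ofV (d.ρ u)) * φ.copy (d.a₁ * z) (φ.ofA (d.ω₁ u)),
    mul_mem (copy_mem_copies (φ.ofV_mem_base _) (by simp))
      (copy_mem_copies (φ.ofA_mem_base _) (by simp)), hdecomp.trans ?_⟩
  exact ((φ.commute_copy (φ.ofV_mem_base _) (φ.ofA_mem_base _) hza₁).mul_left
    (φ.commute_copy (φ.ofA_mem_base _) (φ.ofA_mem_base _) ha₁z)).eq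

lemma commute_copy_a₁_of_mem_copies {p x : G} (hp : p ∈ φ.copies {1, d.a₂}) (hx : x ∈ φ.base) :
    Commute p (φ.copy d.a₁ x) := by
  refine commute_of_mem_copies ?_ hp (copy_mem_copies hx (Set.mem_singleton _))
  simp [d.a₁_ne_one, d.a₁_ne_a₂]

lemma commute_copy_a₁_of_mem_copies' {q x : G}
    (hq : q ∈ φ.copies {d.a₂⁻¹ * d.a₁, d.a₁ * (d.a₂⁻¹ * d.a₁)}) (hx : x ∈ φ.base) :
    Commute q (φ.copy d.a₁ x) := by
  refine commute_of_mem_copies ?_ hq (copy_mem_copies hx (Set.mem_singleton _))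
  simp [d.a₂_ne_one, inv_mul_eq_one, d.a₁_ne_a₂.symm]

lemma commute_of_mem_copies_of_mem_copies {p q : G} (hp : p ∈ φ.copies {1, d.a₂})
    (hq : q ∈ φ.copies {d.a₂⁻¹ * d.a₁, d.a₁ * (d.a₂⁻¹ * d.a₁)}) : Commute p q := by
  refine commute_of_mem_copies ?_ hp hq
  have h₁ : d.a₂⁻¹ * d.a₁ ≠ d.a₂ := fun h ↦ d.not_commute <| by
    rw [inv_mul_eq_iff_eq_mul.1 h]
    exact (Commute.refl _).mul_left (.refl _)
  have h₂ : d.a₁ * (d.a₂⁻¹ * d.a₁) ≠ 1 := fun h ↦ d.not_commute <| by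
    rw [mul_eq_one_iff_eq_inv', inv_mul_eq_iff_eq_mul, eq_mul_inv_iff_mul_eq] at h
    exact h ▸ (Commute.refl _).mul_right (.refl _)
  simp [h₁.symm, h₂, d.mul_inv_mul_ne.symm, inv_mul_eq_one, d.a₁_ne_a₂.symm, eq_comm]

lemma commutator_ofV_conj_ofV (v u : V) :
    ⁅φ.ofV v, φ.ofA (d.a₂⁻¹ * d.a₁)⁻¹ * φ.ofV u * (φ.ofA (d.a₂⁻¹ * d.a₁)⁻¹)⁻¹⁆ =
      φ.copy d.a₁ (φ.ofA ⁅d.ω₁ v, d.ω₂ u⁆) := by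
  obtain ⟨p, hp, hv⟩ := φ.exists_ofV_eq_copy_mul v
  obtain ⟨q, hq, hu⟩ := φ.exists_conj_ofV_eq_copy_mul u
  rw [hv, hu, map_commutatorElement, map_commutatorElement]
  exact commutatorElement_mul_mul_of_commute
    (φ.commute_copy_a₁_of_mem_copies hp (φ.ofA_mem_base _))
    (φ.commute_of_mem_copies_of_mem_copies hp hq)
    (φ.commute_copy_a₁_of_mem_copies' hq (φ.ofA_mem_base _))

lemma copy_a₁_ofA_mem_base (x : A) : φ.copy d.a₁ (φ.ofA x) ∈ φ.base := by
  suffices hQ : φ.base.comap ((φ.copy d.a₁).comp φ.ofA) = ⊤ from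
    (hQ ▸ Subgroup.mem_top x : x ∈ φ.base.comap ((φ.copy d.a₁).comp φ.ofA))
  have hconj : ∀ u, φ.ofA (d.a₂⁻¹ * d.a₁)⁻¹ * φ.ofV u * (φ.ofA (d.a₂⁻¹ * d.a₁)⁻¹)⁻¹ ∈ φ.base :=
    fun u ↦ mul_mem (mul_mem (φ.ofA_mem_base _) (φ.ofV_mem_base u)) (inv_mem (φ.ofA_mem_base _))
  refine d.eq_top_of_commutator_mem _ (fun v u ↦ ?_) (fun v x hx ↦ ?_) (fun u x hx ↦ ?_) <;>
    simp only [Subgroup.mem_comap, MonoidHom.comp_apply] at *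
  · rw [← φ.commutator_ofV_conj_ofV]
    exact mul_mem (mul_mem (mul_mem (φ.ofV_mem_base v) (hconj u)) (inv_mem (φ.ofV_mem_base v)))
      (inv_mem (hconj u))
  · obtain ⟨p, hp, hv⟩ := φ.exists_ofV_eq_copy_mul v
    have h := mul_mem (mul_mem (φ.ofV_mem_base v) hx) (inv_mem (φ.ofV_mem_base v))
    rw [hv, mul_conj_of_commute (φ.commute_copy_a₁_of_mem_copies hp (φ.ofA_mem_base _))] at h
    simpa only [map_mul, map_inv] using h
  · obtain ⟨q, hq, hu⟩ := φ.exists_conj_ofV_eq_copy_mul u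
    have h := mul_mem (mul_mem (hconj u) hx) (inv_mem (hconj u))
    rw [hu, mul_conj_of_commute (φ.commute_copy_a₁_of_mem_copies' hq (φ.ofA_mem_base _))] at h
    simpa only [map_mul, map_inv] using h

theorem copy_mem_base {x : G} (hx : x ∈ φ.base) (a : A) : φ.copy a x ∈ φ.base := by
  have move : ∀ {x : G} (a b : A), φ.copy a x ∈ φ.base → φ.copy b x ∈ φ.base := by
    intro x a b h
    have := φ.ofA_mul_copy_mul_inv a (b⁻¹ * a) x
    rw [mul_inv_rev, inv_inv, mul_inv_cancel_left] at this
    exact this ▸ mul_mem (mul_mem (φ.ofA_mem_base _) h) (inv_mem (φ.ofA_mem_base _))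
  have hA : ∀ x b, φ.copy b (φ.ofA x) ∈ φ.base := fun x b ↦ move d.a₁ b (φ.copy_a₁_ofA_mem_base x)
  have hV : ∀ v, φ.copy 1 (φ.ofV v) ∈ φ.base := by
    intro v
    have h := φ.ofV_eq (d.ρ.symm v)
    rw [MulEquiv.apply_symm_apply, ← mul_inv_eq_iff_eq_mul, ← mul_inv_eq_iff_eq_mul] at h
    exact h ▸ mul_mem (mul_mem (φ.ofV_mem_base _) (inv_mem (hA _ _))) (inv_mem (hA _ _))
  have hle : φ.base ≤ φ.base.comap (φ.copy a) :=
    base_le_iff.2 ⟨fun x ↦ hA x a, fun v ↦ move 1 a (hV v)⟩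
  exact hle hx

end SpinalRep

end Spinal

/-! ## Words in a spinal group and their sections -/

section Words

variable {A V : Type*}

/-- The number of letters from `V` in a word. -/
def countV (w : List (A ⊕ V)) : ℕ := w.countP Sum.isRight

/-- The number of letters from `A` in a word. -/
def countA (w : List (A ⊕ V)) : ℕ := w.countP Sum.isLeft

@[simp] lemma countV_nil : countV ([] : List (A ⊕ V)) = 0 := rfl

@[simp] lemma countA_nil : countA ([] : List (A ⊕ V)) = 0 := rfl

@[simp] lemma countV_inl_cons (a : A) (w : List (A ⊕ V)) : countV (.inl a :: w) = countV w := by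
  simp [countV]

@[simp] lemma countV_inr_cons (v : V) (w : List (A ⊕ V)) :
    countV (.inr v :: w) = countV w + 1 :=
  List.countP_cons_of_pos rfl

@[simp] lemma countA_inl_cons (a : A) (w : List (A ⊕ V)) :
    countA (.inl a :: w) = countA w + 1 :=
  List.countP_cons_of_pos rfl

@[simp] lemma countA_inr_cons (v : V) (w : List (A ⊕ V)) : countA (.inr v :: w) = countA w := by
  simp [countA]

@[simp] lemma countV_append (w w' : List (A ⊕ V)) : countV (w ++ w') = countV w + countV w' :=
  List.countP_append

@[simp] lemma countA_append (w w' : List (A ⊕ V)) : countA (w ++ w') = countA w + countA w' :=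
  List.countP_append

lemma countV_eq_zero_iff {w : List (A ⊕ V)} : countV w = 0 ↔ ∀ v, .inr v ∉ w := by
  simp [countV]

/-- A word in which two letters from `V` are adjacent. -/
def HasAdjacentV (w : List (A ⊕ V)) : Prop :=
  ∃ w₁ v v' w₂, w = w₁ ++ .inr v :: .inr v' :: w₂

lemma countV_le_of_not_hasAdjacentV {w : List (A ⊕ V)} (hw : ¬ HasAdjacentV w) :
    countV w ≤ countA w + countV (w.take 1) := by
  induction w with
  | nil => simp
  | cons x w ih =>
    have hw' : ¬ HasAdjacentV w := fun ⟨w₁, v, v', w₂, h⟩ ↦ hw ⟨x :: w₁, v, v', w₂, by simp [h]⟩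
    specialize ih hw'
    rcases x with a | v <;> rcases w with _ | ⟨b | v', w⟩
    case inr.cons.inr => exact absurd ⟨[], v, v', w, rfl⟩ hw
    all_goals simp at ih ⊢ <;> omega

/-- The product of the letters of a word that come from `A`: the permutation induced on the
level-one subtrees. -/
def topOf [Group A] (w : List (A ⊕ V)) : A := (w.map (Sum.elim id 1)).prod

section topOf

variable [Group A]

@[simp] lemma topOf_nil : topOf ([] : List (A ⊕ V)) = 1 := rfl

@[simp] lemma topOf_inl_cons (a : A) (w : List (A ⊕ V)) : topOf (.inl a :: w) = a * topOf w := by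
  simp [topOf]

@[simp] lemma topOf_inr_cons (v : V) (w : List (A ⊕ V)) : topOf (.inr v :: w) = topOf w := by
  simp [topOf]

lemma topOf_flatten_replicate (w : List (A ⊕ V)) (n : ℕ) :
    topOf (List.replicate n w).flatten = topOf w ^ n := by
  simp [topOf, List.prod_flatten, List.map_flatten]

end topOf

section labelWord

variable [One A] [DecidableEq A]

/-- The word of length at most one representing `a : A`. -/
def labelWord (a : A) : List (A ⊕ V) := if a = 1 then [] else [.inl a]

@[simp] lemma countV_labelWord (a : A) : countV (labelWord a : List (A ⊕ V)) = 0 := by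
  rw [labelWord]
  split_ifs <;> simp

lemma countA_labelWord (a : A) :
    countA (labelWord a : List (A ⊕ V)) = if a = 1 then 0 else 1 := by
  rw [labelWord]
  split_ifs <;> simp

end labelWord

namespace SpinalDatum

variable [Group A] [Group V] [DecidableEq A] (d : SpinalDatum A V)

/-- The action of the letter `v : V` on the subtree `b`, as a word of length at most one. -/
def letterSection (v : V) (b : A) : List (A ⊕ V) :=
  if b = 1 then [.inr (d.ρ v)] else if b = d.a₁ then labelWord (d.ω₁ v)
  else if b = d.a₂ then labelWord (d.ω₂ v) else []

/-- The action of a word on the subtree `b`, again as a word. -/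
def wordSection : List (A ⊕ V) → A → List (A ⊕ V)
  | [], _ => []
  | .inl a :: w, b => wordSection w (b * a)
  | .inr v :: w, b => d.letterSection v b ++ wordSection w b

/-- The number of letters of a word that come from `V` and have a nontrivial label. -/
def countLabelled (w : List (A ⊕ V)) : ℕ :=
  w.countP (Sum.elim (fun _ ↦ false) fun v ↦ ¬ (d.ω₁ v = 1 ∧ d.ω₂ v = 1))

/-- The orbit of `b` under right multiplication by the powers of `a`. -/
noncomputable def rightOrbit (b a : A) : Finset A :=
  (Finset.range (orderOf a)).image fun i ↦ b * a ^ i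

/-- The action on the subtree `b` of the least power of `w` fixing all level-one subtrees. -/
noncomputable def cycleSection (w : List (A ⊕ V)) (b : A) : List (A ⊕ V) :=
  (List.range (orderOf (topOf w))).flatMap fun i ↦ d.wordSection w (b * topOf w ^ i)

lemma wordSection_append (w w' : List (A ⊕ V)) (b : A) :
    d.wordSection (w ++ w') b = d.wordSection w b ++ d.wordSection w' (b * topOf w) := by
  induction w generalizing b with
  | nil => simp [wordSection]
  | cons x w ih => rcases x with a | v <;> simp [wordSection, ih, mul_assoc]

lemma wordSection_flatten_replicate_orderOf (w : List (A ⊕ V)) (b : A) :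
    d.wordSection (List.replicate (orderOf (topOf w)) w).flatten b = d.cycleSection w b := by
  rw [cycleSection]
  induction orderOf (topOf w) with
  | zero => rfl
  | succ n ih =>
    rw [List.replicate_succ', List.flatten_concat, wordSection_append, ih,
      topOf_flatten_replicate, List.range_succ, List.flatMap_append, List.flatMap_singleton]

lemma countV_letterSection (v : V) (b : A) :
    countV (d.letterSection v b) = if b = 1 then 1 else 0 := by
  rw [letterSection]
  split_ifs <;> simp

lemma sum_countV_letterSection (v : V) (C : Finset A) :
    ∑ b ∈ C, countV (d.letterSection v b) = if (1 : A) ∈ C then 1 else 0 := by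
  simp only [countV_letterSection, Finset.sum_ite_eq']

lemma sum_countA_letterSection_le (v : V) {C : Finset A} (hC : ¬ (d.a₁ ∈ C ∧ d.a₂ ∈ C)) :
    ∑ b ∈ C, countA (d.letterSection v b) ≤ if d.ω₁ v = 1 ∧ d.ω₂ v = 1 then 0 else 1 := by
  have hletter : ∀ b, countA (d.letterSection v b) =
      (if b = d.a₁ then countA (labelWord (d.ω₁ v) : List (A ⊕ V)) else 0) +
      (if b = d.a₂ then countA (labelWord (d.ω₂ v) : List (A ⊕ V)) else 0) := by
    intro b
    have := d.a₁_ne_one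
    have := d.a₂_ne_one
    have := d.a₁_ne_a₂
    rw [letterSection]
    split_ifs <;> simp_all
  rw [Finset.sum_congr rfl fun b _ ↦ hletter b, Finset.sum_add_distrib, Finset.sum_ite_eq',
    Finset.sum_ite_eq', countA_labelWord, countA_labelWord]
  split_ifs <;> simp_all

lemma sum_wordSection_inl_cons (F : List (A ⊕ V) → ℕ) (a : A) (w : List (A ⊕ V)) (C : Finset A) :
    ∑ b ∈ C, F (d.wordSection (.inl a :: w) b) =
      ∑ b ∈ C.image (· * a), F (d.wordSection w b) := by
  rw [Finset.sum_image fun _ _ _ _ h ↦ mul_right_cancel h]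
  rfl

lemma sum_countV_wordSection_inr_cons (v : V) (w : List (A ⊕ V)) (C : Finset A) :
    ∑ b ∈ C, countV (d.wordSection (.inr v :: w) b) =
      (if (1 : A) ∈ C then 1 else 0) + ∑ b ∈ C, countV (d.wordSection w b) := by
  simp only [wordSection, countV_append, Finset.sum_add_distrib, sum_countV_letterSection]

lemma sum_countV_wordSection_le (w : List (A ⊕ V)) (C : Finset A) :
    ∑ b ∈ C, countV (d.wordSection w b) ≤ countV w := by
  induction w generalizing C with
  | nil => simp [wordSection]
  | cons x w ih =>
    rcases x with a | v
    · rw [sum_wordSection_inl_cons, countV_inl_cons]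
      exact ih _
    · rw [sum_countV_wordSection_inr_cons, countV_inr_cons]
      have := ih C
      split_ifs <;> omega

variable {d} in
lemma one_mem_and_sum_countV_eq_of_inr_cons {v : V} {w : List (A ⊕ V)} {C : Finset A}
    (h : ∑ b ∈ C, countV (d.wordSection (.inr v :: w) b) = countV (.inr v :: w)) :
    (1 : A) ∈ C ∧ ∑ b ∈ C, countV (d.wordSection w b) = countV w := by
  rw [sum_countV_wordSection_inr_cons, countV_inr_cons] at h
  have := d.sum_countV_wordSection_le w C
  split_ifs at h with h1
  · exact ⟨h1, by omega⟩
  · omega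

lemma countLabelled_inr_cons (v : V) (w : List (A ⊕ V)) : d.countLabelled (.inr v :: w) =
    (if d.ω₁ v = 1 ∧ d.ω₂ v = 1 then 0 else 1) + d.countLabelled w := by
  rw [countLabelled, List.countP_cons, add_comm, countLabelled]
  congr 1
  by_cases h : d.ω₁ v = 1 ∧ d.ω₂ v = 1 <;> simp [h]

lemma sum_countA_wordSection_le {w : List (A ⊕ V)} {C : Finset A}
    (hC : ∀ b ∈ C, ¬ (d.a₁ * b ∈ C ∧ d.a₂ * b ∈ C))
    (h : ∑ b ∈ C, countV (d.wordSection w b) = countV w) :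
    ∑ b ∈ C, countA (d.wordSection w b) ≤ d.countLabelled w := by
  induction w generalizing C with
  | nil => simp [wordSection]
  | cons x w ih =>
    rcases x with a | v
    · rw [sum_wordSection_inl_cons, countV_inl_cons] at h
      rw [sum_wordSection_inl_cons]
      refine (ih (fun b hb ↦ ?_) h).trans_eq (by simp [countLabelled])
      obtain ⟨c, hc, rfl⟩ := Finset.mem_image.1 hb
      simpa [← mul_assoc] using hC c hc
    · obtain ⟨h1, hw⟩ := one_mem_and_sum_countV_eq_of_inr_cons h
      have hletter := d.sum_countA_letterSection_le v (by simpa using hC 1 h1)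
      simp only [wordSection, countA_append, Finset.sum_add_distrib]
      exact (add_le_add hletter (ih hC hw)).trans_eq (d.countLabelled_inr_cons v w).symm

variable {d} in
lemma exists_inr_mem_wordSection {w : List (A ⊕ V)} {C : Finset A}
    (h : ∑ b ∈ C, countV (d.wordSection w b) = countV w) {v : V} (hv : .inr v ∈ w) :
    ∃ b ∈ C, .inr (d.ρ v) ∈ d.wordSection w b := by
  induction w generalizing C with
  | nil => simp at hv
  | cons x w ih =>
    rcases x with a | v'
    · rw [sum_wordSection_inl_cons, countV_inl_cons] at h
      obtain ⟨_, hc, hmem⟩ := ih h (by simpa using hv)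
      obtain ⟨b, hb, rfl⟩ := Finset.mem_image.1 hc
      exact ⟨b, hb, hmem⟩
    · obtain ⟨h1, hw⟩ := one_mem_and_sum_countV_eq_of_inr_cons h
      rcases List.mem_cons.1 hv with hv | hv
      · cases hv
        exact ⟨1, h1, by simp [wordSection, letterSection]⟩
      · obtain ⟨b, hb, hmem⟩ := ih hw hv
        exact ⟨b, hb, by simp [wordSection, hmem]⟩

lemma countLabelled_lt {w : List (A ⊕ V)} {v : V} (hv : .inr v ∈ w) (h₁ : d.ω₁ v = 1)
    (h₂ : d.ω₂ v = 1) : d.countLabelled w < countV w := by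
  have hle : ∀ w, d.countLabelled w ≤ countV w := fun w ↦
    List.countP_mono_left (by rintro (a | v) _ h <;> simp_all)
  obtain ⟨w₁, w₂, rfl⟩ := List.append_of_mem hv
  have := hle w₁
  have := hle w₂
  have : d.countLabelled (w₁ ++ .inr v :: w₂) = d.countLabelled w₁ + d.countLabelled w₂ := by
    simp [countLabelled, h₁, h₂]
  rw [countV_append, countV_inr_cons]
  omega

lemma sum_rightOrbit (F : A → ℕ) (b a : A) :
    ∑ x ∈ rightOrbit b a, F x = ∑ i ∈ Finset.range (orderOf a), F (b * a ^ i) := by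
  refine Finset.sum_image fun i hi j hj h ↦ ?_
  exact pow_injOn_Iio_orderOf (by simpa using hi) (by simpa using hj) (mul_left_cancel h)

-- If `c * x` lies in the orbit of `x`, then `b⁻¹ * c * b` is a power of `a`.
lemma not_mem_rightOrbit_and_mem_rightOrbit {a b x : A} (hx : x ∈ rightOrbit b a) :
    ¬ (d.a₁ * x ∈ rightOrbit b a ∧ d.a₂ * x ∈ rightOrbit b a) := by
  have hconj : ∀ c, c * x ∈ rightOrbit b a → ∃ n : ℤ, c = MulAut.conj b (a ^ n) := by
    intro c hc
    obtain ⟨i, -, rfl⟩ := Finset.mem_image.1 hx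
    obtain ⟨j, -, hj⟩ := Finset.mem_image.1 hc
    refine ⟨j - i, ?_⟩
    rw [eq_mul_inv_of_mul_eq hj.symm, MulAut.conj_apply, zpow_sub, zpow_natCast, zpow_natCast]
    group
  rintro ⟨h₁, h₂⟩
  obtain ⟨m, hm⟩ := hconj _ h₁
  obtain ⟨n, hn⟩ := hconj _ h₂
  refine d.not_commute ?_
  rw [hm, hn]
  exact (Commute.zpow_zpow_self a m n).map (MulAut.conj b)

lemma countV_cycleSection (w : List (A ⊕ V)) (b : A) :
    countV (d.cycleSection w b) = ∑ x ∈ rightOrbit b (topOf w), countV (d.wordSection w x) := by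
  rw [sum_rightOrbit fun x ↦ countV (d.wordSection w x), cycleSection, countV, List.countP_flatMap]
  rfl

lemma countA_cycleSection (w : List (A ⊕ V)) (b : A) :
    countA (d.cycleSection w b) = ∑ x ∈ rightOrbit b (topOf w), countA (d.wordSection w x) := by
  rw [sum_rightOrbit fun x ↦ countA (d.wordSection w x), cycleSection, countA, List.countP_flatMap]
  rfl

lemma countV_cycleSection_le (w : List (A ⊕ V)) (b : A) :
    countV (d.cycleSection w b) ≤ countV w :=
  (d.countV_cycleSection w b).trans_le (d.sum_countV_wordSection_le w _)

variable {d} in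
lemma countA_cycleSection_lt {w : List (A ⊕ V)} {b : A}
    (h : countV (d.cycleSection w b) = countV w) {v : V} (hv : .inr v ∈ w) (h₁ : d.ω₁ v = 1)
    (h₂ : d.ω₂ v = 1) : countA (d.cycleSection w b) < countV (d.cycleSection w b) := by
  rw [h, countA_cycleSection]
  rw [countV_cycleSection] at h
  exact (d.sum_countA_wordSection_le (fun _ ↦ d.not_mem_rightOrbit_and_mem_rightOrbit) h).trans_lt
    (d.countLabelled_lt hv h₁ h₂)

variable {d} in
lemma inr_mem_cycleSection {w : List (A ⊕ V)} {b : A}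
    (h : countV (d.cycleSection w b) = countV w) {v : V} (hv : .inr v ∈ w) :
    .inr (d.ρ v) ∈ d.cycleSection w b := by
  rw [countV_cycleSection] at h
  obtain ⟨x, hx, hmem⟩ := exists_inr_mem_wordSection h hv
  obtain ⟨i, hi, rfl⟩ := Finset.mem_image.1 hx
  exact List.mem_flatMap.2 ⟨i, by simpa using hi, hmem⟩

end SpinalDatum

end Words

section Words

variable {A V G : Type*} [Group A] [Group V] [Group G] {d : SpinalDatum A V} (φ : SpinalRep d G)

namespace SpinalRep

/-- The element of the spinal group represented by a letter. -/
def letter : A ⊕ V → φ.base :=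
  Sum.elim (fun a ↦ ⟨φ.ofA a, φ.ofA_mem_base a⟩) fun v ↦ ⟨φ.ofV v, φ.ofV_mem_base v⟩

/-- The element of the spinal group represented by a word. -/
def eval (w : List (A ⊕ V)) : φ.base := (w.map φ.letter).prod

@[simp] lemma coe_letter_inl (a : A) : (φ.letter (.inl a) : G) = φ.ofA a := rfl

@[simp] lemma coe_letter_inr (v : V) : (φ.letter (.inr v) : G) = φ.ofV v := rfl

@[simp] lemma eval_nil : φ.eval [] = 1 := rfl

@[simp] lemma eval_cons (x : A ⊕ V) (w : List (A ⊕ V)) :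
    φ.eval (x :: w) = φ.letter x * φ.eval w := by
  simp [eval]

@[simp] lemma eval_append (w w' : List (A ⊕ V)) : φ.eval (w ++ w') = φ.eval w * φ.eval w' := by
  simp [eval]

lemma eval_flatten_replicate (w : List (A ⊕ V)) (n : ℕ) :
    φ.eval (List.replicate n w).flatten = φ.eval w ^ n := by
  simp [eval, List.map_flatten, List.prod_flatten]

@[simp] lemma eval_labelWord [DecidableEq A] (a : A) :
    φ.eval (labelWord a) = φ.letter (.inl a) := by
  rw [labelWord]
  split_ifs with h
  · exact Subtype.ext (by simp [h])
  · simp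

lemma exists_eval_eq (x : φ.base) : ∃ w, φ.eval w = x := by
  obtain ⟨x, hx⟩ := x
  induction hx using Subgroup.closure_induction_left with
  | one => exact ⟨[], rfl⟩
  | mul_left x hx y hy ih =>
    obtain ⟨w, hw⟩ := ih
    rcases hx with ⟨a, rfl⟩ | ⟨v, rfl⟩
    · exact ⟨.inl a :: w, Subtype.ext (by simp [hw])⟩
    · exact ⟨.inr v :: w, Subtype.ext (by simp [hw])⟩
  | inv_mul_cancel x hx y hy ih =>
    obtain ⟨w, hw⟩ := ih
    rcases hx with ⟨a, rfl⟩ | ⟨v, rfl⟩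
    · exact ⟨.inl a⁻¹ :: w, Subtype.ext (by simp [hw])⟩
    · exact ⟨.inr v⁻¹ :: w, Subtype.ext (by simp [hw])⟩

lemma coe_eval_of_countV_eq_zero {w : List (A ⊕ V)} (h : countV w = 0) :
    (φ.eval w : G) = φ.ofA (topOf w) := by
  induction w with
  | nil => simp
  | cons x w ih => rcases x with a | v <;> simp_all

section assemble

variable [Fintype A]

/-- The element acting on each level-one subtree `a` as `g a`. -/
def assemble : (A → φ.base) →* G :=
  MonoidHom.noncommPiCoprod (fun a ↦ (φ.copy a).comp φ.base.subtype)
    fun _ _ hab x y ↦ φ.commute_copy x.2 y.2 hab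

lemma assemble_mulSingle [DecidableEq A] (a : A) (x : φ.base) :
    φ.assemble (Pi.mulSingle a x) = φ.copy a x :=
  MonoidHom.noncommPiCoprod_mulSingle _ _ _

lemma ofA_mul_assemble_mul_inv (a : A) (g : A → φ.base) :
    φ.ofA a * φ.assemble g * (φ.ofA a)⁻¹ = φ.assemble fun b ↦ g (b * a) := by
  classical
  let shift : (A → φ.base) →* (A → φ.base) := MonoidHom.pi fun b ↦ Pi.evalMonoidHom _ (b * a)
  suffices h : (MulAut.conj (φ.ofA a)).toMonoidHom.comp φ.assemble = φ.assemble.comp shift from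
    DFunLike.congr_fun h g
  refine MonoidHom.pi_ext fun b x ↦ ?_
  have hshift : shift (Pi.mulSingle b x) = Pi.mulSingle (b * a⁻¹) x := by
    funext c
    simp [shift, MonoidHom.pi, Pi.mulSingle_apply, eq_mul_inv_iff_mul_eq]
  rw [MonoidHom.comp_apply, MonoidHom.comp_apply, hshift, assemble_mulSingle, assemble_mulSingle]
  exact φ.ofA_mul_copy_mul_inv b a x

lemma assemble_eval_letterSection [DecidableEq A] (v : V) :
    φ.assemble (fun b ↦ φ.eval (d.letterSection v b)) = φ.ofV v := by
  have hsections : (fun b ↦ φ.eval (d.letterSection v b)) =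
      Pi.mulSingle 1 (φ.letter (.inr (d.ρ v))) * Pi.mulSingle d.a₁ (φ.letter (.inl (d.ω₁ v))) *
        Pi.mulSingle d.a₂ (φ.letter (.inl (d.ω₂ v))) := by
    funext b
    have := d.a₁_ne_one
    have := d.a₂_ne_one
    have := d.a₁_ne_a₂
    simp only [Pi.mul_apply, Pi.mulSingle_apply, SpinalDatum.letterSection]
    split_ifs <;> simp_all
  rw [hsections, map_mul, map_mul, assemble_mulSingle, assemble_mulSingle, assemble_mulSingle]
  exact (φ.ofV_eq v).symm

lemma coe_eval_eq_assemble_mul [DecidableEq A] (w : List (A ⊕ V)) :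
    (φ.eval w : G) = φ.assemble (fun b ↦ φ.eval (d.wordSection w b)) * φ.ofA (topOf w) := by
  induction w with
  | nil => simp [SpinalDatum.wordSection, ← Pi.one_def]
  | cons x w ih =>
    rcases x with a | v
    · simp only [SpinalDatum.wordSection, ← φ.ofA_mul_assemble_mul_inv a fun _ ↦ φ.eval _,
        eval_cons, Subgroup.coe_mul, ih, coe_letter_inl, topOf_inl_cons, map_mul]
      group
    · have hsections : (fun b ↦ φ.eval (d.wordSection (.inr v :: w) b)) =
          (fun b ↦ φ.eval (d.letterSection v b)) * fun b ↦ φ.eval (d.wordSection w b) := by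
        funext b
        simp [SpinalDatum.wordSection]
      rw [hsections, map_mul, assemble_eval_letterSection, topOf_inr_cons, mul_assoc, ← ih,
        eval_cons, Subgroup.coe_mul, coe_letter_inr]

end assemble

lemma isOfFinOrder_eval_of_cycleSection [Finite A] [DecidableEq A] {w : List (A ⊕ V)}
    (h : ∀ b, IsOfFinOrder (φ.eval (d.cycleSection w b))) : IsOfFinOrder (φ.eval w) := by
  have := Fintype.ofFinite A
  have hpow : ((φ.eval w ^ orderOf (topOf w) : φ.base) : G) =
      φ.assemble fun b ↦ φ.eval (d.cycleSection w b) := by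
    rw [← eval_flatten_replicate, coe_eval_eq_assemble_mul, topOf_flatten_replicate,
      pow_orderOf_eq_one, map_one, mul_one]
    simp only [SpinalDatum.wordSection_flatten_replicate_orderOf]
  have hfin : IsOfFinOrder (φ.eval w ^ orderOf (topOf w)) :=
    Submonoid.isOfFinOrder_coe.1 (hpow ▸ φ.assemble.isOfFinOrder (IsOfFinOrder.pi h))
  exact (isOfFinOrder_pow.1 hfin).resolve_right (orderOf_pos _).ne'

variable {φ} in
lemma isOfFinOrder_eval_of_hasAdjacentV {w : List (A ⊕ V)} (hw : HasAdjacentV w)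
    (ih : ∀ w', countV w' < countV w → IsOfFinOrder (φ.eval w')) : IsOfFinOrder (φ.eval w) := by
  obtain ⟨w₁, v, v', w₂, rfl⟩ := hw
  convert ih (w₁ ++ .inr (v * v') :: w₂) (by simp) using 1
  exact Subtype.ext (by simp [mul_assoc])

variable {φ} in
lemma isOfFinOrder_eval_of_countA_lt [Finite V] {w : List (A ⊕ V)} (hw : countA w < countV w)
    (ih : ∀ w', countV w' < countV w → IsOfFinOrder (φ.eval w')) : IsOfFinOrder (φ.eval w) := by
  by_cases hadj : HasAdjacentV w
  · exact isOfFinOrder_eval_of_hasAdjacentV hadj ih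
  have hcount := countV_le_of_not_hasAdjacentV hadj
  rcases w with _ | ⟨a | v, w⟩
  · simp at hw
  · simp at hw hcount
    omega
  have hconj : IsConj (φ.eval (w ++ [.inr v])) (φ.eval (.inr v :: w)) :=
    isConj_iff.2 ⟨φ.letter (.inr v), by simp [mul_assoc]⟩
  by_cases hadj' : HasAdjacentV (w ++ [.inr v])
  · exact hconj.isOfFinOrder (isOfFinOrder_eval_of_hasAdjacentV hadj' (by simpa using ih))
  have hcount' := countV_le_of_not_hasAdjacentV hadj'
  rcases w with _ | ⟨a | v', w⟩
  · refine Submonoid.isOfFinOrder_coe.1 ?_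
    simpa using φ.ofV.isOfFinOrder (isOfFinOrder_of_finite v)
  · simp at hw hcount'
    omega
  · exact absurd ⟨[], v, v', w, rfl⟩ hadj

variable {φ} in
-- Passing to the cycle sections `m` times turns `v` into `ρ^[m] v`, whose labels are trivial; there
-- the letters from `A` are outnumbered, so two letters from `V` merge.
lemma isOfFinOrder_eval_of_inr_mem [Finite A] [Finite V] {k : ℕ}
    (ih : ∀ w, countV w < k → IsOfFinOrder (φ.eval w)) (m : ℕ) {w : List (A ⊕ V)}
    (hw : countV w = k) {v : V} (hv : .inr v ∈ w) (h₁ : d.ω₁ (d.ρ^[m] v) = 1)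
    (h₂ : d.ω₂ (d.ρ^[m] v) = 1) : IsOfFinOrder (φ.eval w) := by
  classical
  induction m generalizing w v with
  | zero =>
    refine φ.isOfFinOrder_eval_of_cycleSection fun b ↦ ?_
    rcases (d.countV_cycleSection_le w b).lt_or_eq with hlt | heq
    · exact ih _ (hw ▸ hlt)
    · exact isOfFinOrder_eval_of_countA_lt (SpinalDatum.countA_cycleSection_lt heq hv h₁ h₂)
        (by rwa [heq, hw])
  | succ m ihm =>
    refine φ.isOfFinOrder_eval_of_cycleSection fun b ↦ ?_
    rcases (d.countV_cycleSection_le w b).lt_or_eq with hlt | heq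
    · exact ih _ (hw ▸ hlt)
    · exact ihm (heq.trans hw) (SpinalDatum.inr_mem_cycleSection heq hv) h₁ h₂

lemma isOfFinOrder_eval [Finite A] [Finite V] (w : List (A ⊕ V)) : IsOfFinOrder (φ.eval w) := by
  induction hk : countV w using Nat.strong_induction_on generalizing w with
  | _ k ih =>
    by_cases h : ∃ v, .inr v ∈ w
    · obtain ⟨v, hv⟩ := h
      obtain ⟨m, h₁, h₂⟩ := d.exists_iterate_eq_one v
      exact isOfFinOrder_eval_of_inr_mem (fun w hw ↦ ih _ hw w rfl) m hk hv h₁ h₂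
    · rw [← Submonoid.isOfFinOrder_coe]
      have := φ.coe_eval_of_countV_eq_zero (countV_eq_zero_iff.2 (not_exists.1 h))
      exact this ▸ φ.ofA.isOfFinOrder (isOfFinOrder_of_finite _)

theorem isOfFinOrder_of_mem_base [Finite A] [Finite V] {x : G} (hx : x ∈ φ.base) :
    IsOfFinOrder x := by
  obtain ⟨w, hw⟩ := φ.exists_eval_eq ⟨x, hx⟩
  simpa [hw] using (Submonoid.isOfFinOrder_coe (H := φ.base.toSubmonoid)).2 (φ.isOfFinOrder_eval w)

end SpinalRep

end Words

/-! ## The ambient group and its parabolic subgroup -/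

section Ambient

variable {A V G : Type*} [Group G]

/-- Generators of the parabolic subgroup: `t`, the spinal elements, and the copies of the rooted and
spinal elements at the subtrees off the spine. -/
def parabolicGenerators [One A] (ofA : A → G) (ofV : V → G) (t : G) : Set G :=
  insert t (Set.range ofV) ∪
    ⋃ a ∈ ({1}ᶜ : Set A), copyHom ofA t a '' (Set.range ofA ∪ Set.range ofV)

namespace SpinalRep

variable [Group A] [Group V] {d : SpinalDatum A V} (φ : SpinalRep d G)

/-- The group generated by the spinal group and `t`. -/
def ambient : Subgroup G := Subgroup.closure (insert φ.t (Set.range φ.ofA ∪ Set.range φ.ofV))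

/-- The subgroup of the ambient group generated by `t`, the spinal elements, and the copies of the
spinal group off the spine. -/
def parabolic : Subgroup G := Subgroup.closure (parabolicGenerators φ.ofA φ.ofV φ.t)

lemma base_le_ambient : φ.base ≤ φ.ambient := Subgroup.closure_mono (Set.subset_insert _ _)

lemma t_mem_ambient : φ.t ∈ φ.ambient := Subgroup.subset_closure (Set.mem_insert _ _)

lemma parabolicGenerators_subset_ambient :
    parabolicGenerators φ.ofA φ.ofV φ.t ⊆ φ.ambient := by
  have hbase : Set.range φ.ofA ∪ Set.range φ.ofV ⊆ φ.ambient :=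
    (Set.subset_insert _ _).trans Subgroup.subset_closure
  refine Set.union_subset (Set.insert_subset φ.t_mem_ambient (Set.subset_union_right.trans hbase))
    (Set.iUnion₂_subset fun a _ ↦ ?_)
  rintro _ ⟨x, hx, rfl⟩
  have hta : φ.t * φ.ofA a ∈ φ.ambient := mul_mem φ.t_mem_ambient (hbase (.inl ⟨a, rfl⟩))
  rw [copyHom_apply]
  exact mul_mem (mul_mem (inv_mem hta) (hbase hx)) hta

lemma t_mem_parabolic : φ.t ∈ φ.parabolic := Subgroup.subset_closure (.inl (.inl rfl))

lemma ofV_mem_parabolic (v : V) : φ.ofV v ∈ φ.parabolic :=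
  Subgroup.subset_closure (.inl (.inr ⟨v, rfl⟩))

variable {φ} in
lemma copy_mem_parabolic {x : G} (hx : x ∈ φ.base) {a : A} (ha : a ≠ 1) :
    φ.copy a x ∈ φ.parabolic := by
  have hle : φ.base ≤ φ.parabolic.comap (φ.copy a) :=
    (Subgroup.closure_le _).2 fun y hy ↦
      Subgroup.subset_closure (.inr (Set.mem_biUnion (by simpa using ha) ⟨y, hy, rfl⟩))
  exact hle hx

lemma copy_one (x : G) : φ.copy 1 x = φ.t⁻¹ * x * φ.t := by simp [copyHom_apply]

variable {φ} in
lemma pow_inv_mul_mul_pow_mem_base {x : G} (hx : x ∈ φ.base) (n : ℕ) :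
    (φ.t ^ n)⁻¹ * x * φ.t ^ n ∈ φ.base := by
  induction n with
  | zero => simpa using hx
  | succ n ih =>
    convert φ.copy_mem_base ih 1 using 1
    rw [copy_one, pow_succ]
    group

lemma exists_eq_pow_mul_mul_pow_inv {g : G} (hg : g ∈ φ.ambient) :
    ∃ i j : ℕ, ∃ x ∈ φ.base, g = φ.t ^ i * x * (φ.t ^ j)⁻¹ := by
  have hbase : ∀ y ∈ φ.base, ∀ g, (∃ i j : ℕ, ∃ x ∈ φ.base, g = φ.t ^ i * x * (φ.t ^ j)⁻¹) →
      ∃ i j : ℕ, ∃ x ∈ φ.base, y * g = φ.t ^ i * x * (φ.t ^ j)⁻¹ := by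
    rintro y hy g ⟨i, j, x, hx, rfl⟩
    exact ⟨i, j, _, mul_mem (pow_inv_mul_mul_pow_mem_base hy i) hx, by group⟩
  induction hg using Subgroup.closure_induction_left with
  | one => exact ⟨0, 0, 1, one_mem _, by simp⟩
  | mul_left y hy g _ ih =>
    rcases hy with rfl | hy
    · obtain ⟨i, j, x, hx, rfl⟩ := ih
      exact ⟨i + 1, j, x, hx, by rw [pow_succ']; group⟩
    · exact hbase y (Subgroup.subset_closure hy) g ih
  | inv_mul_cancel y hy g _ ih =>
    rcases hy with rfl | hy
    · obtain ⟨i, j, x, hx, rfl⟩ := ih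
      cases i with
      | zero => exact ⟨0, j + 1, _, φ.copy_mem_base hx 1, by rw [copy_one, pow_succ]; group⟩
      | succ i => exact ⟨i, j, x, hx, by rw [pow_succ']; group⟩
    · exact hbase _ (inv_mem (Subgroup.subset_closure hy)) g ih

theorem isOfFinOrder_of_mem_ambient [Finite A] [Finite V] {χ : G →* Multiplicative ℤ}
    (hbase : φ.base ≤ χ.ker) (ht : χ φ.t = .ofAdd 1) {g : G} (hg : g ∈ φ.ambient)
    (h : χ g = 1) : IsOfFinOrder g := by
  obtain ⟨i, j, x, hx, rfl⟩ := φ.exists_eq_pow_mul_mul_pow_inv hg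
  have hx1 : χ x = 1 := hbase hx
  obtain rfl : i = j := by
    rw [map_mul, map_mul, map_inv, map_pow, map_pow, hx1, ht, mul_one, mul_inv_eq_one] at h
    simpa using congrArg Multiplicative.toAdd h
  exact (isConj_iff.2 ⟨φ.t ^ i, rfl⟩ : IsConj x _).isOfFinOrder (φ.isOfFinOrder_of_mem_base hx)

lemma assemble_mem_parabolic [Fintype A] {g : A → φ.base} (h1 : g 1 = 1) :
    φ.assemble g ∈ φ.parabolic := by
  classical
  suffices h : g ∈ φ.parabolic.comap φ.assemble from h
  refine Subgroup.pi_mem_of_mulSingle_mem g fun b ↦ ?_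
  rw [Subgroup.mem_comap, assemble_mulSingle]
  rcases eq_or_ne b 1 with rfl | hb
  · simp [h1]
  · exact copy_mem_parabolic (g b).2 hb

lemma exists_coe_eval_eq_mul_copy_one_mul [Finite A] [DecidableEq A] (w : List (A ⊕ V)) :
    ∃ p ∈ φ.parabolic,
      (φ.eval w : G) = p * φ.copy 1 (φ.eval (d.wordSection w 1)) * φ.ofA (topOf w) := by
  have := Fintype.ofFinite A
  set g : A → φ.base := fun b ↦ φ.eval (d.wordSection w b) with hg
  have hsplit : g = Function.update g 1 1 * Pi.mulSingle 1 (g 1) := by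
    funext b
    rcases eq_or_ne b 1 with rfl | hb <;> simp [*]
  refine ⟨_, φ.assemble_mem_parabolic (Function.update_self 1 1 g), ?_⟩
  rw [← φ.assemble_mulSingle, ← map_mul, ← hsplit, coe_eval_eq_assemble_mul]

lemma exists_coe_eval_eq_of_countV_wordSection_eq [DecidableEq A] {w : List (A ⊕ V)} {b : A}
    (h : countV (d.wordSection w b) = countV w) :
    ∃ v, (φ.eval w : G) = φ.ofA b⁻¹ * φ.ofV v * φ.ofA (b * topOf w) := by
  induction w generalizing b with
  | nil => exact ⟨1, by simp⟩
  | cons x w ih =>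
    rcases x with a | v
    · obtain ⟨v, hv⟩ := ih (b := b * a) (by simpa [SpinalDatum.wordSection] using h)
      exact ⟨v, by simp [hv, mul_assoc]⟩
    · obtain ⟨h1, hw⟩ := SpinalDatum.one_mem_and_sum_countV_eq_of_inr_cons (d := d) (C := {b})
        (by simpa using h)
      obtain rfl : 1 = b := by simpa using h1
      obtain ⟨u, hu⟩ := ih (by simpa using hw)
      exact ⟨v * u, by simp [hu, mul_assoc]⟩

lemma exists_coe_eval_mem_doubleCoset [Finite A] (w : List (A ⊕ V)) :
    ∃ a, (φ.eval w : G) ∈ DoubleCoset.doubleCoset (φ.ofA a) φ.parabolic φ.parabolic := by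
  classical
  induction hk : countV w using Nat.strong_induction_on generalizing w with
  | _ k ih =>
    obtain ⟨p, hp, hw⟩ := φ.exists_coe_eval_eq_mul_copy_one_mul w
    simp only [DoubleCoset.mem_doubleCoset, SetLike.mem_coe] at ih ⊢
    by_cases htop : topOf w = 1
    · have hle := d.sum_countV_wordSection_le w {1}
      rw [Finset.sum_singleton] at hle
      rcases hle.lt_or_eq with hlt | heq
      · obtain ⟨a, x, hx, y, hy, hxy⟩ := ih _ (hk ▸ hlt) _ rfl
        refine ⟨a, p * φ.t⁻¹ * x, mul_mem (mul_mem hp (inv_mem φ.t_mem_parabolic)) hx, y * φ.t,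
          mul_mem hy φ.t_mem_parabolic, ?_⟩
        rw [hw, htop, map_one, copy_one, hxy]
        group
      · obtain ⟨v, hv⟩ := φ.exists_coe_eval_eq_of_countV_wordSection_eq heq
        exact ⟨1, φ.ofV v, φ.ofV_mem_parabolic v, 1, one_mem _, by simp [hv, htop]⟩
    · refine ⟨topOf w, p, hp, _,
        copy_mem_parabolic (φ.eval (d.wordSection w 1)).2 htop, hw.trans ?_⟩
      have := φ.ofA_mul_copy_mul_inv (topOf w) (topOf w) (φ.eval (d.wordSection w 1))
      rw [mul_inv_cancel] at this
      rw [← this]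
      group

theorem exists_mem_doubleCoset_of_mem_ambient [Finite A] {g : G} (hg : g ∈ φ.ambient) :
    ∃ a, g ∈ DoubleCoset.doubleCoset (φ.ofA a) φ.parabolic φ.parabolic := by
  obtain ⟨i, j, x, hx, rfl⟩ := φ.exists_eq_pow_mul_mul_pow_inv hg
  obtain ⟨w, hw⟩ := φ.exists_eval_eq ⟨x, hx⟩
  obtain ⟨a, ha⟩ := φ.exists_coe_eval_mem_doubleCoset w
  simp only [DoubleCoset.mem_doubleCoset, SetLike.mem_coe, hw] at ha ⊢
  obtain ⟨p, hp, q, hq, rfl⟩ := ha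
  exact ⟨a, φ.t ^ i * p, mul_mem (pow_mem φ.t_mem_parabolic _) hp, q * (φ.t ^ j)⁻¹,
    mul_mem hq (inv_mem (pow_mem φ.t_mem_parabolic _)), by group⟩

end SpinalRep

end Ambient

/-! ## Conjugates of a finite Steinberg group -/

section RootMap

variable {G H : Type*} [Group G] [Group H]

/-- The image of a root family under a homomorphism. -/
def rootMap (ψ : H →* G) (f : RootFamily H) : RootFamily G := fun i j ↦ ψ (f i j)

/-- The conjugate of a root family by a group element. -/
def rootConj (g : G) : RootFamily G → RootFamily G := rootMap (MulAut.conj g).toMonoidHom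

lemma RootCompatible.map {f g : RootFamily H} (h : RootCompatible f g) (ψ : H →* G) :
    RootCompatible (rootMap ψ f) (rootMap ψ g) where
  commute i j k l hij hkl hjk hil := (h.commute i j k l hij hkl hjk hil).map ψ
  commutator_eq i j k j' hij hjk hik hji hjk' := by
    simp only [rootMap, ← map_commutatorElement, h.commutator_eq i j k j' hij hjk hik hji hjk']
  commutator_swap i j k hij hjk hik := by
    simp only [rootMap, ← map_commutatorElement, h.commutator_swap i j k hij hjk hik]

lemma rootMul_rootMap (ψ : H →* G) (f g : RootFamily H) :
    rootMul (rootMap ψ f) (rootMap ψ g) = rootMap ψ (rootMul f g) := by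
  funext i k
  simp only [rootMul, rootMap, apply_ite ψ, map_one, map_commutatorElement]

lemma rootSubgroup_rootMap (ψ : H →* G) (f : RootFamily H) :
    rootSubgroup (rootMap ψ f) = (rootSubgroup f).map ψ := by
  rw [rootSubgroup, rootSubgroup, MonoidHom.map_closure, ← Set.range_comp]
  rfl

lemma rootConj_apply (g : G) (f : RootFamily G) (i j : Fin 5) :
    rootConj g f i j = g * f i j * g⁻¹ := rfl

lemma rootConj_one (f : RootFamily G) : rootConj 1 f = f := by
  funext i j
  simp [rootConj_apply]

lemma rootConj_mul (g h : G) (f : RootFamily G) :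
    rootConj (g * h) f = rootConj g (rootConj h f) := by
  funext i j
  simp only [rootConj_apply, mul_inv_rev, mul_assoc]

end RootMap

lemma isOfFinOrder_mul_of_mem_normal {G : Type*} [Group G] {M : Subgroup G} [M.Normal]
    (hM : ∀ y ∈ M, IsOfFinOrder y) {n x : G} (hn : n ∈ M) (hx : IsOfFinOrder x) :
    IsOfFinOrder (n * x) := by
  obtain ⟨m, hm, hxm⟩ := isOfFinOrder_iff_pow_eq_one.1 hx
  have hmem : (n * x) ^ m ∈ M := by
    rw [← QuotientGroup.eq_one_iff, QuotientGroup.mk_pow, QuotientGroup.mk_mul,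
      (QuotientGroup.eq_one_iff n).2 hn, one_mul, ← QuotientGroup.mk_pow, hxm, QuotientGroup.mk_one]
  exact (isOfFinOrder_pow.1 (hM _ hmem)).resolve_right hm.ne'

section SteinbergRep

variable {A V K : Type*} [Group A] [Group V] [Group K] {G : Type*} [Group G]

/-- A spinal representation in `G` together with a homomorphism `K → G` whose image commutes with
the parabolic subgroup, and such that the image of the root family `E` satisfies the mixed Steinberg
relations with its conjugates by rooted elements. -/
structure SteinbergRep (d : SpinalDatum A V) (E : RootFamily K) (G : Type*) [Group G]
    extends SpinalRep d G where
  /-- The elements of the Steinberg group. -/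
  ofK : K →* G
  commute_ofK : ∀ k, ∀ p ∈ parabolicGenerators ofA ofV t, Commute (ofK k) p
  rootCompatible_rootConj : ∀ a, RootCompatible (rootMap ofK E) (rootConj (ofA a) (rootMap ofK E))

namespace SteinbergRep

variable {d : SpinalDatum A V} {E : RootFamily K} (φ : SteinbergRep d E G)

/-- The conjugates of the image of `E` under the ambient group. -/
def conjugates : Set (RootFamily G) := (rootConj · (rootMap φ.ofK E)) '' φ.ambient

/-- The subgroup generated by all conjugates of the image of `E`. -/
def steinbergSubgroup : Subgroup G := ⨆ s ∈ φ.conjugates, rootSubgroup s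

variable {φ}

lemma rootConj_of_mem_parabolic {p : G} (hp : p ∈ φ.parabolic) :
    rootConj p (rootMap φ.ofK E) = rootMap φ.ofK E := by
  have hle : φ.parabolic ≤ Subgroup.centralizer (Set.range φ.ofK) := by
    refine (Subgroup.closure_le _).2 fun q hq ↦ Subgroup.mem_centralizer_iff.2 ?_
    rintro _ ⟨k, rfl⟩
    exact φ.commute_ofK k q hq
  funext i j
  have hcomm : φ.ofK (E i j) * p = p * φ.ofK (E i j) :=
    Subgroup.mem_centralizer_iff.1 (hle hp) _ ⟨E i j, rfl⟩
  rw [rootConj_apply, rootMap, ← hcomm, mul_inv_cancel_right]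

-- Since `ambient = parabolic * ofA * parabolic`, the pair `(s, s')` is conjugate to one of the
-- pairs whose compatibility is part of the definition.
lemma rootCompatible_of_mem_conjugates [Finite A] {s s' : RootFamily G} (hs : s ∈ φ.conjugates)
    (hs' : s' ∈ φ.conjugates) : RootCompatible s s' := by
  obtain ⟨g, hg, rfl⟩ := hs
  obtain ⟨h, hh, rfl⟩ := hs'
  obtain ⟨a, ha⟩ := φ.exists_mem_doubleCoset_of_mem_ambient (mul_mem (inv_mem hg) hh)
  obtain ⟨p, hp, q, hq, hpq⟩ := DoubleCoset.mem_doubleCoset.1 ha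
  obtain rfl : h = g * p * φ.ofA a * q := by rw [eq_mul_of_inv_mul_eq hpq]; group
  have hgp : rootConj g (rootMap φ.ofK E) = rootConj (g * p) (rootMap φ.ofK E) := by
    rw [rootConj_mul, rootConj_of_mem_parabolic hp]
  simp only
  rw [rootConj_mul _ q, rootConj_of_mem_parabolic hq, rootConj_mul (g * p), hgp]
  exact (φ.rootCompatible_rootConj a).map _

lemma isSteinbergSet_conjugates [Finite A] (hE : rootMul E E = E) :
    IsSteinbergSet φ.conjugates where
  compatible _ hs _ hs' := rootCompatible_of_mem_conjugates hs hs'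
  idempotent := by
    rintro _ ⟨g, -, rfl⟩
    simp only [rootConj, rootMul_rootMap, hE]

lemma finite_rootSubgroup_of_mem_conjugates [Finite K] {s : RootFamily G}
    (hs : s ∈ φ.conjugates) : Finite (rootSubgroup s) := by
  obtain ⟨g, -, rfl⟩ := hs
  simp only [rootConj, rootSubgroup_rootMap]
  exact (((rootSubgroup E : Set K).toFinite.image φ.ofK).image (MulAut.conj g)).to_subtype

lemma rootConj_mem_conjugates {g : G} (hg : g ∈ φ.ambient) :
    rootConj g (rootMap φ.ofK E) ∈ φ.conjugates :=
  Set.mem_image_of_mem _ hg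

lemma range_ofK_le_steinbergSubgroup (hK : rootSubgroup E = ⊤) :
    φ.ofK.range ≤ φ.steinbergSubgroup := by
  rw [MonoidHom.range_eq_map, ← hK, ← rootSubgroup_rootMap, ← rootConj_one (rootMap φ.ofK E)]
  exact le_biSup rootSubgroup (rootConj_mem_conjugates (one_mem φ.ambient))

lemma steinbergSubgroup_le_iff {H : Subgroup G} :
    φ.steinbergSubgroup ≤ H ↔
      ∀ g ∈ φ.ambient, ∀ i j, rootConj g (rootMap φ.ofK E) i j ∈ H := by
  simp only [steinbergSubgroup, conjugates, iSup_le_iff, Set.forall_mem_image, SetLike.mem_coe,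
    rootSubgroup_le_iff]

lemma conj_mem_steinbergSubgroup {g x : G} (hg : g ∈ φ.ambient) (hx : x ∈ φ.steinbergSubgroup) :
    g * x * g⁻¹ ∈ φ.steinbergSubgroup := by
  suffices h : φ.steinbergSubgroup ≤
      φ.steinbergSubgroup.comap (MulAut.conj g).toMonoidHom from h hx
  refine steinbergSubgroup_le_iff.2 fun h hh i j ↦ ?_
  have hmem := apply_mem_rootSubgroup (rootConj (g * h) (rootMap φ.ofK E)) i j
  rw [rootConj_mul] at hmem
  exact le_biSup rootSubgroup (rootConj_mul g h _ ▸ rootConj_mem_conjugates (mul_mem hg hh)) hmem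

lemma normal_steinbergSubgroup (hK : rootSubgroup E = ⊤) (hgen : φ.ambient ⊔ φ.ofK.range = ⊤) :
    φ.steinbergSubgroup.Normal := by
  rw [← Subgroup.normalizer_eq_top_iff, eq_top_iff, ← hgen, sup_le_iff]
  refine ⟨fun g hg ↦ Subgroup.mem_normalizer_iff.2 fun x ↦ ⟨conj_mem_steinbergSubgroup hg, ?_⟩,
    (range_ofK_le_steinbergSubgroup hK).trans Subgroup.le_normalizer⟩
  intro hx
  simpa [mul_assoc] using conj_mem_steinbergSubgroup (inv_mem hg) hx

theorem isOfFinOrder_of_map_eq_one [Finite A] [Finite V] [Finite K] (hE : rootMul E E = E)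
    (hK : rootSubgroup E = ⊤) (hgen : φ.ambient ⊔ φ.ofK.range = ⊤) {χ : G →* Multiplicative ℤ}
    (hbase : φ.base ≤ χ.ker) (ht : χ φ.t = .ofAdd 1) (hχK : φ.ofK.range ≤ χ.ker) {g : G}
    (hg : χ g = 1) : IsOfFinOrder g := by
  have := normal_steinbergSubgroup hK hgen
  have hsup : φ.steinbergSubgroup ⊔ φ.ambient = ⊤ :=
    eq_top_iff.2 (hgen ▸ sup_le le_sup_right
      ((range_ofK_le_steinbergSubgroup hK).trans le_sup_left))
  have hker : φ.steinbergSubgroup ≤ χ.ker := by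
    refine steinbergSubgroup_le_iff.2 fun h _ i j ↦ ?_
    have hEij : χ (rootMap φ.ofK E i j) = 1 := hχK ⟨E i j, rfl⟩
    rw [rootConj_apply, MonoidHom.mem_ker, map_mul, map_mul, map_inv, hEij, mul_one,
      mul_inv_cancel]
  obtain ⟨n, hn, x, hx, rfl⟩ :=
    Subgroup.mem_sup_of_normal_left.1 (hsup ▸ Subgroup.mem_top g : g ∈ _ ⊔ φ.ambient)
  refine isOfFinOrder_mul_of_mem_normal (fun y hy ↦ ?_) hn
    (φ.isOfFinOrder_of_mem_ambient hbase ht hx ?_)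
  · exact (isSteinbergSet_conjugates hE).isOfFinOrder_of_mem_iSup_rootSubgroup
      (fun _ ↦ finite_rootSubgroup_of_mem_conjugates) hy
  · rwa [map_mul, MonoidHom.mem_ker.1 (hker hn), one_mul] at hg

end SteinbergRep

end SteinbergRep

/-! ## The finitely presented group -/

section Relators

variable {F Γ : Type*} [Group F] [Group Γ]

/-- The relators stating that `f` is multiplicative. -/
def mulRelators {H : Type*} [Mul H] (f : H → F) : Set F :=
  Set.range fun p : H × H ↦ f p.1 * f p.2 * (f (p.1 * p.2))⁻¹

/-- The relators stating that `S` and `T` commute. -/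
def commutatorRelators (S T : Set F) : Set F := Set.image2 (⁅·, ·⁆) S T

/-- The relators of the mixed Steinberg relations `RootCompatible f g`. -/
def rootRelators (f g : RootFamily F) : Set F :=
  (fun (i, j, k, l) ↦ ⁅f i j, g k l⁆) ''
    {(i, j, k, l) : Fin 5 × Fin 5 × Fin 5 × Fin 5 | i ≠ j ∧ k ≠ l ∧ j ≠ k ∧ i ≠ l} ∪
  (fun (i, j, k, j') ↦ ⁅f i j, g j k⁆ * ⁅f i j', g j' k⁆⁻¹) ''
    {(i, j, k, j') : Fin 5 × Fin 5 × Fin 5 × Fin 5 | i ≠ j ∧ j ≠ k ∧ i ≠ k ∧ j' ≠ i ∧ j' ≠ k} ∪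
  (fun (i, j, k) ↦ ⁅f i j, g j k⁆ * ⁅g i j, f j k⁆⁻¹) ''
    {(i, j, k) : Fin 5 × Fin 5 × Fin 5 | i ≠ j ∧ j ≠ k ∧ i ≠ k}

lemma forall_mulRelators_iff {H : Type*} [Mul H] {f : H → F} {Φ : F →* Γ} :
    (∀ r ∈ mulRelators f, Φ r = 1) ↔ ∀ a b, Φ (f (a * b)) = Φ (f a) * Φ (f b) := by
  simp only [mulRelators, Set.forall_mem_range, Prod.forall, map_mul, map_inv, mul_inv_eq_one]
  simp only [eq_comm]

lemma forall_commutatorRelators_iff {S T : Set F} {Φ : F →* Γ} :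
    (∀ r ∈ commutatorRelators S T, Φ r = 1) ↔ ∀ x ∈ S, ∀ y ∈ T, Commute (Φ x) (Φ y) := by
  simp only [commutatorRelators, Set.forall_mem_image2, map_commutatorElement,
    commutatorElement_eq_one_iff_commute]

lemma forall_rootRelators_iff {f g : RootFamily F} {Φ : F →* Γ} :
    (∀ r ∈ rootRelators f g, Φ r = 1) ↔ RootCompatible (rootMap Φ f) (rootMap Φ g) := by
  simp only [rootRelators, Set.mem_union, or_imp, forall_and, Set.forall_mem_image, Prod.forall,
    Set.mem_ofPred_eq, and_imp, map_mul, map_inv, map_commutatorElement, mul_inv_eq_one,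
    commutatorElement_eq_one_iff_commute]
  exact ⟨fun ⟨⟨h₁, h₂⟩, h₃⟩ ↦ ⟨h₁, h₂, h₃⟩,
    fun h ↦ ⟨⟨h.commute, h.commutator_eq⟩, h.commutator_swap⟩⟩

lemma rootMap_rootConj (Φ : F →* Γ) (g : F) (f : RootFamily F) :
    rootMap Φ (rootConj g f) = rootConj (Φ g) (rootMap Φ f) := by
  funext i j
  simp only [rootMap, rootConj_apply, map_mul, map_inv]

lemma map_copyHom {ι : Type*} (Φ : F →* Γ) (f : ι → F) (t : F) (a : ι) (x : F) :
    Φ (copyHom f t a x) = copyHom (Φ ∘ f) (Φ t) a (Φ x) := by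
  simp only [copyHom_apply, map_mul, map_inv, Function.comp_apply]

lemma image_parabolicGenerators {A V : Type*} [One A] (Φ : F →* Γ) (f : A → F) (g : V → F) (t : F) :
    Φ '' parabolicGenerators f g t = parabolicGenerators (Φ ∘ f) (Φ ∘ g) (Φ t) := by
  simp only [parabolicGenerators, Set.image_union, Set.image_insert_eq, Set.image_iUnion₂,
    Set.image_image, map_copyHom, Set.range_comp]

section Letters

variable {A V K : Type*} {fA : A → F} {fV : V → F} {fK : K → F} {t : F} {Φ : F →* Γ}

lemma forall_commutatorRelators_copies_iff [One A] :
    (∀ r ∈ commutatorRelators (copyHom fA t 1 '' (Set.range fA ∪ Set.range fV))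
      (⋃ a ∈ ({1}ᶜ : Set A), copyHom fA t a '' (Set.range fA ∪ Set.range fV)), Φ r = 1) ↔
    ∀ x ∈ Set.range (Φ ∘ fA) ∪ Set.range (Φ ∘ fV),
      ∀ y ∈ Set.range (Φ ∘ fA) ∪ Set.range (Φ ∘ fV), ∀ a ≠ 1,
        Commute (copyHom (Φ ∘ fA) (Φ t) 1 x) (copyHom (Φ ∘ fA) (Φ t) a y) := by
  simp only [forall_commutatorRelators_iff, Set.range_comp, ← Set.image_union,
    Set.forall_mem_image, Set.mem_iUnion₂, map_copyHom]
  refine forall₂_congr fun x _ ↦ ⟨fun h y hy a ha ↦ ?_, ?_⟩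
  · exact map_copyHom Φ fA t a y ▸ h _ ⟨a, ha, Set.mem_image_of_mem _ hy⟩
  · rintro h _ ⟨a, ha, y, hy, rfl⟩
    exact map_copyHom Φ fA t a y ▸ h hy a ha

lemma forall_commutatorRelators_parabolicGenerators_iff [One A] :
    (∀ r ∈ commutatorRelators (Set.range fK) (parabolicGenerators fA fV t), Φ r = 1) ↔
    ∀ k, ∀ p ∈ parabolicGenerators (Φ ∘ fA) (Φ ∘ fV) (Φ t), Commute (Φ (fK k)) p := by
  simp only [forall_commutatorRelators_iff, Set.forall_mem_range, ← image_parabolicGenerators,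
    Set.forall_mem_image]

lemma forall_iUnion_rootRelators_rootConj_iff {f : RootFamily F} :
    (∀ r ∈ ⋃ a, rootRelators f (rootConj (fA a) f), Φ r = 1) ↔
    ∀ a, RootCompatible (rootMap Φ f) (rootConj (Φ (fA a)) (rootMap Φ f)) := by
  simp only [Set.mem_iUnion, forall_exists_index]
  rw [forall_comm]
  simp only [forall_rootRelators_iff, rootMap_rootConj]

end Letters

end Relators

section SteinbergGroup

variable {A V K : Type*}

/-- The generators of the finitely presented group: `t` is `none`, and every element of the three
finite groups `A`, `V`, `K` is a generator. -/
abbrev Generator (A V K : Type*) : Type _ := Option (A ⊕ V ⊕ K)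

/-- The generators coming from `A`. -/
def freeA (a : A) : FreeGroup (Generator A V K) := .of (some (.inl a))

/-- The generators coming from `V`. -/
def freeV (v : V) : FreeGroup (Generator A V K) := .of (some (.inr (.inl v)))

/-- The generators coming from `K`. -/
def freeK (k : K) : FreeGroup (Generator A V K) := .of (some (.inr (.inr k)))

/-- The generator `t`. -/
def freeT : FreeGroup (Generator A V K) := .of none

variable [Group A] [Group V] [Group K] {Γ : Type*} [Group Γ]

/-- The relators whose vanishing makes a map of the generators a `SteinbergRep d E`. -/
def steinbergRelators (d : SpinalDatum A V) (E : RootFamily K) :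
    Set (FreeGroup (Generator A V K)) :=
  mulRelators freeA ∪ mulRelators freeV ∪ mulRelators freeK ∪
  commutatorRelators (copyHom freeA freeT 1 '' (Set.range freeA ∪ Set.range freeV))
    (⋃ a ∈ ({1}ᶜ : Set A), copyHom freeA freeT a '' (Set.range freeA ∪ Set.range freeV)) ∪
  Set.range (fun v ↦ freeV v * (copyHom freeA freeT 1 (freeV (d.ρ v)) *
    copyHom freeA freeT d.a₁ (freeA (d.ω₁ v)) * copyHom freeA freeT d.a₂ (freeA (d.ω₂ v)))⁻¹) ∪
  commutatorRelators (Set.range freeK) (parabolicGenerators freeA freeV freeT) ∪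
  ⋃ a, rootRelators (fun i j ↦ freeK (E i j)) (rootConj (freeA a) fun i j ↦ freeK (E i j))

/-- The universal group with a Steinberg representation of `d` and `E`. -/
abbrev SteinbergGroup (d : SpinalDatum A V) (E : RootFamily K) : Type _ :=
  PresentedGroup (steinbergRelators d E)

lemma finite_steinbergRelators [Finite A] [Finite V] [Finite K] (d : SpinalDatum A V)
    (E : RootFamily K) : (steinbergRelators d E).Finite := by
  have hcopies : (⋃ a ∈ ({1}ᶜ : Set A), copyHom freeA freeT a ''
      (Set.range freeA ∪ Set.range freeV) : Set (FreeGroup (Generator A V K))).Finite :=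
    (Set.toFinite _).biUnion fun _ _ ↦ Set.toFinite _
  have hroot : (⋃ a : A, rootRelators (fun i j ↦ freeK (E i j)) (rootConj (freeA a)
      fun i j ↦ freeK (E i j)) : Set (FreeGroup (Generator A V K))).Finite :=
    Set.finite_iUnion fun _ ↦ Set.toFinite (_ ∪ _ ∪ _)
  exact ((((((Set.finite_range _).union (Set.finite_range _)).union (Set.finite_range _)).union
    ((Set.toFinite _).image2 _ hcopies)).union (Set.finite_range _)).union
    ((Set.finite_range _).image2 _ ((Set.toFinite _).union hcopies))).union hroot

variable {d : SpinalDatum A V} {E : RootFamily K}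

lemma forall_steinbergRelators_iff {Φ : FreeGroup (Generator A V K) →* Γ} :
    (∀ r ∈ steinbergRelators d E, Φ r = 1) ↔
      (∀ a b, Φ (freeA (a * b)) = Φ (freeA a) * Φ (freeA b)) ∧
      (∀ u v, Φ (freeV (u * v)) = Φ (freeV u) * Φ (freeV v)) ∧
      (∀ k l, Φ (freeK (k * l)) = Φ (freeK k) * Φ (freeK l)) ∧
      (∀ x ∈ Set.range (Φ ∘ freeA) ∪ Set.range (Φ ∘ freeV),
        ∀ y ∈ Set.range (Φ ∘ freeA) ∪ Set.range (Φ ∘ freeV), ∀ a ≠ 1,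
        Commute (copyHom (Φ ∘ freeA) (Φ freeT) 1 x) (copyHom (Φ ∘ freeA) (Φ freeT) a y)) ∧
      (∀ v, Φ (freeV v) = copyHom (Φ ∘ freeA) (Φ freeT) 1 (Φ (freeV (d.ρ v))) *
        copyHom (Φ ∘ freeA) (Φ freeT) d.a₁ (Φ (freeA (d.ω₁ v))) *
        copyHom (Φ ∘ freeA) (Φ freeT) d.a₂ (Φ (freeA (d.ω₂ v)))) ∧
      (∀ k, ∀ p ∈ parabolicGenerators (Φ ∘ freeA) (Φ ∘ freeV) (Φ freeT),
        Commute (Φ (freeK k)) p) ∧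
      ∀ a, RootCompatible (fun i j ↦ Φ (freeK (E i j)))
        (rootConj (Φ (freeA a)) fun i j ↦ Φ (freeK (E i j))) := by
  simp only [steinbergRelators, Set.mem_union, or_imp, forall_and, forall_mulRelators_iff,
    forall_commutatorRelators_copies_iff, forall_commutatorRelators_parabolicGenerators_iff,
    forall_iUnion_rootRelators_rootConj_iff, Set.forall_mem_range, map_mul, map_inv, mul_inv_eq_one,
    map_copyHom, and_assoc]
  rfl

namespace SteinbergRep

/-- The Steinberg representation given by a homomorphism that kills the relators. -/
def ofHom (Φ : FreeGroup (Generator A V K) →* Γ) (hΦ : ∀ r ∈ steinbergRelators d E, Φ r = 1) :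
    SteinbergRep d E Γ where
  ofA := .mk' (Φ ∘ freeA) (forall_steinbergRelators_iff.1 hΦ).1
  ofV := .mk' (Φ ∘ freeV) (forall_steinbergRelators_iff.1 hΦ).2.1
  ofK := .mk' (Φ ∘ freeK) (forall_steinbergRelators_iff.1 hΦ).2.2.1
  t := Φ freeT
  commute_copyHom := (forall_steinbergRelators_iff.1 hΦ).2.2.2.1
  ofV_eq := (forall_steinbergRelators_iff.1 hΦ).2.2.2.2.1
  commute_ofK := (forall_steinbergRelators_iff.1 hΦ).2.2.2.2.2.1
  rootCompatible_rootConj := (forall_steinbergRelators_iff.1 hΦ).2.2.2.2.2.2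

/-- The values of a Steinberg representation on the generators. -/
def onGenerators (φ : SteinbergRep d E Γ) : Generator A V K → Γ
  | none => φ.t
  | some (.inl a) => φ.ofA a
  | some (.inr (.inl v)) => φ.ofV v
  | some (.inr (.inr k)) => φ.ofK k

lemma lift_onGenerators_eq_one (φ : SteinbergRep d E Γ) :
    ∀ r ∈ steinbergRelators d E, FreeGroup.lift φ.onGenerators r = 1 := by
  have hA : FreeGroup.lift φ.onGenerators ∘ freeA = φ.ofA := funext fun a ↦ by
    simp [freeA, onGenerators]
  have hV : FreeGroup.lift φ.onGenerators ∘ freeV = φ.ofV := funext fun v ↦ by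
    simp [freeV, onGenerators]
  have hK : ∀ k, FreeGroup.lift φ.onGenerators (freeK k) = φ.ofK k := fun k ↦ by
    simp [freeK, onGenerators]
  have ht : FreeGroup.lift φ.onGenerators freeT = φ.t := by simp [freeT, onGenerators]
  rw [forall_steinbergRelators_iff]
  simp only [← Function.comp_apply (f := FreeGroup.lift φ.onGenerators) (g := freeA),
    ← Function.comp_apply (f := FreeGroup.lift φ.onGenerators) (g := freeV), hA, hV, hK, ht]
  exact ⟨map_mul φ.ofA, map_mul φ.ofV, map_mul φ.ofK, φ.commute_copyHom, φ.ofV_eq, φ.commute_ofK,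
    φ.rootCompatible_rootConj⟩

variable (d E) in
/-- The Steinberg representation in `SteinbergGroup d E`. -/
def universal : SteinbergRep d E (SteinbergGroup d E) :=
  ofHom (PresentedGroup.mk _) fun _ ↦ PresentedGroup.one_of_mem

/-- The homomorphism from the universal group given by a Steinberg representation. -/
def lift (φ : SteinbergRep d E Γ) : SteinbergGroup d E →* Γ :=
  PresentedGroup.toGroup φ.lift_onGenerators_eq_one

variable (φ : SteinbergRep d E Γ)

lemma lift_ofA (a : A) : φ.lift ((universal d E).ofA a) = φ.ofA a :=
  PresentedGroup.toGroup.of φ.lift_onGenerators_eq_one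

lemma lift_ofV (v : V) : φ.lift ((universal d E).ofV v) = φ.ofV v :=
  PresentedGroup.toGroup.of φ.lift_onGenerators_eq_one

lemma lift_ofK (k : K) : φ.lift ((universal d E).ofK k) = φ.ofK k :=
  PresentedGroup.toGroup.of φ.lift_onGenerators_eq_one

lemma lift_t : φ.lift (universal d E).t = φ.t :=
  PresentedGroup.toGroup.of φ.lift_onGenerators_eq_one

variable (d E)

lemma ambient_universal_sup_range_ofK :
    (universal d E).ambient ⊔ (universal d E).ofK.range = ⊤ := by
  rw [eq_top_iff, ← PresentedGroup.closure_range_of, Subgroup.closure_le]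
  rintro _ ⟨_ | a | v | k, rfl⟩
  · exact Subgroup.mem_sup_left (Subgroup.subset_closure (.inl rfl))
  · exact Subgroup.mem_sup_left (Subgroup.subset_closure (.inr (.inl ⟨a, rfl⟩)))
  · exact Subgroup.mem_sup_left (Subgroup.subset_closure (.inr (.inr ⟨v, rfl⟩)))
  · exact Subgroup.mem_sup_right ⟨k, rfl⟩

/-- The representation in `ℤ` sending `t` to `1` and the three finite groups to `0`. -/
def toInt : SteinbergRep d E (Multiplicative ℤ) where
  ofA := 1
  ofV := 1
  ofK := 1
  t := .ofAdd 1
  commute_copyHom _ _ _ _ _ _ := .all _ _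
  ofV_eq _ := by simp
  commute_ofK _ _ _ := .all _ _
  rootCompatible_rootConj _ :=
    ⟨fun _ _ _ _ _ _ _ _ ↦ .all _ _, fun _ _ _ _ _ _ _ _ _ ↦ by simp [rootMap],
      fun _ _ _ _ _ _ ↦ by simp [rootMap]⟩

theorem isOfFinOrder_of_lift_toInt_eq_one [Finite A] [Finite V] [Finite K]
    (hE : rootMul E E = E) (hK : rootSubgroup E = ⊤) {g : SteinbergGroup d E}
    (hg : (toInt d E).lift g = 1) : IsOfFinOrder g := by
  refine isOfFinOrder_of_map_eq_one hE hK (ambient_universal_sup_range_ofK d E)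
    (SpinalRep.base_le_iff.2 ⟨lift_ofA _, lift_ofV _⟩) (lift_t _) ?_ hg
  rintro _ ⟨k, rfl⟩
  exact lift_ofK _ k

end SteinbergRep

end SteinbergGroup

/-! ## A spinal group acting on sequences -/

section Sequences

variable {A V H : Type*}

/-- The sequences that are trivial before `n`. -/
def cylinder [One A] (n : ℤ) : Set (ℤ → A) := {ξ | ∀ j < n, ξ j = 1}

/-- The index `s` is the first one at which `ξ` and `η` differ. -/
def IsFirstDifference (ξ η : ℤ → A) (s : ℤ) : Prop := IsLeast {i | ξ i ≠ η i} s

lemma IsFirstDifference.symm {ξ η : ℤ → A} {s : ℤ} (h : IsFirstDifference ξ η s) :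
    IsFirstDifference η ξ s := by
  simpa only [IsFirstDifference, ne_comm] using h

lemma IsFirstDifference.ne {ξ η : ℤ → A} {s : ℤ} (h : IsFirstDifference ξ η s) : ξ ≠ η :=
  fun hξη ↦ h.1 (congrFun hξη s)

lemma IsFirstDifference.eqOn {ξ η : ℤ → A} {s : ℤ} (h : IsFirstDifference ξ η s) :
    Set.EqOn ξ η (Set.Iio s) :=
  fun _ hi ↦ not_not.1 fun hne ↦ (h.2 hne).not_gt hi

/-- The shift of sequences by one step. -/
def shift (A : Type*) : Equiv.Perm (ℤ → A) := (Equiv.subRight 1).arrowCongr (.refl A)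

lemma shift_apply (ξ : ℤ → A) (i : ℤ) : shift A ξ i = ξ (i + 1) := rfl

lemma shift_inv_apply (ξ : ℤ → A) (i : ℤ) : (shift A)⁻¹ ξ i = ξ (i - 1) := rfl

lemma shift_inv_pow_apply (n : ℕ) (ξ : ℤ → A) (i : ℤ) : ((shift A)⁻¹ ^ n) ξ i = ξ (i - n) := by
  induction n generalizing i with
  | zero => simp
  | succ n ih =>
    rw [pow_succ', Equiv.Perm.mul_apply, shift_inv_apply, ih, sub_sub, add_comm, Nat.cast_succ]

lemma isFirstDifference_shift_iff {ξ η : ℤ → A} {s : ℤ} :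
    IsFirstDifference (shift A ξ) (shift A η) s ↔ IsFirstDifference ξ η (s + 1) := by
  refine and_congr Iff.rfl ⟨fun h i hi ↦ ?_, fun h i hi ↦ ?_⟩
  · have : s ≤ i - 1 := h (by simpa [shift_apply] using hi)
    linarith
  · have : s + 1 ≤ i + 1 := h hi
    linarith

variable [Group A] [Group V] [Group H]

/-- A cocycle through which `H` acts on sequences by `ξ ↦ c g ξ * ξ`, such that the `i`-th
coordinate of `c g ξ` depends only on the coordinates of `ξ` before `i`. -/
structure TriangularCocycle (H A : Type*) [Group H] [Group A] where
  /-- The sequence by which `g` multiplies `ξ`. -/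
  toFun : H → (ℤ → A) → ℤ → A
  map_mul : ∀ g h ξ, toFun (g * h) ξ = toFun g ξ * toFun h ξ
  apply_mul_self : ∀ g h ξ, toFun g (toFun h ξ * ξ) = toFun g ξ
  congr : ∀ g {ξ η : ℤ → A} i, Set.EqOn ξ η (Set.Iio i) → toFun g ξ i = toFun g η i

namespace TriangularCocycle

/-- The action on sequences defined by a triangular cocycle. -/
def toPerm (c : TriangularCocycle H A) : H →* Equiv.Perm (ℤ → A) :=
  MonoidHom.toHomPerm
    { toFun g ξ := c.toFun g ξ * ξ
      map_one' := funext fun ξ ↦ by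
        have h : c.toFun 1 ξ = c.toFun 1 ξ * c.toFun 1 ξ := by rw [← c.map_mul, one_mul]
        rw [left_eq_mul.1 h, one_mul]
        rfl
      map_mul' g h := funext fun ξ ↦
        calc c.toFun (g * h) ξ * ξ = c.toFun g (c.toFun h ξ * ξ) * (c.toFun h ξ * ξ) := by
              rw [c.map_mul, c.apply_mul_self, mul_assoc] }

variable (c : TriangularCocycle H A)

lemma toPerm_apply (g : H) (ξ : ℤ → A) : c.toPerm g ξ = c.toFun g ξ * ξ := rfl

lemma isFirstDifference_toPerm (g : H) {ξ η : ℤ → A} {s : ℤ} (h : IsFirstDifference ξ η s) :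
    IsFirstDifference (c.toPerm g ξ) (c.toPerm g η) s := by
  refine ⟨?_, fun i hi ↦ not_lt.1 fun his ↦ hi ?_⟩
  · simpa [toPerm_apply, c.congr g s h.eqOn] using h.1
  · simp only [toPerm_apply, Pi.mul_apply]
    rw [h.eqOn his, c.congr g i (h.eqOn.mono (Set.Iio_subset_Iio his.le))]

lemma isFirstDifference_toPerm_iff (g : H) {ξ η : ℤ → A} {s : ℤ} :
    IsFirstDifference (c.toPerm g ξ) (c.toPerm g η) s ↔ IsFirstDifference ξ η s := by
  refine ⟨fun h ↦ ?_, c.isFirstDifference_toPerm g⟩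
  simpa using c.isFirstDifference_toPerm g⁻¹ h

end TriangularCocycle

open Classical in
/-- The cocycle by which `A` multiplies the coordinate `0` of the sequences in `cylinder 0`. -/
noncomputable def rootedCocycle (A : Type*) [Group A] : TriangularCocycle A A where
  toFun a ξ := if ξ ∈ cylinder 0 then Pi.mulSingle 0 a else 1
  map_mul a b ξ := by split_ifs <;> simp [Pi.mulSingle_mul]
  apply_mul_self a b ξ := by
    refine if_congr (forall₂_congr fun j hj ↦ ?_) rfl rfl
    split_ifs <;> simp [Pi.mulSingle_eq_of_ne hj.ne]
  congr a ξ η i h := by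
    by_cases hi : i = 0
    · subst hi
      have hiff : ξ ∈ cylinder 0 ↔ η ∈ cylinder 0 :=
        forall₂_congr fun j hj ↦ by rw [h (Set.mem_Iio.2 hj)]
      simp only [hiff]
    · split_ifs <;> simp [Pi.mulSingle_eq_of_ne hi]

lemma rootedCocycle_toPerm_of_notMem (a : A) {ξ : ℤ → A} (hξ : ξ ∉ cylinder 0) :
    (rootedCocycle A).toPerm a ξ = ξ := by
  simp [TriangularCocycle.toPerm_apply, rootedCocycle, hξ]

lemma rootedCocycle_toPerm_of_mem (a : A) {ξ : ℤ → A} (hξ : ξ ∈ cylinder 0) :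
    (rootedCocycle A).toPerm a ξ = Function.update ξ 0 (a * ξ 0) := by
  funext i
  by_cases hi : i = 0
  · subst hi
    simp [TriangularCocycle.toPerm_apply, rootedCocycle, hξ]
  · simp [TriangularCocycle.toPerm_apply, rootedCocycle, hξ, hi]

namespace SpinalDatum

variable (d : SpinalDatum A V)

open Classical in
/-- The label of `v` at the subtree of sequences starting with `b`, that is, at `b⁻¹`. -/
noncomputable def label (b : A) : V →* A :=
  if b = d.a₁⁻¹ then d.ω₁ else if b = d.a₂⁻¹ then d.ω₂ else 1

lemma label_one : d.label 1 = 1 := by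
  rw [label, if_neg (inv_ne_one.2 d.a₁_ne_one).symm, if_neg (inv_ne_one.2 d.a₂_ne_one).symm]

lemma label_a₁_inv : d.label d.a₁⁻¹ = d.ω₁ := if_pos rfl

lemma label_a₂_inv : d.label d.a₂⁻¹ = d.ω₂ := by
  rw [label, if_neg (inv_injective.ne d.a₁_ne_a₂.symm), if_pos rfl]

open Classical in
/-- The sequence by which `v` multiplies `ξ`: if `n ≥ 0` is the first index with `ξ n ≠ 1`, then it
is `d.label (ξ n) (ρ ^ n v)` at `n + 1` and trivial elsewhere. -/
noncomputable def spinalFun (v : V) (ξ : ℤ → A) (i : ℤ) : A :=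
  if 1 ≤ i ∧ ξ ∈ cylinder (i - 1) then
    d.label (ξ (i - 1)) ((d.ρ ^ (i - 1) : MulAut V) v) else 1

lemma spinalFun_of_eq_one (v : V) {ξ : ℤ → A} {i : ℤ} (h : ξ (i - 1) = 1) :
    d.spinalFun v ξ i = 1 := by
  simp [spinalFun, h, label_one]

lemma spinalFun_of_mem_cylinder (v : V) {ξ : ℤ → A} {i : ℤ} (h : ξ ∈ cylinder i) :
    d.spinalFun v ξ i = 1 :=
  d.spinalFun_of_eq_one v (h _ (sub_one_lt i))

lemma spinalFun_congr (v : V) {ξ η : ℤ → A} {i : ℤ} (h : Set.EqOn ξ η (Set.Iio i)) :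
    d.spinalFun v ξ i = d.spinalFun v η i := by
  have hcyl : ξ ∈ cylinder (i - 1) ↔ η ∈ cylinder (i - 1) :=
    forall₂_congr fun j hj ↦ by rw [h (hj.trans (sub_one_lt i))]
  rw [spinalFun, spinalFun, h (sub_one_lt i)]
  classical exact if_congr (and_congr_right fun _ ↦ hcyl) rfl rfl

lemma spinalFun_mul_mem_cylinder_iff (v : V) {ξ : ℤ → A} {n : ℤ} :
    d.spinalFun v ξ * ξ ∈ cylinder n ↔ ξ ∈ cylinder n := by
  refine ⟨fun h j hj ↦ ?_, fun h j hj ↦ ?_⟩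
  · have hfun : d.spinalFun v ξ j = 1 := by
      by_contra hne
      obtain ⟨-, hcyl⟩ : 1 ≤ j ∧ ξ ∈ cylinder (j - 1) := by
        by_contra hj
        exact hne (if_neg hj)
      have hprev : d.spinalFun v ξ (j - 1) * ξ (j - 1) = 1 := h _ ((sub_one_lt j).trans hj)
      rw [d.spinalFun_of_mem_cylinder v hcyl, one_mul] at hprev
      exact hne (d.spinalFun_of_eq_one v hprev)
    simpa [hfun] using h j hj
  · rw [Pi.mul_apply, h j hj, d.spinalFun_of_mem_cylinder v fun l hl ↦ h l (hl.trans hj), one_mul]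

/-- The cocycle by which `V` acts on sequences. -/
noncomputable def spinalCocycle : TriangularCocycle V A where
  toFun := d.spinalFun
  map_mul u v ξ := funext fun i ↦ by
    rw [Pi.mul_apply]
    unfold spinalFun
    split_ifs <;> simp
  apply_mul_self u v ξ := funext fun i ↦ by
    by_cases hξ : ξ ∈ cylinder (i - 1)
    · refine d.spinalFun_congr u fun j hj ↦ ?_
      rw [Pi.mul_apply, d.spinalFun_of_mem_cylinder v, one_mul]
      exact fun l hl ↦ hξ l (hl.trans_le (Int.le_sub_one_of_lt hj))
    · rw [spinalFun, if_neg fun h ↦ hξ ((d.spinalFun_mul_mem_cylinder_iff v).1 h.2), spinalFun,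
        if_neg fun h ↦ hξ h.2]
  congr v _ _ _ := d.spinalFun_congr v

lemma spinalCocycle_toPerm_apply (v : V) (ξ : ℤ → A) (i : ℤ) :
    d.spinalCocycle.toPerm v ξ i = d.spinalFun v ξ i * ξ i := rfl

lemma spinalCocycle_toPerm_of_notMem (v : V) {ξ : ℤ → A} (hξ : ξ ∉ cylinder 0) :
    d.spinalCocycle.toPerm v ξ = ξ := by
  funext i
  rw [spinalCocycle_toPerm_apply, spinalFun, if_neg, one_mul]
  exact fun h ↦ hξ fun j hj ↦ h.2 j (by lia)

lemma spinalCocycle_toPerm_of_ne_one (v : V) {ξ : ℤ → A} (hξ : ξ ∈ cylinder 0) (h0 : ξ 0 ≠ 1) :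
    d.spinalCocycle.toPerm v ξ = Function.update ξ 1 (d.label (ξ 0) v * ξ 1) := by
  funext i
  by_cases hi : i = 1
  · subst hi
    simp [spinalCocycle_toPerm_apply, spinalFun, hξ]
  · rw [Function.update_of_ne hi, spinalCocycle_toPerm_apply, spinalFun, if_neg, one_mul]
    exact fun h ↦ h0 (h.2 0 (by lia))

end SpinalDatum

variable {y : Equiv.Perm (ℤ → A)} {a : A} {ξ : ℤ → A}

/-- The copies of the permutation group of sequences, acting on the cylinders of depth one. -/
noncomputable abbrev sequenceCopy (a : A) : Equiv.Perm (ℤ → A) →* Equiv.Perm (ℤ → A) :=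
  copyHom (rootedCocycle A).toPerm (shift A) a

lemma sequenceCopy_apply_eq_iff {η : ℤ → A} : sequenceCopy a y ξ = η ↔
    y (shift A ((rootedCocycle A).toPerm a ξ)) = shift A ((rootedCocycle A).toPerm a η) := by
  rw [sequenceCopy, copyHom_apply, Equiv.Perm.mul_apply, Equiv.Perm.mul_apply,
    Equiv.Perm.inv_eq_iff_eq, Equiv.Perm.mul_apply, Equiv.Perm.mul_apply]

lemma shift_rooted_mem_cylinder_iff :
    shift A ((rootedCocycle A).toPerm a ξ) ∈ cylinder 0 ↔ ξ ∈ cylinder 0 ∧ ξ 0 = a⁻¹ := by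
  by_cases hξ : ξ ∈ cylinder 0
  · rw [rootedCocycle_toPerm_of_mem a hξ]
    refine ⟨fun h ↦ ⟨hξ, ?_⟩, fun ⟨_, h0⟩ j hj ↦ ?_⟩
    · have h0 : a * ξ 0 = 1 := by simpa [shift_apply] using h (-1) (by lia)
      exact (inv_eq_of_mul_eq_one_right h0).symm
    · rw [shift_apply]
      by_cases hj' : j + 1 = 0
      · simp [hj', h0]
      · rw [Function.update_of_ne hj']
        exact hξ _ (by lia)
  · rw [rootedCocycle_toPerm_of_notMem a hξ]
    refine iff_of_false (fun h ↦ hξ fun j hj ↦ ?_) fun h ↦ hξ h.1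
    simpa [shift_apply] using h (j - 1) (by lia)

lemma sequenceCopy_apply_eq_self (hy : ∀ ξ ∉ cylinder 0, y ξ = ξ)
    (h : ¬ (ξ ∈ cylinder 0 ∧ ξ 0 = a⁻¹)) : sequenceCopy a y ξ = ξ := by
  rw [sequenceCopy_apply_eq_iff, hy _ (shift_rooted_mem_cylinder_iff.not.2 h)]

lemma sequenceCopy_rooted_apply (b : A) (hξ : ξ ∈ cylinder 0) (h0 : ξ 0 = a⁻¹) :
    sequenceCopy a ((rootedCocycle A).toPerm b) ξ = Function.update ξ 1 (b * ξ 1) := by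
  have hupdate : Function.update ξ 1 (b * ξ 1) ∈ cylinder 0 := fun j hj ↦ by
    rw [Function.update_of_ne (by lia), hξ j hj]
  rw [sequenceCopy_apply_eq_iff,
    rootedCocycle_toPerm_of_mem b (shift_rooted_mem_cylinder_iff.2 ⟨hξ, h0⟩),
    rootedCocycle_toPerm_of_mem a hξ, rootedCocycle_toPerm_of_mem a hupdate]
  funext j
  by_cases hj : j = 0
  · subst hj
    simp [shift_apply]
  · simp [shift_apply, Function.update_apply, hj]

lemma sequenceCopy_one_spinal_apply (d : SpinalDatum A V) (v : V) (h0 : ξ 0 = 1) :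
    sequenceCopy 1 (d.spinalCocycle.toPerm (d.ρ v)) ξ = d.spinalCocycle.toPerm v ξ := by
  rw [sequenceCopy, copyHom_apply, map_one, mul_one, Equiv.Perm.mul_apply, Equiv.Perm.mul_apply]
  funext i
  rw [shift_inv_apply, d.spinalCocycle_toPerm_apply, d.spinalCocycle_toPerm_apply, shift_apply,
    sub_add_cancel]
  congr 1
  by_cases hi : i = 1
  · subst hi
    rw [d.spinalFun_of_eq_one v (by simpa using h0), SpinalDatum.spinalFun, if_neg (by lia)]
  have hcyl : (1 ≤ i - 1 ∧ shift A ξ ∈ cylinder (i - 1 - 1)) ↔ 1 ≤ i ∧ ξ ∈ cylinder (i - 1) := by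
    refine ⟨fun h ↦ ⟨by lia, fun j hj ↦ ?_⟩, fun h ↦ ⟨by lia, fun j hj ↦ h.2 (j + 1) (by lia)⟩⟩
    simpa [shift_apply] using h.2 (j - 1) (by lia)
  have hρ : (d.ρ ^ (i - 1 - 1) : MulAut V) (d.ρ v) = (d.ρ ^ (i - 1) : MulAut V) v := by
    rw [← MulAut.mul_apply, ← zpow_add_one, sub_add_cancel]
  rw [SpinalDatum.spinalFun, SpinalDatum.spinalFun, shift_apply, sub_add_cancel, hρ]
  classical exact if_congr hcyl rfl rfl

lemma spinal_apply_eq_sequenceCopy (d : SpinalDatum A V) (v : V) (ξ : ℤ → A) :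
    d.spinalCocycle.toPerm v ξ = sequenceCopy 1 (d.spinalCocycle.toPerm (d.ρ v))
      (sequenceCopy d.a₁ ((rootedCocycle A).toPerm (d.ω₁ v))
        (sequenceCopy d.a₂ ((rootedCocycle A).toPerm (d.ω₂ v)) ξ)) := by
  have hA (a b : A) {η : ℤ → A} (h : ¬ (η ∈ cylinder 0 ∧ η 0 = a⁻¹)) :
      sequenceCopy a ((rootedCocycle A).toPerm b) η = η :=
    sequenceCopy_apply_eq_self (fun _ ↦ rootedCocycle_toPerm_of_notMem b) h
  have hV {η : ℤ → A} (h : ¬ (η ∈ cylinder 0 ∧ η 0 = 1)) :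
      sequenceCopy 1 (d.spinalCocycle.toPerm (d.ρ v)) η = η :=
    sequenceCopy_apply_eq_self (fun _ ↦ d.spinalCocycle_toPerm_of_notMem _) (by simpa using h)
  have hne₁ : d.a₁⁻¹ ≠ 1 := inv_ne_one.2 d.a₁_ne_one
  have hne₂ : d.a₂⁻¹ ≠ 1 := inv_ne_one.2 d.a₂_ne_one
  have hne : d.a₁⁻¹ ≠ d.a₂⁻¹ := inv_injective.ne d.a₁_ne_a₂
  by_cases hξ : ξ ∈ cylinder 0
  swap
  · simp only [d.spinalCocycle_toPerm_of_notMem v hξ, hA, hV, hξ, false_and, not_false_eq_true]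
  by_cases h0 : ξ 0 = 1
  · rw [hA d.a₂ _ (by simp [h0, hne₂.symm]), hA d.a₁ _ (by simp [h0, hne₁.symm]),
      sequenceCopy_one_spinal_apply d v h0]
  rw [d.spinalCocycle_toPerm_of_ne_one v hξ h0]
  by_cases h₁ : ξ 0 = d.a₁⁻¹
  · rw [hA d.a₂ _ (by simp [h₁, hne]), sequenceCopy_rooted_apply _ hξ h₁, hV (by simp [h0]), h₁,
      d.label_a₁_inv]
  by_cases h₂ : ξ 0 = d.a₂⁻¹
  · rw [sequenceCopy_rooted_apply _ hξ h₂, hA d.a₁ _ (by simp [h₁]), hV (by simp [h0]), h₂,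
      d.label_a₂_inv]
  · rw [hA d.a₂ _ (by simp [h₂]), hA d.a₁ _ (by simp [h₁]), hV (by simp [h0])]
    simp [SpinalDatum.label, h₁, h₂]

lemma apply_eq_self_of_notMem_cylinder (d : SpinalDatum A V)
    (hy : y ∈ Set.range (rootedCocycle A).toPerm ∪ Set.range d.spinalCocycle.toPerm)
    (hξ : ξ ∉ cylinder 0) : y ξ = ξ := by
  obtain ⟨a, rfl⟩ | ⟨v, rfl⟩ := hy
  · exact rootedCocycle_toPerm_of_notMem a hξ
  · exact d.spinalCocycle_toPerm_of_notMem v hξ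

/-- The spinal representation by permutations of sequences. -/
noncomputable def sequenceRep (d : SpinalDatum A V) : SpinalRep d (Equiv.Perm (ℤ → A)) where
  ofA := (rootedCocycle A).toPerm
  ofV := d.spinalCocycle.toPerm
  t := shift A
  commute_copyHom x hx y hy a ha := by
    refine Equiv.Perm.Disjoint.commute fun ξ ↦ ?_
    by_cases h : ξ ∈ cylinder 0 ∧ ξ 0 = 1⁻¹
    · refine .inr (sequenceCopy_apply_eq_self (fun _ ↦ apply_eq_self_of_notMem_cylinder d hy) ?_)
      rintro ⟨-, h0⟩
      exact ha (inv_injective (h0.symm.trans h.2))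
    · exact .inl (sequenceCopy_apply_eq_self (fun _ ↦ apply_eq_self_of_notMem_cylinder d hx) h)
  ofV_eq v := Equiv.ext fun ξ ↦ spinal_apply_eq_sequenceCopy d v ξ

lemma apply_one_of_mem_parabolicGenerators (d : SpinalDatum A V) {p : Equiv.Perm (ℤ → A)}
    (hp : p ∈ parabolicGenerators (sequenceRep d).ofA (sequenceRep d).ofV (sequenceRep d).t) :
    p 1 = 1 := by
  obtain (rfl | ⟨v, rfl⟩) | hp := hp
  · rfl
  · funext i
    exact (congrArg (· * 1) (d.spinalFun_of_eq_one v rfl)).trans (one_mul 1)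
  · obtain ⟨a, ha, y, hy, rfl⟩ := Set.mem_iUnion₂.1 hp
    refine sequenceCopy_apply_eq_self (fun _ ↦ apply_eq_self_of_notMem_cylinder d hy) ?_
    rintro ⟨-, h⟩
    exact ha (inv_eq_one.1 h.symm)

end Sequences

/-! ## Steinberg representations in wreath products -/

section Wreath

open scoped Pointwise

variable {K Γ Ω : Type*} [Group K] [Group Γ] [MulAction Γ Ω]

variable (Γ) in
/-- The embedding of `K` in the unrestricted wreath product `K ≀ Γ` as the functions that are
constant on `U` and trivial outside `U`. -/
noncomputable def indicatorHom (U : Set Ω) : K →* (Ω → K) ⋊[mulAutArrow] Γ :=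
  SemidirectProduct.inl.comp ((Set.mulIndicatorHom K U).comp (Pi.constMonoidHom Ω K))

variable {U U' : Set Ω}

lemma indicatorHom_apply (U : Set Ω) (k : K) :
    indicatorHom Γ U k = SemidirectProduct.inl (U.mulIndicator fun _ ↦ k) := rfl

lemma commutatorElement_indicatorHom (k k' : K) :
    ⁅indicatorHom Γ U k, indicatorHom Γ U' k'⁆ = indicatorHom Γ (U ∩ U') ⁅k, k'⁆ := by
  simp only [indicatorHom_apply, ← map_commutatorElement SemidirectProduct.inl]
  congr 1
  funext ω
  by_cases h : ω ∈ U <;> by_cases h' : ω ∈ U' <;> simp [commutatorElement_def, h, h']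

lemma inr_mul_indicatorHom_mul_inv (g : Γ) (k : K) :
    SemidirectProduct.inr g * indicatorHom Γ U k * (SemidirectProduct.inr g)⁻¹ =
      indicatorHom Γ (g • U) k := by
  classical
  rw [indicatorHom_apply, ← map_inv, ← SemidirectProduct.inl_aut]
  refine congrArg SemidirectProduct.inl (funext fun ω ↦ ?_)
  exact if_congr Set.mem_smul_set_iff_inv_smul_mem.symm rfl rfl

variable {E : RootFamily K}

lemma rootConj_inr_indicatorHom (g : Γ) :
    rootConj (SemidirectProduct.inr g) (rootMap (indicatorHom Γ U) E) =
      rootMap (indicatorHom Γ (g • U)) E :=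
  funext₂ fun _ _ ↦ inr_mul_indicatorHom_mul_inv g _

lemma rootMap_indicatorHom_eq_one_iff (hE : E ≠ 1) :
    rootMap (indicatorHom Γ U) E = 1 ↔ U = ∅ := by
  refine ⟨fun h ↦ Set.eq_empty_of_forall_notMem fun ω hω ↦ hE (funext₂ fun i j ↦ ?_), ?_⟩
  · have hij := congrFun ((map_eq_one_iff _ SemidirectProduct.inl_injective).1
      (congrFun₂ h i j)) ω
    exact (Set.mulIndicator_of_mem hω fun _ ↦ E i j).symm.trans hij
  · rintro rfl
    funext i j
    rw [rootMap, indicatorHom_apply, Set.mulIndicator_empty]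
    exact map_one SemidirectProduct.inl

lemma rootCompatible_indicatorHom (hE : RootCompatible E E) :
    RootCompatible (rootMap (indicatorHom Γ U) E) (rootMap (indicatorHom Γ U') E) where
  commute i j k l hij hkl hjk hil := by
    have h := commutatorElement_eq_one_iff_commute.2 (hE.commute i j k l hij hkl hjk hil)
    rw [← commutatorElement_eq_one_iff_commute, rootMap, rootMap, commutatorElement_indicatorHom, h,
      map_one]
  commutator_eq i j k j' hij hjk hik hji hjk' := by
    simp only [rootMap, commutatorElement_indicatorHom,
      hE.commutator_eq i j k j' hij hjk hik hji hjk']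
  commutator_swap i j k _ _ _ := by
    simp only [rootMap, commutatorElement_indicatorHom, Set.inter_comm]

lemma rootMul_indicatorHom (hE : rootMul E E = E) :
    rootMul (rootMap (indicatorHom Γ U) E) (rootMap (indicatorHom Γ U') E) =
      rootMap (indicatorHom Γ (U ∩ U')) E := by
  conv_rhs => rw [← hE]
  funext i k
  simp only [rootMul, rootMap, apply_ite (indicatorHom Γ (U ∩ U')), map_one,
    commutatorElement_indicatorHom]

variable {A V : Type*} [Group A] [Group V] {d : SpinalDatum A V}

/-- The image of a spinal representation under a homomorphism. -/
def SpinalRep.map {G : Type*} [Group G] (φ : SpinalRep d G) (ψ : G →* Γ) : SpinalRep d Γ where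
  ofA := ψ.comp φ.ofA
  ofV := ψ.comp φ.ofV
  t := ψ φ.t
  commute_copyHom := by
    simp only [MonoidHom.coe_comp, Set.range_comp, ← Set.image_union]
    rintro _ ⟨x, hx, rfl⟩ _ ⟨y, hy, rfl⟩ a ha
    rw [← map_copyHom, ← map_copyHom]
    exact (φ.commute_copyHom x hx y hy a ha).map ψ
  ofV_eq v := by
    simp only [MonoidHom.coe_comp, Function.comp_apply, ← map_copyHom, ← map_mul, ← φ.ofV_eq]

/-- The Steinberg representation in `K ≀ Γ` that extends a spinal representation in `Γ` by the
functions supported on a set that is invariant under the parabolic subgroup. -/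
noncomputable def SpinalRep.wreath (φ : SpinalRep d Γ) (hE : RootCompatible E E) (U : Set Ω)
    (hU : ∀ p ∈ parabolicGenerators φ.ofA φ.ofV φ.t, p • U = U) :
    SteinbergRep d E ((Ω → K) ⋊[mulAutArrow] Γ) where
  toSpinalRep := φ.map SemidirectProduct.inr
  ofK := indicatorHom Γ U
  commute_ofK k := by
    simp only [SpinalRep.map, MonoidHom.coe_comp, ← image_parabolicGenerators]
    rintro _ ⟨p, hp, rfl⟩
    refine Commute.symm (mul_inv_eq_iff_eq_mul.1 ?_)
    rw [inr_mul_indicatorHom_mul_inv, hU p hp]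
  rootCompatible_rootConj a := by
    simp only [SpinalRep.map, MonoidHom.comp_apply, rootConj_inr_indicatorHom]
    exact rootCompatible_indicatorHom hE

end Wreath

/-! ## Normal subgroups indexed by sets of natural numbers -/

lemma isPerfect_normalClosure_iUnion {G ι : Type*} [Group G] (H : ι → Subgroup G)
    [∀ i, Group.IsPerfect (H i)] :
    Group.IsPerfect (Subgroup.normalClosure (⋃ i, (H i : Set G))) := by
  set N := Subgroup.normalClosure (⋃ i, (H i : Set G))
  have hHN (i : ι) : H i ≤ N := 
    (Set.subset_iUnion (fun i ↦ (H i : Set G)) i).trans Subgroup.subset_normalClosure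
  have : N.Normal := Subgroup.normalClosure_normal
  refine Subgroup.isPerfect_iff.2 ((Subgroup.commutator_le_self _).antisymm ?_)
  refine Subgroup.normalClosure_le_normal (Set.iUnion_subset fun i ↦ ?_)
  exact Subgroup.commutator_eq_self.ge.trans (Subgroup.commutator_mono (hHN i) (hHN i))

section TripleProduct

variable {A V K : Type*} [Group A] [Group V] [Group K] {G : Type*} [Group G]
variable {d : SpinalDatum A V} {E : RootFamily K}

namespace SteinbergRep

/-- The product of the conjugates of `E` by `1`, `a₁` and `t⁻¹ ^ n * a₁`. -/
def tripleProduct (φ : SteinbergRep d E G) (n : ℕ) : RootFamily G :=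
  rootMul (rootMap φ.ofK E) (rootMul (rootConj (φ.ofA d.a₁) (rootMap φ.ofK E))
    (rootConj (φ.t⁻¹ ^ n * φ.ofA d.a₁) (rootMap φ.ofK E)))

lemma rootMap_lift_tripleProduct (φ : SteinbergRep d E G) (n : ℕ) :
    rootMap φ.lift ((universal d E).tripleProduct n) = φ.tripleProduct n := by
  have hK : rootMap φ.lift (rootMap (universal d E).ofK E) = rootMap φ.ofK E :=
    funext₂ fun i j ↦ φ.lift_ofK (E i j)
  simp only [tripleProduct, ← rootMul_rootMap, rootMap_rootConj, hK, map_mul, map_pow, map_inv,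
    lift_ofA, lift_t]

lemma rootMul_tripleProduct_self [Finite A] (φ : SteinbergRep d E G) (hE : rootMul E E = E)
    (n : ℕ) : rootMul (φ.tripleProduct n) (φ.tripleProduct n) = φ.tripleProduct n := by
  have hS : IsSteinbergSet φ.conjugates := isSteinbergSet_conjugates hE
  have hmem {g : G} (hg : g ∈ φ.ambient) :
      IsRootProduct φ.conjugates (rootConj g (rootMap φ.ofK E)) := .of_mem ⟨g, hg, rfl⟩
  have ha : φ.ofA d.a₁ ∈ φ.ambient := φ.base_le_ambient (φ.ofA_mem_base _)
  have hta : φ.t⁻¹ ^ n * φ.ofA d.a₁ ∈ φ.ambient :=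
    mul_mem (pow_mem (inv_mem φ.t_mem_ambient) n) ha
  have hone : IsRootProduct φ.conjugates (rootMap φ.ofK E) := by
    simpa only [rootConj_one] using hmem (one_mem _)
  exact (hone.mul hS ((hmem ha).mul hS (hmem hta))).rootMul_self hS

end SteinbergRep

end TripleProduct

section Separation

open scoped Pointwise

variable {A V K : Type*}

/-- The sets of sequences whose elements branch off from each other at only two positions, `n`
apart. -/
def levelSets (A : Type*) (n : ℤ) : Set (Set (ℤ → A)) :=
  {s | ∃ r, ∀ ξ ∈ s, ∀ η ∈ s, ∀ k, IsFirstDifference ξ η k → k = r ∨ k = r + n}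

/-- The members of `levelSets A n` that contain the sequence `x`. -/
def levelSetsThrough (n : ℤ) (x : ℤ → A) : Set (Set (ℤ → A)) := {s ∈ levelSets A n | x ∈ s}

variable {n : ℤ}

lemma mem_stabilizer_levelSets {σ : Equiv.Perm (ℤ → A)} (c : ℤ)
    (hσ : ∀ {ξ η k}, IsFirstDifference (σ ξ) (σ η) k ↔ IsFirstDifference ξ η (k + c)) :
    σ ∈ MulAction.stabilizer (Equiv.Perm (ℤ → A)) (levelSets A n) := by
  refine MulAction.mem_stabilizer_set.2 fun s ↦ (Equiv.addRight c).exists_congr fun r ↦ ?_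
  simp only [← Set.image_smul, Set.forall_mem_image, Equiv.Perm.smul_def, hσ]
  refine forall₄_congr fun ξ _ η _ ↦ (Equiv.addRight c).forall_congr fun k ↦ ?_
  simp only [Equiv.coe_addRight, add_right_comm r c, add_left_inj]

lemma smul_levelSetsThrough {σ : Equiv.Perm (ℤ → A)}
    (hσ : σ ∈ MulAction.stabilizer (Equiv.Perm (ℤ → A)) (levelSets A n)) (x : ℤ → A) :
    σ • levelSetsThrough n x = levelSetsThrough n (σ x) := by
  ext s
  rw [Set.mem_smul_set_iff_inv_smul_mem]
  exact and_congr (MulAction.mem_stabilizer_set.1 (inv_mem hσ) s) Set.mem_inv_smul_set_iff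

variable [Group A] [Group V] [Group K] (d : SpinalDatum A V) {E : RootFamily K}

lemma ambient_sequenceRep_le_stabilizer_levelSets (n : ℤ) :
    (sequenceRep d).ambient ≤ MulAction.stabilizer (Equiv.Perm (ℤ → A)) (levelSets A n) := by
  refine (Subgroup.closure_le _).2 (Set.insert_subset ?_ (Set.union_subset ?_ ?_))
  · exact mem_stabilizer_levelSets 1 isFirstDifference_shift_iff
  · rintro _ ⟨a, rfl⟩
    refine mem_stabilizer_levelSets 0 fun {ξ η k} ↦ ?_
    rw [add_zero]
    exact (rootedCocycle A).isFirstDifference_toPerm_iff a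
  · rintro _ ⟨v, rfl⟩
    refine mem_stabilizer_levelSets 0 fun {ξ η k} ↦ ?_
    rw [add_zero]
    exact d.spinalCocycle.isFirstDifference_toPerm_iff v

/-- The Steinberg representation in the wreath product over the sets of sequences that is supported
on the members of `levelSets A n` containing the constant sequence `1`. -/
noncomputable def sequenceWreath (hE : RootCompatible E E) (n : ℤ) :
    SteinbergRep d E ((Set (ℤ → A) → K) ⋊[mulAutArrow] Equiv.Perm (ℤ → A)) :=
  (sequenceRep d).wreath hE (levelSetsThrough n 1) fun _ hp ↦
    (smul_levelSetsThrough (ambient_sequenceRep_le_stabilizer_levelSets d n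
      ((sequenceRep d).parabolicGenerators_subset_ambient hp)) 1).trans
      (congrArg _ (apply_one_of_mem_parabolicGenerators d hp))

lemma rootedCocycle_toPerm_one (a : A) : (rootedCocycle A).toPerm a 1 = Pi.mulSingle 0 a := by
  have hmem : (1 : ℤ → A) ∈ cylinder 0 := fun _ _ ↦ rfl
  rw [rootedCocycle_toPerm_of_mem a hmem, Pi.one_apply, mul_one]
  rfl

lemma shift_inv_pow_mulSingle (m : ℕ) (a : A) :
    ((shift A)⁻¹ ^ m) (Pi.mulSingle 0 a) = Pi.mulSingle (m : ℤ) a := by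
  funext i
  rw [shift_inv_pow_apply, Pi.mulSingle_apply, Pi.mulSingle_apply]
  exact if_congr sub_eq_zero rfl rfl

lemma rootConj_sequenceWreath (hE : RootCompatible E E) (n : ℤ) {g : Equiv.Perm (ℤ → A)}
    (hg : g ∈ (sequenceRep d).ambient) :
    rootConj (SemidirectProduct.inr g) (rootMap (sequenceWreath d hE n).ofK E) =
      rootMap (indicatorHom _ (levelSetsThrough n (g 1))) E := by
  rw [← smul_levelSetsThrough (ambient_sequenceRep_le_stabilizer_levelSets d n hg)]
  exact rootConj_inr_indicatorHom g

lemma tripleProduct_sequenceWreath (hE : RootCompatible E E) (hE' : rootMul E E = E) (n : ℤ)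
    (m : ℕ) : (sequenceWreath d hE n).tripleProduct m =
      rootMap (indicatorHom _ (levelSetsThrough n 1 ∩ (levelSetsThrough n (Pi.mulSingle 0 d.a₁) ∩
        levelSetsThrough n (Pi.mulSingle m d.a₁)))) E := by
  have ha : (sequenceRep d).ofA d.a₁ ∈ (sequenceRep d).ambient :=
    (sequenceRep d).base_le_ambient ((sequenceRep d).ofA_mem_base _)
  have hta : (sequenceRep d).t⁻¹ ^ m * (sequenceRep d).ofA d.a₁ ∈ (sequenceRep d).ambient :=
    mul_mem (pow_mem (inv_mem (sequenceRep d).t_mem_ambient) m) ha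
  have ha_one : (sequenceRep d).ofA d.a₁ 1 = Pi.mulSingle 0 d.a₁ := rootedCocycle_toPerm_one d.a₁
  have hta_one : ((sequenceRep d).t⁻¹ ^ m * (sequenceRep d).ofA d.a₁) 1 =
      Pi.mulSingle (m : ℤ) d.a₁ := by
    rw [Equiv.Perm.mul_apply, ha_one]
    exact shift_inv_pow_mulSingle m d.a₁
  have hta_eq : (sequenceWreath d hE n).t⁻¹ ^ m * (sequenceWreath d hE n).ofA d.a₁ =
      SemidirectProduct.inr ((sequenceRep d).t⁻¹ ^ m * (sequenceRep d).ofA d.a₁) := by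
    simp only [map_mul, map_pow, map_inv]
    rfl
  have hconj_a : rootConj ((sequenceWreath d hE n).ofA d.a₁) _ = _ :=
    rootConj_sequenceWreath d hE n ha
  rw [SteinbergRep.tripleProduct, hconj_a, hta_eq, rootConj_sequenceWreath d hE n hta, ha_one,
    hta_one, rootMul_indicatorHom hE']
  exact rootMul_indicatorHom hE'

lemma isFirstDifference_one_mulSingle {a : A} (ha : a ≠ 1) (m : ℤ) :
    IsFirstDifference 1 (Pi.mulSingle m a) m := by
  refine ⟨by simpa using ha.symm, fun i hi ↦ le_of_eq ?_⟩
  by_contra hne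
  exact hi (by rw [Pi.mulSingle_eq_of_ne' hne, Pi.one_apply])

lemma isFirstDifference_mulSingle {a : A} (ha : a ≠ 1) {m m' : ℤ} (hm : m < m') :
    IsFirstDifference (Pi.mulSingle m a) (Pi.mulSingle m' a) m := by
  refine ⟨by simpa [hm.ne] using ha, fun i hi ↦ le_of_not_gt fun him ↦ hi ?_⟩
  rw [Pi.mulSingle_eq_of_ne him.ne, Pi.mulSingle_eq_of_ne (him.trans hm).ne]

lemma nonempty_levelSetsThrough_inter_iff {a : A} (ha : a ≠ 1) {m n : ℤ} (hm : 0 < m) (hn : 0 < n) :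
    (levelSetsThrough n 1 ∩ (levelSetsThrough n (Pi.mulSingle 0 a) ∩
      levelSetsThrough n (Pi.mulSingle m a))).Nonempty ↔ m = n := by
  constructor
  · rintro ⟨s, ⟨⟨r, hr⟩, h1⟩, ⟨-, h0⟩, ⟨-, hs⟩⟩
    have hr0 := hr _ h1 _ h0 _ (isFirstDifference_one_mulSingle ha 0)
    have hrm := hr _ h1 _ hs _ (isFirstDifference_one_mulSingle ha m)
    omega
  · rintro rfl
    suffices h : {1, Pi.mulSingle 0 a, Pi.mulSingle m a} ∈ levelSets A m from
      ⟨_, ⟨h, by simp⟩, ⟨h, by simp⟩, ⟨h, by simp⟩⟩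
    refine ⟨0, ?_⟩
    rintro ξ (rfl | rfl | rfl) η (rfl | rfl | rfl) k hk
    · exact absurd rfl hk.ne
    · exact .inl (hk.unique (isFirstDifference_one_mulSingle ha 0))
    · exact .inr ((hk.unique (isFirstDifference_one_mulSingle ha m)).trans (zero_add m).symm)
    · exact .inl (hk.symm.unique (isFirstDifference_one_mulSingle ha 0))
    · exact absurd rfl hk.ne
    · exact .inl (hk.unique (isFirstDifference_mulSingle ha hm))
    · exact .inr ((hk.symm.unique (isFirstDifference_one_mulSingle ha m)).trans (zero_add m).symm)
    · exact .inl (hk.symm.unique (isFirstDifference_mulSingle ha hm))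
    · exact absurd rfl hk.ne

/-- The normal closure of the triple products with indices `n + 1` for `n ∈ T`. -/
def tripleSubgroup (E : RootFamily K) (T : Set ℕ) :
    Subgroup (SteinbergGroup d E) :=
  Subgroup.normalClosure
    (⋃ n ∈ T, rootSubgroup ((SteinbergRep.universal d E).tripleProduct (n + 1)))

instance (T : Set ℕ) : (tripleSubgroup d E T).Normal := Subgroup.normalClosure_normal

lemma tripleSubgroup_le_ker_iff {T : Set ℕ} {G : Type*} [Group G] (φ : SteinbergRep d E G) :
    tripleSubgroup d E T ≤ φ.lift.ker ↔ ∀ n ∈ T, φ.tripleProduct (n + 1) = 1 := by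
  have hle : tripleSubgroup d E T ≤ φ.lift.ker ↔ ∀ n ∈ T,
      rootSubgroup ((SteinbergRep.universal d E).tripleProduct (n + 1)) ≤ φ.lift.ker := by
    refine ⟨fun h n hn ↦ ?_, fun h ↦ Subgroup.normalClosure_le_normal (Set.iUnion₂_subset h)⟩
    exact (Set.subset_biUnion_of_mem hn).trans (Subgroup.subset_normalClosure.trans h)
  simp only [hle, rootSubgroup_le_iff, MonoidHom.mem_ker, ← φ.rootMap_lift_tripleProduct,
    funext_iff]
  rfl

lemma tripleSubgroup_le_ker_sequenceWreath_iff (hE : RootCompatible E E) (hE' : rootMul E E = E)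
    (hne : E ≠ 1) {T : Set ℕ} {n : ℕ} :
    tripleSubgroup d E T ≤ (sequenceWreath d hE (n + 1)).lift.ker ↔ n ∉ T := by
  have hone (m : ℕ) : (sequenceWreath d hE (n + 1)).tripleProduct (m + 1) = 1 ↔ m ≠ n := by
    rw [tripleProduct_sequenceWreath d hE hE', rootMap_indicatorHom_eq_one_iff hne,
      ← Set.not_nonempty_iff_eq_empty, nonempty_levelSetsThrough_inter_iff d.a₁_ne_one
        (by positivity) (by positivity)]
    omega
  simp only [tripleSubgroup_le_ker_iff, hone]
  exact ⟨fun h hn ↦ h n hn rfl, fun h m hm hmn ↦ h (hmn ▸ hm)⟩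

lemma tripleSubgroup_injective (hE : RootCompatible E E) (hE' : rootMul E E = E)
    (hne : E ≠ 1) : Function.Injective (tripleSubgroup d E) := fun T T' h ↦ by
  ext n
  rw [← not_iff_not, ← tripleSubgroup_le_ker_sequenceWreath_iff d hE hE' hne, h,
    tripleSubgroup_le_ker_sequenceWreath_iff d hE hE' hne]

lemma isPerfect_tripleSubgroup [Finite A] (hE' : rootMul E E = E) (T : Set ℕ) :
    Group.IsPerfect (tripleSubgroup d E T) := by
  have (n : T) := isPerfect_rootSubgroup
    ((SteinbergRep.universal d E).rootMul_tripleProduct_self hE' (n + 1))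
  rw [tripleSubgroup, Set.biUnion_eq_iUnion]
  exact isPerfect_normalClosure_iUnion _

end Separation

/-! ## Elementary matrices -/

section ElementaryMatrices

variable {G : Type*} [Group G]

/-- A root family, viewed in the subgroup that it generates. -/
def toRootSubgroup (f : RootFamily G) : RootFamily (rootSubgroup f) :=
  fun i j ↦ ⟨f i j, apply_mem_rootSubgroup f i j⟩

lemma rootSubgroup_toRootSubgroup (f : RootFamily G) : rootSubgroup (toRootSubgroup f) = ⊤ := by
  refine eq_top_iff.2 (Subgroup.closure_closure_coe_preimage.ge.trans (Subgroup.closure_mono ?_))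
  rintro x ⟨p, hp⟩
  exact ⟨p, Subtype.ext hp⟩

/-- The relations `⁅f i j, f j k⁆ = f i k` and `⁅f i j, f k l⁆ = 1` between elementary matrices with
entry `1`. -/
structure IsElementaryFamily (f : RootFamily G) : Prop where
  apply_self : ∀ i, f i i = 1
  rootCommute : RootCommute f f
  commutator_eq : ∀ i j k, i ≠ j → j ≠ k → i ≠ k → ⁅f i j, f j k⁆ = f i k

namespace IsElementaryFamily

variable {f : RootFamily G}

lemma toRootSubgroup (hf : IsElementaryFamily f) :
    IsElementaryFamily (toRootSubgroup f) where
  apply_self i := Subtype.ext (hf.apply_self i)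
  rootCommute i j k l hij hkl hjk hil := Subtype.ext (hf.rootCommute i j k l hij hkl hjk hil)
  commutator_eq i j k hij hjk hik := Subtype.ext (hf.commutator_eq i j k hij hjk hik)

lemma rootCompatible (hf : IsElementaryFamily f) : RootCompatible f f where
  commute := hf.rootCommute
  commutator_eq i j k j' hij hjk hik hji hjk' := by
    rw [hf.commutator_eq i j k hij hjk hik, hf.commutator_eq i j' k hji.symm hjk' hik]
  commutator_swap _ _ _ _ _ _ := rfl

lemma rootMul_self (hf : IsElementaryFamily f) : rootMul f f = f := by
  funext i k
  obtain ⟨hi, hk⟩ := thirdIndex_ne i k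
  obtain rfl | hik := eq_or_ne i k
  · rw [rootMul_self_index, hf.apply_self]
  · rw [rootMul_of_ne _ _ hik, hf.commutator_eq _ _ _ hi.symm hk hik]

end IsElementaryFamily

variable (R : Type*) [Ring R]

/-- The elementary matrices with entry `1`. -/
def elementaryUnits : RootFamily (Matrix (Fin 5) (Fin 5) R)ˣ := fun i j ↦
  if hij : i = j then 1 else
    { val := 1 + .single i j 1
      inv := 1 - .single i j 1
      val_inv := by simp [mul_sub, add_mul, Matrix.single_mul_single_of_ne, Ne.symm hij]
      inv_val := by simp [mul_add, sub_mul, Matrix.single_mul_single_of_ne, Ne.symm hij] }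

variable {R} in
lemma val_elementaryUnits_of_ne {i j : Fin 5} (hij : i ≠ j) :
    (elementaryUnits R i j).val = 1 + .single i j 1 :=
  congrArg Units.val (dif_neg hij)

lemma isElementaryFamily_elementaryUnits : IsElementaryFamily (elementaryUnits R) where
  apply_self i := dif_pos rfl
  rootCommute i j k l hij hkl hjk hil := by
    refine Units.ext ?_
    simp only [Units.val_mul, val_elementaryUnits_of_ne hij, val_elementaryUnits_of_ne hkl,
      mul_add, add_mul, Matrix.single_mul_single_of_ne _ _ _ _ hjk,
      Matrix.single_mul_single_of_ne _ _ _ _ hil.symm, one_mul, mul_one]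
    abel
  commutator_eq i j k hij hjk hik := by
    rw [commutatorElement_def, mul_inv_eq_iff_eq_mul, mul_inv_eq_iff_eq_mul]
    refine Units.ext ?_
    simp only [Units.val_mul, val_elementaryUnits_of_ne hij, val_elementaryUnits_of_ne hjk,
      val_elementaryUnits_of_ne hik, mul_add, add_mul, Matrix.single_mul_single_same,
      Matrix.single_mul_single_of_ne _ _ _ _ hjk.symm,
      Matrix.single_mul_single_of_ne _ _ _ _ hik.symm, one_mul, mul_one, add_zero]
    abel

lemma elementaryUnits_ne_one [Nontrivial R] : elementaryUnits R ≠ 1 := fun h ↦ by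
  have h01 := congrArg Units.val (congrFun₂ h 0 1)
  rw [val_elementaryUnits_of_ne zero_ne_one] at h01
  simpa using congrFun₂ h01 0 1

end ElementaryMatrices

/-! ## A spinal datum -/

section SpinalDatumExample

variable {A : Type*} [Group A]

/-- The homomorphism from the additive group `𝔽₃²` to `A` that sends `v` to `a ^ v₁`. -/
def fstPowHom (a : A) (ha : a ^ 3 = 1) :
    Multiplicative (ZMod 3 × ZMod 3) →* A where
  toFun v := a ^ v.toAdd.1.val
  map_one' := pow_zero a
  map_mul' v u := by
    rw [← pow_add, toAdd_mul, Prod.fst_add, ZMod.val_add, ← pow_eq_pow_mod _ ha]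

lemma fstPowHom_of_toAdd_fst_eq_zero {a : A} {ha : a ^ 3 = 1}
    {v : Multiplicative (ZMod 3 × ZMod 3)} (hv : v.toAdd.1 = 0) : fstPowHom a ha v = 1 := by
  change a ^ v.toAdd.1.val = 1
  rw [hv, ZMod.val_zero, pow_zero]

lemma fstPowHom_ofAdd_one_zero (a : A) (ha : a ^ 3 = 1) :
    fstPowHom a ha (.ofAdd (1, 0)) = a :=
  pow_one a

/-- The automorphism `(x, y) ↦ (y, x + y)` of `𝔽₃²`. -/
def fibonacciEquiv : Multiplicative (ZMod 3 × ZMod 3) ≃* Multiplicative (ZMod 3 × ZMod 3) :=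
  AddEquiv.toMultiplicative
    { toFun p := (p.2, p.1 + p.2)
      invFun p := (p.2 - p.1, p.1)
      left_inv p := by simp
      right_inv p := by simp
      map_add' p q := Prod.ext rfl (add_add_add_comm ..) }

lemma exists_toAdd_fst_fibonacciEquiv_iterate_eq_zero (v : Multiplicative (ZMod 3 × ZMod 3)) :
    ∃ n : ℕ, (fibonacciEquiv^[n] v).toAdd.1 = 0 := by
  have : ∀ p : ZMod 3 × ZMod 3,
      ∃ n : Fin 4, ((fun p : ZMod 3 × ZMod 3 ↦ (p.2, p.1 + p.2))^[n] p).1 = 0 := by decide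
  obtain ⟨n, hn⟩ := this v.toAdd
  exact ⟨n, hn⟩

/-- The `3`-cycle `(0 1 2)`. -/
def cycle₁ : Equiv.Perm (Fin 5) := Equiv.swap 0 1 * Equiv.swap 1 2

/-- The `3`-cycle `(2 3 4)`. -/
def cycle₂ : Equiv.Perm (Fin 5) := Equiv.swap 2 3 * Equiv.swap 3 4

/-- The alternating group of degree five, as the group generated by two `3`-cycles. -/
abbrev CycleGroup : Type := Subgroup.closure {cycle₁, cycle₂}

namespace CycleGroup

/-- The first generator. -/
def gen₁ : CycleGroup := ⟨cycle₁, Subgroup.subset_closure (.inl rfl)⟩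

/-- The second generator. -/
def gen₂ : CycleGroup := ⟨cycle₂, Subgroup.subset_closure (.inr rfl)⟩

lemma gen₁_pow_three : gen₁ ^ 3 = 1 := by decide

lemma gen₂_pow_three : gen₂ ^ 3 = 1 := by decide

lemma eq_top_of_gen_mem {Q : Subgroup CycleGroup} (h₁ : gen₁ ∈ Q) (h₂ : gen₂ ∈ Q) : Q = ⊤ := by
  rw [eq_top_iff, ← Subgroup.closure_closure_coe_preimage, Subgroup.closure_le]
  rintro ⟨_, _⟩ (rfl | rfl)
  exacts [h₁, h₂]

set_option maxRecDepth 1000 in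
lemma eq_top_of_commutator_mem {Q : Subgroup CycleGroup} (hQ : ⁅gen₁, gen₂⁆ ∈ Q)
    (h₁ : ∀ x ∈ Q, gen₁ * x * gen₁⁻¹ ∈ Q) (h₂ : ∀ x ∈ Q, gen₂ * x * gen₂⁻¹ ∈ Q) : Q = ⊤ := by
  have hgen₁ : gen₁ = gen₂ * (gen₂ * (gen₁ * ⁅gen₁, gen₂⁆ * gen₁⁻¹) * gen₂⁻¹) * gen₂⁻¹ := by decide
  have hgen₂ : gen₂ =
      gen₁ * (gen₂ * (gen₁ * (gen₁ * ⁅gen₁, gen₂⁆ * gen₁⁻¹) * gen₁⁻¹) * gen₂⁻¹) * gen₁⁻¹ := by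
    decide
  refine eq_top_of_gen_mem ?_ ?_
  · rw [hgen₁]
    exact h₂ _ (h₂ _ (h₁ _ hQ))
  · rw [hgen₂]
    exact h₁ _ (h₂ _ (h₁ _ (h₁ _ hQ)))

/-- The spinal datum in which both labels depend on the first coordinate of `𝔽₃²`. -/
def spinalDatum : SpinalDatum CycleGroup (Multiplicative (ZMod 3 × ZMod 3)) where
  ρ := fibonacciEquiv
  ω₁ := fstPowHom gen₁ gen₁_pow_three
  ω₂ := fstPowHom gen₂ gen₂_pow_three
  a₁ := gen₁
  a₂ := gen₂
  not_commute := by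
    rw [commute_iff_eq]
    decide
  mul_inv_mul_ne := by decide
  exists_iterate_eq_one v := by
    obtain ⟨n, hn⟩ := exists_toAdd_fst_fibonacciEquiv_iterate_eq_zero v
    exact ⟨n, fstPowHom_of_toAdd_fst_eq_zero hn, fstPowHom_of_toAdd_fst_eq_zero hn⟩
  eq_top_of_commutator_mem Q hQ h₁ h₂ := by
    refine eq_top_of_commutator_mem ?_ ?_ ?_
    · simpa only [fstPowHom_ofAdd_one_zero] using hQ (.ofAdd (1, 0)) (.ofAdd (1, 0))
    · simpa only [fstPowHom_ofAdd_one_zero] using h₁ (.ofAdd (1, 0))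
    · simpa only [fstPowHom_ofAdd_one_zero] using h₂ (.ofAdd (1, 0))

end CycleGroup

end SpinalDatumExample

/-! ## Uncountably many quotients -/

section Quotients

variable {G : Type*} [Group G]

lemma IsTorsionByInt.quotient_of_isPerfect (hG : IsTorsionByInt G) (N : Subgroup G) [N.Normal]
    [Group.IsPerfect N] : IsTorsionByInt (G ⧸ N) := by
  obtain ⟨χ, hχ⟩ := hG
  have hN : N ≤ χ.ker := Subgroup.commutator_eq_self.ge.trans
    ((Subgroup.commutator_mono le_top le_top).trans (Abelianization.commutator_subset_ker χ))
  refine ⟨QuotientGroup.lift N χ hN, fun g hg ↦ ?_⟩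
  obtain ⟨g, rfl⟩ := QuotientGroup.mk'_surjective N g
  exact (QuotientGroup.mk' N).isOfFinOrder (hχ g hg)

variable [Group.FG G]

lemma countable_of_fg : Countable G := by
  obtain ⟨α, _, φ, hφ⟩ := Group.fg_iff_exists_freeGroup_hom_surjective_finite.1 ‹Group.FG G›
  exact hφ.countable

lemma countable_monoidHom_of_fg {Q : Type*} [Group Q] [Countable Q] : Countable (G →* Q) := by
  obtain ⟨α, _, φ, hφ⟩ := Group.fg_iff_exists_freeGroup_hom_surjective_finite.1 ‹Group.FG G›
  refine Function.Injective.countable (f := fun ψ : G →* Q ↦ ψ ∘ φ ∘ FreeGroup.of) fun ψ ψ' h ↦ ?_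
  exact (MonoidHom.cancel_right hφ).1 (FreeGroup.ext_hom _ _ fun a ↦ congrFun h a)

variable {ι : Type*} {N : ι → Subgroup G} [∀ i, (N i).Normal]

lemma countable_setOf_nonempty_quotient_mulEquiv (hN : Function.Injective N) (i : ι) :
    {j | Nonempty (G ⧸ N j ≃* G ⧸ N i)}.Countable := by
  have : Countable G := countable_of_fg
  have : Countable (G ⧸ N i) := Quotient.countable
  have : Countable (G →* G ⧸ N i) := countable_monoidHom_of_fg
  let F (j : {j | Nonempty (G ⧸ N j ≃* G ⧸ N i)}) : G →* G ⧸ N i :=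
    (j.2.some : G ⧸ N j.1 →* G ⧸ N i).comp (QuotientGroup.mk' (N j.1))
  have hF j : (F j).ker = N j.1 :=
    (MonoidHom.ker_mulEquiv_comp _ j.2.some).trans (QuotientGroup.ker_mk' _)
  exact Set.countable_coe_iff.1 <| Function.Injective.countable (f := F) fun j j' h ↦
    Subtype.ext (hN (by rw [← hF, ← hF, h]))

theorem exists_uncountable_pairwise_not_nonempty_mulEquiv [Uncountable ι]
    (hN : Function.Injective N) : ∃ s : Set ι, Uncountable s ∧
      s.Pairwise fun i j ↦ ¬ Nonempty (G ⧸ N i ≃* G ⧸ N j) := by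
  let r : Setoid ι :=
    { r i j := Nonempty (G ⧸ N i ≃* G ⧸ N j)
      iseqv := ⟨fun _ ↦ ⟨.refl _⟩, .map .symm, .map2 .trans⟩ }
  refine ⟨Set.range (Quotient.out (s := r)), not_countable_iff.1 fun hs ↦ ?_, ?_⟩
  · refine Set.not_countable_univ (α := ι)
      ((hs.to_set.biUnion fun i _ ↦ countable_setOf_nonempty_quotient_mulEquiv hN i).mono
        fun i _ ↦ ?_)
    exact Set.mem_biUnion ⟨⟦i⟧, rfl⟩ (r.symm (Quotient.mk_out i))
  · rintro _ ⟨i, rfl⟩ _ ⟨j, rfl⟩ hne h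
    exact hne (congrArg _ (Quotient.out_equiv_out.1 h))

end Quotients

lemma uncountable_set_nat : Uncountable (Set ℕ) := by
  refine not_countable_iff.1 fun _ ↦ ?_
  obtain ⟨f, hf⟩ := exists_injective_nat (Set ℕ)
  exact Function.cantor_injective f hf

lemma fg_presentedGroup {α : Type*} [Finite α] (rels : Set (FreeGroup α)) :
    Group.FG (PresentedGroup rels) :=
  Group.fg_of_surjective (PresentedGroup.mk_surjective rels)

/-- **Theorem B.** There are uncountably many pairwise non-isomorphic groups of type `FP₂`
over `ℤ`, none of which contains a subgroup isomorphic to a Baumslag–Solitar group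
`BS(m,n)` (in particular none contains `ℤ × ℤ`). -/
theorem exists_uncountable_family_FP2_no_BS_subgroup :
    ∃ (I : Type) (_ : Uncountable I) (H : I → Type) (_ : ∀ i, Group (H i)),
      (∀ i, IsTypeFP2 (H i)) ∧
      (∀ i, HasNoBSSubgroup (H i)) ∧
      (∀ i, ∀ K : Subgroup (H i), ¬ Nonempty (K ≃* Multiplicative (ℤ × ℤ))) ∧
      (∀ i j, i ≠ j → ¬ Nonempty (H i ≃* H j)) := by
  let d := CycleGroup.spinalDatum
  let E := toRootSubgroup (elementaryUnits (ZMod 2))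
  have hE : IsElementaryFamily E := (isElementaryFamily_elementaryUnits (ZMod 2)).toRootSubgroup
  have hne : E ≠ 1 := fun h ↦ elementaryUnits_ne_one (ZMod 2) <|
    funext₂ fun i j ↦ congrArg Subtype.val (congrFun₂ h i j)
  have hperfect (T : Set ℕ) : Group.IsPerfect (tripleSubgroup d E T) :=
    isPerfect_tripleSubgroup d hE.rootMul_self T
  have htorsion : IsTorsionByInt (SteinbergGroup d E) :=
    ⟨(SteinbergRep.toInt d E).lift, fun _ ↦ SteinbergRep.isOfFinOrder_of_lift_toInt_eq_one d E
      hE.rootMul_self (rootSubgroup_toRootSubgroup _)⟩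
  have htorsion_quotient (T : Set ℕ) := htorsion.quotient_of_isPerfect (tripleSubgroup d E T)
  have : Uncountable (Set ℕ) := uncountable_set_nat
  have : Group.FG (SteinbergGroup d E) := fg_presentedGroup _
  obtain ⟨s, hs, hs_iso⟩ := exists_uncountable_pairwise_not_nonempty_mulEquiv
    (tripleSubgroup_injective d hE.rootCompatible hE.rootMul_self hne)
  refine ⟨s, hs, fun T ↦ SteinbergGroup d E ⧸ tripleSubgroup d E T,
    fun T ↦ inferInstance, fun T ↦ ?_, fun T ↦ (htorsion_quotient T).hasNoBSSubgroup,
    fun T ↦ (htorsion_quotient T).not_nonempty_mulEquiv_int_prod, fun T T' hTT' ↦ ?_⟩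
  · exact isTypeFP2_quotient_of_isPerfect (finite_steinbergRelators d E) _
  · exact hs_iso T.2 T'.2 (Subtype.coe_ne_coe.2 hTT')
end

section
/- Let n : ℕ, let A and T be sets of elements of the free group Fₙ on generators x₁,…,xₙ, and for each subset Z ⊆ T let G_Z denote the presented group Fₙ/⟨⟨A ∪ Z⟩⟩ (the quotient of Fₙ by the normal closure of A ∪ Z). Assume that for every Z ⊆ T and every r ∈ T, the image of r in G_Z is trivial if and only if r ∈ Z. Then for every fixed Z₀ ⊆ T, the set {Z ⊆ T | G_Z is isomorphic to G_{Z₀}} is countable. -/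
/-- Given a fixed set `A` of relators and a subset `Z` of an auxiliary set `T` of relators,
`GZ A Z` is the presented group `⟨x₁,…,xₙ | A ∪ Z⟩`. -/
abbrev GZ {n : ℕ} (A Z : Set (FreeGroup (Fin n))) : Type :=
  PresentedGroup (A ∪ Z)

/-!
The set `Z` is recovered from `G_Z` as the set of elements of `T` killed by `F → G_Z`. Composing
with an embedding `G_Z → H` does not change this set, so `Z` is determined by the resulting
homomorphism `F → H`; as `F` is finitely generated, a countable `H` admits only countably many.
-/

section MonoidHom

variable {M N P : Type*}

theorem countable_monoidHom [Monoid M] [Monoid.FG M] [MulOneClass N] [Countable N] :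
    Countable (M →* N) := by
  obtain ⟨S, hS, hSfin⟩ := Monoid.fg_iff.mp ‹Monoid.FG M›
  have : Finite S := hSfin
  have restrict_injective : Function.Injective fun (f : M →* N) (s : S) ↦ f s := fun f g hfg ↦
    MonoidHom.eq_of_eqOn_denseM hS fun s hs ↦ congrFun hfg ⟨s, hs⟩
  exact restrict_injective.countable

/-- The elements of `T` that `f` sends to `1`. For `f = FreeGroup.lift S`, with `S` an `n`-tuple of
elements of a group `G`, this is the invariant `R(G, S, T)`. -/
def killedRelators [MulOneClass M] [MulOneClass N] (T : Set M) (f : M →* N) : Set M :=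
  {r ∈ T | f r = 1}

theorem killedRelators_comp_of_injective [MulOneClass M] [MulOneClass N] [MulOneClass P]
    (T : Set M) (f : M →* N) {g : N →* P} (hg : Function.Injective g) :
    killedRelators T (g.comp f) = killedRelators T f := by
  simp only [killedRelators, MonoidHom.comp_apply, map_eq_one_iff g hg]

theorem countable_range_killedRelators [Monoid M] [Monoid.FG M] [MulOneClass N] [Countable N]
    (T : Set M) : (Set.range fun f : M →* N ↦ killedRelators T f).Countable :=
  have : Countable (M →* N) := countable_monoidHom
  Set.countable_range _

end MonoidHom

section PresentedGroup

variable {α : Type*}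

theorem countable_presentedGroup [Countable α] (rels : Set (FreeGroup α)) :
    Countable (PresentedGroup rels) :=
  (PresentedGroup.mk_surjective rels).countable

theorem killedRelators_mk_union {A T Z : Set (FreeGroup α)} (hZT : Z ⊆ T)
    (h : ∀ r ∈ T, PresentedGroup.mk (A ∪ Z) r = 1 → r ∈ Z) :
    killedRelators T (PresentedGroup.mk (A ∪ Z)) = Z :=
  Set.Subset.antisymm (fun r hr ↦ h r hr.1 hr.2)
    fun _ hr ↦ ⟨hZT hr, PresentedGroup.one_of_mem (Or.inr hr)⟩

theorem countable_isomorphic_GZ_general [Finite α] {A T : Set (FreeGroup α)}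
    (h : ∀ Z ⊆ T, ∀ r ∈ T, PresentedGroup.mk (A ∪ Z) r = 1 → r ∈ Z)
    (H : Type*) [MulOneClass H] [Countable H] :
    {Z | Z ⊆ T ∧ ∃ f : PresentedGroup (A ∪ Z) →* H, Function.Injective f}.Countable := by
  refine (countable_range_killedRelators (N := H) T).mono ?_
  rintro Z ⟨hZT, f, hf⟩
  refine ⟨f.comp (PresentedGroup.mk (A ∪ Z)), ?_⟩
  calc killedRelators T (f.comp (PresentedGroup.mk (A ∪ Z)))
      = killedRelators T (PresentedGroup.mk (A ∪ Z)) := killedRelators_comp_of_injective T _ hf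
    _ = Z := killedRelators_mk_union hZT (h Z hZT)

end PresentedGroup

/-- **Countability of isomorphism classes in the family `G_Z`.** If for every `Z ⊆ T` a
relator `r ∈ T` dies in `G_Z = ⟨x₁,…,xₙ | A ∪ Z⟩` exactly when `r ∈ Z`, then for each fixed
`Z₀ ⊆ T` only countably many subsets `Z ⊆ T` give a group `G_Z` isomorphic to `G_{Z₀}`. -/
theorem countable_isomorphic_GZ (n : ℕ) (A T : Set (FreeGroup (Fin n)))
    (h : ∀ Z ⊆ T, ∀ r ∈ T, PresentedGroup.mk (A ∪ Z) r = 1 ↔ r ∈ Z)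
    (Z₀ : Set (FreeGroup (Fin n))) (hZ₀ : Z₀ ⊆ T) :
    Set.Countable {Z : Set (FreeGroup (Fin n)) |
      Z ⊆ T ∧ Nonempty (GZ A Z ≃* GZ A Z₀)} := by
  have : Countable (GZ A Z₀) := countable_presentedGroup (A ∪ Z₀)
  refine (countable_isomorphic_GZ_general (fun Z hZ r hr ↦ (h Z hZ r hr).mp) (GZ A Z₀)).mono ?_
  exact fun Z ⟨hZT, ⟨e⟩⟩ ↦ ⟨hZT, e.toMonoidHom, e.injective⟩
end
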